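/- Under the Frenet frame setup, assume κ_t ≡ 0 and κ_ν(u) ≠ 0 for all u (NR is noncylindrical and developable), and let q = (u₀,w₀) be a singular point of NR, i.e. w₀·κ_ν(u₀) = 1. Then: (1) NR has a cuspidal edge at q iff κ_s(u₀)·κ_ν'(u₀) ≠ 0; (2) NR has a swallowtail at q iff κ_s(u₀) ≠ 0, κ_ν'(u₀) = 0 and κ_ν''(u₀) ≠ 0; (3) NR has a cuspidal cross cap at q iff κ_s(u₀) = 0 and κ_s'(u₀)·κ_ν'(u₀) ≠ 0; (4) NR has a cuspidal S₁⁺ singularity at q iff κ_s(u₀) = κ_s'(u₀) = 0 and κ_s''(u₀)·κ_ν'(u₀) ≠ 0. -/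

import Mathlib

open Filter

noncomputable section

/-- Vectors in ℝ³, modeled as `Fin 3 → ℝ`. -/
abbrev R3 : Type := Fin 3 → ℝ

/-- The Euclidean inner product on ℝ³. -/
def dot3 (a b : R3) : ℝ := a 0 * b 0 + a 1 * b 1 + a 2 * b 2

/-- The determinant det(a,b,c) of three vectors of ℝ³. -/
def det3 (a b c : R3) : ℝ := Matrix.det (Matrix.of ![a, b, c])

/-- Partial derivative in the `u`-direction. -/
def pu {E : Type*} [NormedAddCommGroup E] [NormedSpace ℝ E] (F : ℝ × ℝ → E) (p : ℝ × ℝ) : E :=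
  fderiv ℝ F p (1, 0)

/-- Partial derivative in the `w`-direction. -/
def pw {E : Type*} [NormedAddCommGroup E] [NormedSpace ℝ E] (F : ℝ × ℝ → E) (p : ℝ × ℝ) : E :=
  fderiv ℝ F p (0, 1)

/-- The Frenet-type frame setup along the singular locus γ̂: `{γ̂', ĥ, ν̂}` is an
orthonormal frame satisfying the Frenet-type equations with singular curvature κ_s,
limiting normal curvature κ_ν and cuspidal torsion κ_t. -/
structure FrenetSetup (γ h ν : ℝ → R3) (κs κν κt : ℝ → ℝ) : Prop where
  smooth_γ : ContDiff ℝ (⊤ : ℕ∞) γ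
  smooth_h : ContDiff ℝ (⊤ : ℕ∞) h
  smooth_ν : ContDiff ℝ (⊤ : ℕ∞) ν
  smooth_κs : ContDiff ℝ (⊤ : ℕ∞) κs
  smooth_κν : ContDiff ℝ (⊤ : ℕ∞) κν
  smooth_κt : ContDiff ℝ (⊤ : ℕ∞) κt
  unit_t : ∀ u, dot3 (deriv γ u) (deriv γ u) = 1
  unit_h : ∀ u, dot3 (h u) (h u) = 1
  unit_ν : ∀ u, dot3 (ν u) (ν u) = 1
  orth_th : ∀ u, dot3 (deriv γ u) (h u) = 0
  orth_tν : ∀ u, dot3 (deriv γ u) (ν u) = 0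
  orth_hν : ∀ u, dot3 (h u) (ν u) = 0
  frenet_t : ∀ u, deriv (deriv γ) u = κs u • h u + κν u • ν u
  frenet_h : ∀ u, deriv h u = (-κs u) • deriv γ u + κt u • ν u
  frenet_ν : ∀ u, deriv ν u = (-κν u) • deriv γ u - κt u • h u

/-- The normal ruled surface NR(u,w) = γ̂(u) + w·ν̂(u). -/
def NR (γ ν : ℝ → R3) (p : ℝ × ℝ) : R3 := γ p.1 + p.2 • ν p.1

/-- A map `φ` is a local diffeomorphism at `p` if it is C^∞ at `p` and admits a
local C^∞ inverse near `p`. -/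
def IsLocalDiffeoAt {E F : Type*} [NormedAddCommGroup E] [NormedSpace ℝ E]
    [NormedAddCommGroup F] [NormedSpace ℝ F] (φ : E → F) (p : E) : Prop :=
  ContDiffAt ℝ (⊤ : ℕ∞) φ p ∧ ∃ ψ : F → E, ContDiffAt ℝ (⊤ : ℕ∞) ψ (φ p) ∧
    (∀ᶠ x in nhds p, ψ (φ x) = x) ∧ (∀ᶠ y in nhds (φ p), φ (ψ y) = y)

/-- 𝒜-equivalence of map germs: the germ of `f` at `p` is 𝒜-equivalent to the germ of
`g` at `q` if `f` is carried to `g` by composing with diffeomorphism germs of the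
source and the target. -/
def AEquivAt (f : ℝ × ℝ → R3) (p : ℝ × ℝ) (g : ℝ × ℝ → R3) (q : ℝ × ℝ) : Prop :=
  ∃ (φ : ℝ × ℝ → ℝ × ℝ) (Φ : R3 → R3),
    IsLocalDiffeoAt φ q ∧ φ q = p ∧ IsLocalDiffeoAt Φ (f p) ∧
    ∀ᶠ x in nhds q, Φ (f (φ x)) = g x

section PI
open MeasureTheory

abbrev Sm {E F : Type*} [NormedAddCommGroup E] [NormedSpace ℝ E]
    [NormedAddCommGroup F] [NormedSpace ℝ F] (f : E → F) : Prop := ContDiff ℝ (⊤ : ℕ∞) f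

lemma Sm.fd {E F : Type*} [NormedAddCommGroup E] [NormedSpace ℝ E]
    [NormedAddCommGroup F] [NormedSpace ℝ F] {f : E → F} (h : Sm f) : Sm (fderiv ℝ f) := by
  have := (contDiff_infty_iff_fderiv (𝕜 := ℝ) (f := f)).1 h
  exact this.2

lemma Sm.df {E F : Type*} [NormedAddCommGroup E] [NormedSpace ℝ E]
    [NormedAddCommGroup F] [NormedSpace ℝ F] {f : E → F} (h : Sm f) : Differentiable ℝ f :=
  h.differentiable (by simp)

/-- partial derivative in the first variable -/
def fdx {E G : Type} [NormedAddCommGroup E] [NormedSpace ℝ E]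
    [NormedAddCommGroup G] [NormedSpace ℝ G] (F : E × ℝ → G) (p : E × ℝ) : E →L[ℝ] G :=
  (fderiv ℝ F p).comp (ContinuousLinearMap.inl ℝ E ℝ)

lemma fdx_sm {E G : Type} [NormedAddCommGroup E] [NormedSpace ℝ E]
    [NormedAddCommGroup G] [NormedSpace ℝ G] {F : E × ℝ → G} (h : Sm F) : Sm (fdx F) := by
  unfold fdx
  exact h.fd.clm_comp contDiff_const

lemma fdx_has {E G : Type} [NormedAddCommGroup E] [NormedSpace ℝ E]
    [NormedAddCommGroup G] [NormedSpace ℝ G] {F : E × ℝ → G} (h : Sm F) (x : E) (s : ℝ) :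
    HasFDerivAt (fun y => F (y, s)) (fdx F (x, s)) x := by
  have h1 := (h.df (x, s)).hasFDerivAt
  have h2 : HasFDerivAt (fun y : E => (y, s)) (ContinuousLinearMap.inl ℝ E ℝ) x :=
    hasFDerivAt_prodMk_left x s
  exact h1.comp x h2

lemma PI_has {E G : Type} [NormedAddCommGroup E] [NormedSpace ℝ E] [FiniteDimensional ℝ E]
    [NormedAddCommGroup G] [NormedSpace ℝ G] [CompleteSpace G] {F : E × ℝ → G} (h : Sm F)
    (a b : ℝ) (x : E) :
    HasFDerivAt (fun y => ∫ s in a..b, F (y, s)) (∫ s in a..b, fdx F (x, s)) x := by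
  have hK : IsCompact (Metric.closedBall x 1 ×ˢ Set.uIcc a b) :=
    (isCompact_closedBall x 1).prod isCompact_uIcc
  obtain ⟨C, hC⟩ := hK.exists_bound_of_continuousOn (f := fdx F) (fdx_sm h).continuous.continuousOn
  have hcF : ∀ y, Continuous (fun s => F (y, s)) := fun y =>
    h.continuous.comp (by fun_prop)
  have hcF' : ∀ y, Continuous (fun s => fdx F (y, s)) := fun y =>
    (fdx_sm h).continuous.comp (by fun_prop)
  refine (intervalIntegral.hasFDerivAt_integral_of_dominated_of_fderiv_le
    (F := fun y s => F (y, s)) (F' := fun y s => fdx F (y, s)) (bound := fun _ => C)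
    (s := Metric.ball x 1) (x₀ := x) (μ := volume) (Metric.ball_mem_nhds x one_pos) ?_ ?_ ?_ ?_ ?_ ?_)
  · exact Eventually.of_forall fun y => (hcF y).aestronglyMeasurable
  · exact (hcF x).intervalIntegrable _ _
  · exact (hcF' x).aestronglyMeasurable
  · refine Eventually.of_forall fun s hs y hy => hC (y, s) ⟨Metric.ball_subset_closedBall hy, Set.uIoc_subset_uIcc hs⟩
  · exact intervalIntegrable_const
  · exact Eventually.of_forall fun s hs y hy => fdx_has h y s

lemma PI_n {E : Type} [NormedAddCommGroup E] [NormedSpace ℝ E] [FiniteDimensional ℝ E] (n : ℕ) :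
    ∀ (G : Type) [NormedAddCommGroup G] [NormedSpace ℝ G] [CompleteSpace G] (F : E × ℝ → G)
    (_ : Sm F) (a b : ℝ), ContDiff ℝ n (fun y => ∫ s in a..b, F (y, s)) := by
  induction n with
  | zero =>
    intro G _ _ _ F h a b
    have : Continuous (fun y => ∫ s in a..b, F (y, s)) :=
      continuous_iff_continuousAt.2 fun x => (PI_has h a b x).continuousAt
    exact contDiff_zero.2 this
  | succ n ih =>
    intro G _ _ _ F h a b
    have e : (((n + 1 : ℕ) : WithTop ℕ∞)) = (n : WithTop ℕ∞) + 1 := by push_cast; rfl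
    rw [e, contDiff_succ_iff_fderiv]
    refine ⟨fun x => (PI_has h a b x).differentiableAt, by simp, ?_⟩
    have : fderiv ℝ (fun y => ∫ s in a..b, F (y, s)) = fun x => ∫ s in a..b, fdx F (x, s) :=
      funext fun x => (PI_has h a b x).fderiv
    rw [this]
    exact ih _ _ (fdx_sm h) a b

lemma PI {E G : Type} [NormedAddCommGroup E] [NormedSpace ℝ E] [FiniteDimensional ℝ E]
    [NormedAddCommGroup G] [NormedSpace ℝ G] [CompleteSpace G] {F : E × ℝ → G} (h : Sm F)
    (a b : ℝ) : Sm (fun y => ∫ s in a..b, F (y, s)) :=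
  contDiff_infty.2 fun n => PI_n n G F h a b

lemma PI_bound {E : Type} [NormedAddCommGroup E] [NormedSpace ℝ E] [FiniteDimensional ℝ E] (n : ℕ) :
    ∀ (G : Type) [NormedAddCommGroup G] [NormedSpace ℝ G] [CompleteSpace G] (F : E × ℝ → G)
    (_ : Sm F) (a b C : ℝ) (_ : ∀ x s, ‖iteratedFDeriv ℝ n (fun y => F (y, s)) x‖ ≤ C) (x : E),
    ‖iteratedFDeriv ℝ n (fun y => ∫ s in a..b, F (y, s)) x‖ ≤ C * |b - a| := by
  induction n with
  | zero =>
    intro G _ _ _ F h a b C hC x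
    simp only [norm_iteratedFDeriv_zero] at hC ⊢
    exact intervalIntegral.norm_integral_le_of_norm_le_const fun s _ => hC x s
  | succ n ih =>
    intro G _ _ _ F h a b C hC x
    rw [← norm_iteratedFDeriv_fderiv]
    have : fderiv ℝ (fun y => ∫ s in a..b, F (y, s)) = fun x => ∫ s in a..b, fdx F (x, s) :=
      funext fun x => (PI_has h a b x).fderiv
    rw [this]
    refine ih _ _ (fdx_sm h) a b C (fun x s => ?_) x
    have e : (fun y => fdx F (y, s)) = fderiv ℝ (fun y => F (y, s)) :=
      funext fun y => (fdx_has h y s).fderiv.symm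
    rw [e, norm_iteratedFDeriv_fderiv]
    exact hC x s
end PI

section Div1

lemma glob_ball {E F : Type} [NormedAddCommGroup E] [NormedSpace ℝ E] [FiniteDimensional ℝ E]
    [NormedAddCommGroup F] [NormedSpace ℝ F] (f : E → F) (p : E) (r1 r2 : ℝ) (h1 : 0 < r1)
    (h2 : r1 < r2) (hf : ∀ x ∈ Metric.ball p r2, ContDiffAt ℝ (⊤ : ℕ∞) f x) :
    ∃ g : E → F, Sm g ∧ ∀ x ∈ Metric.closedBall p r1, g x = f x := by
  let b : ContDiffBump p := ⟨r1, (r1 + r2) / 2, h1, by linarith⟩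
  refine ⟨fun x => b x • f x, ?_, ?_⟩
  · refine contDiff_iff_contDiffAt.2 fun x => ?_
    by_cases hx : x ∈ Metric.ball p r2
    · exact b.contDiffAt.smul (hf x hx)
    · have hx' : x ∉ tsupport b := by
        rw [b.tsupport_eq]
        intro h
        apply hx
        rw [Metric.mem_closedBall] at h
        rw [Metric.mem_ball]
        change dist x p ≤ (r1 + r2) / 2 at h
        linarith
      have : (fun x => b x • f x) =ᶠ[nhds x] fun _ => 0 := by
        filter_upwards [notMem_tsupport_iff_eventuallyEq.1 hx'] with y hy
        simp [hy]
      exact contDiffAt_const.congr_of_eventuallyEq this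
  · intro x hx
    have : b x = 1 := b.one_of_mem_closedBall hx
    simp [this]

lemma glob {E F : Type} [NormedAddCommGroup E] [NormedSpace ℝ E] [FiniteDimensional ℝ E]
    [NormedAddCommGroup F] [NormedSpace ℝ F] (f : E → F) (p : E)
    (hf : ∀ᶠ x in nhds p, ContDiffAt ℝ (⊤ : ℕ∞) f x) :
    ∃ g : E → F, Sm g ∧ ∀ᶠ x in nhds p, g x = f x := by
  obtain ⟨r, hr, h⟩ := Metric.eventually_nhds_iff_ball.1 hf
  obtain ⟨g, hg, h'⟩ := glob_ball f p (r/2) r (by linarith) (by linarith) h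
  exact ⟨g, hg, Filter.mem_of_superset (Metric.closedBall_mem_nhds p (by linarith)) h'⟩

/-- coefficients of the monic polynomial -/
def co {n : ℕ} (l : Fin n → ℝ) (i : ℕ) : ℝ := if h : i < n then l ⟨i, h⟩ else 1

def PP {n : ℕ} (l : Fin n → ℝ) (z : ℂ) : ℂ := ∑ i ∈ Finset.range (n + 1), (co l i : ℂ) * z ^ i

lemma pigeon (n : ℕ) (X : Finset ℝ) (hX : X.card ≤ n) :
    ∃ c : ℝ, 1 ≤ c ∧ c ≤ 2 ∧ ∀ x ∈ X, 1 / (2 * (n + 1 : ℝ)) ≤ |c - x| := by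
  by_contra! hcon
  have hn : (0:ℝ) < n + 1 := by positivity
  have : ∀ m ∈ Finset.range (n + 1), ∃ x ∈ X, |1 + (m:ℝ) / (n + 1) - x| < 1 / (2 * (n + 1 : ℝ)) := by
    intro m hm
    refine hcon _ ?_ ?_
    · have : (0:ℝ) ≤ (m:ℝ) / (n + 1) := by positivity
      linarith
    · have : (m:ℝ) / (n + 1) ≤ 1 := by
        rw [div_le_one hn]
        have := Finset.mem_range.1 hm
        exact_mod_cast this.le
      linarith
  choose! f hf hf2 using this
  obtain ⟨i, hi, j, hj, hij, he⟩ := Finset.exists_ne_map_eq_of_card_lt_of_maps_to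
    (s := Finset.range (n + 1)) (t := X) (by simp; omega) (f := f) (fun m hm => hf m hm)
  have a1 := hf2 i hi
  have a2 := hf2 j hj
  rw [he] at a1
  have a3 : |(i:ℝ) / (n + 1) - (j:ℝ) / (n + 1)| < 1 / (n + 1) := by
    have e : (1:ℝ) / (n + 1) = 1 / (2 * (n + 1)) + 1 / (2 * (n + 1)) := by field_simp; norm_num
    rw [e]
    rw [abs_lt] at *
    constructor <;> linarith [a1.1, a1.2, a2.1, a2.2]
  rw [← sub_div, abs_div, abs_of_pos hn, div_lt_div_iff_of_pos_right hn] at a3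
  apply hij
  have : |((i:ℤ) - (j:ℤ))| < 1 := by exact_mod_cast a3
  have := Int.abs_lt_one_iff.1 this
  omega

lemma circ_exists {n : ℕ} (l : Fin n → ℝ) (N : ℝ) (hN : 1 ≤ N) :
    ∃ c : ℝ, 1 ≤ c ∧ c ≤ 2 ∧ ∀ z : ℂ, ‖z - N * Complex.I‖ = N + c / N →
      (1 / (2 * (n + 1 : ℝ) * N)) ^ n ≤ ‖PP l z‖ := by
  classical
  let p : Polynomial ℂ := ∑ i ∈ Finset.range (n + 1), Polynomial.C (co l i : ℂ) * Polynomial.X ^ i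
  have hp : p = Polynomial.X ^ n + ∑ i ∈ Finset.range n, Polynomial.C (co l i : ℂ) * Polynomial.X ^ i := by
    simp only [p, Finset.sum_range_succ]
    rw [add_comm]
    simp [co]
  have hdeg : (∑ i ∈ Finset.range n, Polynomial.C (co l i : ℂ) * Polynomial.X ^ i).degree < (n : WithBot ℕ) := by
    rw [← Polynomial.mem_degreeLT]
    refine Submodule.sum_mem _ fun i hi => ?_
    rw [Polynomial.mem_degreeLT]
    exact (Polynomial.degree_C_mul_X_pow_le i _).trans_lt (by exact_mod_cast Finset.mem_range.1 hi)
  have hmon : p.Monic := by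
    rw [hp]; exact Polynomial.monic_X_pow_add hdeg
  have hnd : p.natDegree = n := by
    rw [hp]; exact Polynomial.natDegree_eq_of_degree_eq_some (by
      rw [Polynomial.degree_add_eq_left_of_degree_lt] <;> simp [hdeg])
  have hsp : p.Splits := IsAlgClosed.splits p
  have hcard : p.roots.card = n := by rw [← hnd]; exact hsp.natDegree_eq_card_roots.symm
  have heval : ∀ z, PP l z = (p.roots.map (fun r => z - r)).prod := by
    intro z
    have e1 : PP l z = p.eval z := by simp [p, PP, Polynomial.eval_finsetSum]
    rw [e1]
    conv_lhs => rw [hsp.eq_prod_roots_of_monic hmon]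
    rw [Polynomial.eval_multiset_prod, Multiset.map_map]
    simp
  have hN0 : 0 < N := by linarith
  obtain ⟨c, hc1, hc2, hc⟩ := pigeon n (p.roots.toFinset.image (fun r => (‖r - N * Complex.I‖ - N) * N))
    (Finset.card_image_le.trans ((Multiset.toFinset_card_le _).trans hcard.le))
  refine ⟨c, hc1, hc2, fun z hz => ?_⟩
  rw [heval]
  have key : ∀ r ∈ p.roots, 1 / (2 * (n + 1 : ℝ) * N) ≤ ‖z - r‖ := by
    intro r hr
    have h1 := hc _ (Finset.mem_image_of_mem _ (Multiset.mem_toFinset.2 hr))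
    have h2 : |‖z - N * Complex.I‖ - ‖r - N * Complex.I‖| ≤ ‖z - r‖ := by
      refine (abs_norm_sub_norm_le _ _).trans (le_of_eq (by congr 1; ring))
    rw [hz] at h2
    refine le_trans ?_ h2
    have e : N + c / N - ‖r - N * Complex.I‖ = (c - (‖r - N * Complex.I‖ - N) * N) / N := by
      field_simp; ring
    rw [e, abs_div, abs_of_pos hN0, le_div_iff₀ hN0]
    refine le_trans (le_of_eq ?_) h1
    field_simp
  have : ∀ s : Multiset ℂ, (∀ r ∈ s, 1 / (2 * (n + 1 : ℝ) * N) ≤ ‖z - r‖) →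
      (1 / (2 * (n + 1 : ℝ) * N)) ^ s.card ≤ ‖(s.map (fun r => z - r)).prod‖ := by
    intro s
    induction s using Multiset.induction with
    | empty => simp
    | cons a s ih =>
      intro h
      rw [Multiset.card_cons, Multiset.map_cons, Multiset.prod_cons, norm_mul, pow_succ, mul_comm]
      exact mul_le_mul (h a (by simp)) (ih fun r hr => h r (by simp [hr])) (by positivity) (norm_nonneg _)
  have := this p.roots key
  rwa [hcard] at this

def phi1 (s : ℝ) : ℝ := Real.smoothTransition (s + 1) - Real.smoothTransition s
def phiE {n : ℕ} (s : Fin n → ℝ) : ℝ := ∏ j, phi1 (s j)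

lemma phi1_sm : Sm phi1 := by
  unfold phi1
  exact (Real.smoothTransition.contDiff.comp (by fun_prop)).sub Real.smoothTransition.contDiff

lemma phi1_zero {s : ℝ} (h : 1 < |s|) : phi1 s = 0 := by
  unfold phi1
  rcases lt_abs.1 h with h | h
  · rw [Real.smoothTransition.one_of_one_le (by linarith), Real.smoothTransition.one_of_one_le h.le]; simp
  · rw [Real.smoothTransition.zero_of_nonpos (by linarith), Real.smoothTransition.zero_of_nonpos (by linarith)]; simp

lemma phiE_sm {n : ℕ} : Sm (phiE (n := n)) := by
  unfold phiE
  exact contDiff_prod fun j _ => phi1_sm.comp (contDiff_apply ℝ ℝ j)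

lemma phiE_zero {n : ℕ} {s : Fin n → ℝ} (h : 1 < ‖s‖) : phiE s = 0 := by
  by_contra hne
  have : ∀ j, |s j| ≤ 1 := by
    intro j
    by_contra hj
    exact hne (Finset.prod_eq_zero (Finset.mem_univ j) (phi1_zero (not_le.1 hj)))
  have := (pi_norm_le_iff_of_nonneg (x := s) zero_le_one).2 (fun j => this j)
  linarith

lemma phi1_sum (L : ℕ) (x : ℝ) (hx : |x| ≤ L) : ∑ a ∈ Finset.Icc (-(L:ℤ)) L, phi1 (x - a) = 1 := by
  have h : ∀ K : ℕ, ∀ m : ℤ, ∑ a ∈ Finset.range K, phi1 (x - ((m + a : ℤ))) =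
      Real.smoothTransition (x - m + 1) - Real.smoothTransition (x - m - K + 1) := by
    intro K m
    induction K with
    | zero => simp
    | succ K ih =>
      rw [Finset.sum_range_succ, ih]
      unfold phi1
      push_cast
      have e1 : x - (m + K) + 1 = x - m - K + 1 := by ring
      have e2 : x - (m + (K:ℝ)) = x - m - (K + 1) + 1 := by ring
      rw [e1, e2]; ring
  have h2 := h (2 * L + 1) (-(L:ℤ))
  have e : ∑ a ∈ Finset.Icc (-(L:ℤ)) L, phi1 (x - a) = ∑ a ∈ Finset.range (2 * L + 1), phi1 (x - ((-(L:ℤ) + a : ℤ))) := by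
    symm
    refine Finset.sum_bij (fun a _ => -(L:ℤ) + a) ?_ ?_ ?_ ?_
    · intro a ha; simp at ha ⊢; omega
    · intro a _ b _ h; simpa using h
    · intro b hb; simp at hb; exact ⟨(b + L).toNat, by simp; omega, by omega⟩
    · intro a _; rfl
  rw [e, h2]
  have := abs_le.1 hx
  rw [Real.smoothTransition.one_of_one_le (by push_cast; linarith), Real.smoothTransition.zero_of_nonpos (by push_cast; linarith)]
  simp

lemma phiE_sum {n : ℕ} (L : ℕ) (x : Fin n → ℝ) (hx : ‖x‖ ≤ L) :
    ∑ a ∈ Fintype.piFinset (fun _ : Fin n => Finset.Icc (-(L:ℤ)) L), phiE (fun j => x j - a j) = 1 := by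
  unfold phiE
  rw [← Finset.prod_univ_sum (fun _ : Fin n => Finset.Icc (-(L:ℤ)) L) (fun j a => phi1 (x j - a))]
  exact Finset.prod_eq_one fun j _ => phi1_sum L _ ((norm_le_pi_norm x j).trans hx)

lemma tau_exists : ∃ τ : ℂ → ℂ, Sm τ ∧ ∀ x, ‖x‖ ≤ 1/2 → τ x = (1 + x)⁻¹ := by
  obtain ⟨g, hg, h⟩ := glob_ball (fun x : ℂ => (1 + x)⁻¹) 0 (1/2) 1 (by norm_num) (by norm_num) (by
    intro x hx
    refine ContDiffAt.inv (by fun_prop) ?_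
    intro h0
    have : x = -1 := by linear_combination h0
    rw [this] at hx
    simp at hx)
  exact ⟨g, hg, fun x hx => h x (by simpa using hx)⟩

def tau : ℂ → ℂ := tau_exists.choose
lemma tau_sm : Sm tau := tau_exists.choose_spec.1
lemma tau_eq {x : ℂ} (h : ‖x‖ ≤ 1/2) : tau x = (1 + x)⁻¹ := tau_exists.choose_spec.2 x h

def WW {n : ℕ} (p : (Fin n → ℝ) × (Fin n → ℂ)) : ℂ :=
  (phiE p.1 : ℂ) * tau (∑ j, (p.1 j : ℂ) * p.2 j)

lemma WW_sm {n : ℕ} : Sm (WW (n := n)) := by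
  unfold WW
  refine ContDiff.mul ?_ ?_
  · exact Complex.ofRealCLM.contDiff.comp (phiE_sm.comp contDiff_fst)
  · refine tau_sm.comp (ContDiff.sum fun j _ => ContDiff.mul ?_ ?_)
    · exact Complex.ofRealCLM.contDiff.comp ((contDiff_apply ℝ ℝ j).comp contDiff_fst)
    · exact (contDiff_apply ℝ ℂ j).comp contDiff_snd

lemma WW_bound (n m : ℕ) : ∃ C : ℝ, 0 ≤ C ∧ ∀ b : Fin n → ℂ, ‖b‖ ≤ 1 → ∀ s,
    ‖iteratedFDeriv ℝ m (fun s => WW (s, b)) s‖ ≤ C := by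
  have hK : IsCompact (Metric.closedBall (0 : Fin n → ℝ) 1 ×ˢ Metric.closedBall (0 : Fin n → ℂ) 1) :=
    (isCompact_closedBall _ 1).prod (isCompact_closedBall _ 1)
  obtain ⟨C, hC⟩ := hK.exists_bound_of_continuousOn (f := iteratedFDeriv ℝ m (WW (n := n)))
    (WW_sm.continuous_iteratedFDeriv (by exact_mod_cast le_top)).continuousOn
  have hC0 : 0 ≤ C := (norm_nonneg _).trans (hC (0, 0) ⟨by simp, by simp⟩)
  refine ⟨C, hC0, fun b hb s => ?_⟩
  by_cases hs : ‖s‖ ≤ 1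
  · have e : (fun s => WW (s, b)) = (fun q => WW (q + ((0, b) : (Fin n → ℝ) × (Fin n → ℂ)))) ∘ (ContinuousLinearMap.inl ℝ (Fin n → ℝ) (Fin n → ℂ)) := by
      funext s; simp
    have hsm : Sm (fun q => WW (q + ((0, b) : (Fin n → ℝ) × (Fin n → ℂ)))) := WW_sm.comp (contDiff_id.add contDiff_const)
    rw [e, ContinuousLinearMap.iteratedFDeriv_comp_right (i := m) _ hsm _ (by exact_mod_cast le_top)]
    refine (ContinuousMultilinearMap.norm_compContinuousLinearMap_le _ _).trans ?_
    rw [iteratedFDeriv_comp_add_right]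
    have h1 : ‖ContinuousLinearMap.inl ℝ (Fin n → ℝ) (Fin n → ℂ)‖ ≤ 1 := ContinuousLinearMap.norm_inl_le_one ..
    have h2 : ∏ _i : Fin m, ‖ContinuousLinearMap.inl ℝ (Fin n → ℝ) (Fin n → ℂ)‖ ≤ 1 :=
      Finset.prod_le_one (fun _ _ => norm_nonneg _) (fun _ _ => h1)
    have h3 := hC (s, b) ⟨by simpa using hs, by simpa using hb⟩
    have e2 : (ContinuousLinearMap.inl ℝ (Fin n → ℝ) (Fin n → ℂ)) s + (0, b) = (s, b) := by simp
    rw [e2]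
    calc _ ≤ C * 1 := mul_le_mul h3 h2 (Finset.prod_nonneg fun _ _ => norm_nonneg _) hC0
      _ = C := mul_one _
  · have : (fun s => WW (s, b)) =ᶠ[nhds s] fun _ => (0:ℂ) := by
      have : ∀ᶠ s' in nhds s, 1 < ‖s'‖ := continuous_norm.continuousAt.eventually (lt_mem_nhds (not_le.1 hs))
      filter_upwards [this] with s' hs'
      simp [WW, phiE_zero hs']
    have h2 := (this.iteratedFDeriv ℝ m).eq_of_nhds
    rw [h2]
    simpa [iteratedFDeriv_fun_zero] using hC0
end Div1

section Div2

lemma co_lt {n : ℕ} (l : Fin n → ℝ) (j : Fin n) : co l j = l j := by simp [co]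

lemma PP_eq {n : ℕ} (l : Fin n → ℝ) (z : ℂ) : PP l z = z ^ n + ∑ j : Fin n, (l j : ℂ) * z ^ (j:ℕ) := by
  unfold PP
  rw [Finset.sum_range_succ, add_comm, Finset.sum_range]
  simp [co]

lemma PP_kernel {n : ℕ} (l : Fin n → ℝ) (z t : ℂ) :
    (∑ i ∈ Finset.range (n + 1), (co l i : ℂ) * ∑ j ∈ Finset.range i, t ^ j * z ^ (i - 1 - j)) * (t - z)
      = PP l t - PP l z := by
  unfold PP
  rw [Finset.sum_mul, ← Finset.sum_sub_distrib]
  refine Finset.sum_congr rfl fun i _ => ?_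
  rw [mul_assoc, (Commute.all t z).geom_sum₂_mul]
  ring

lemma TT_exists (n k L : ℕ) (hL : (2 * n + 1) * (8 * (n + 1) * (k + 1 : ℝ) ^ 2) ^ n = (L : ℝ))
    (a : Fin n → ℤ) : ∃ T : ℕ → (Fin n → ℝ) → ℂ, (∀ l, Sm (T l)) ∧
    (∀ m C, (∀ b : Fin n → ℂ, ‖b‖ ≤ 1 → ∀ s, ‖iteratedFDeriv ℝ m (fun s => WW (s, b)) s‖ ≤ C) →
      ∀ l ≤ n, ∀ s, ‖iteratedFDeriv ℝ m (T l) s‖ ≤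
        (3 * (k + 1 : ℝ) * (4 * (k + 1)) ^ n * Real.exp (4 * Real.pi) * (2 * (n + 1) * (k + 1)) ^ n) * C) ∧
    ∀ (l : Fin n → ℝ) (t : ℝ), |t| ≤ 1 → PP l t = 0 →
      ∑ i ∈ Finset.range (n + 1), (co l i : ℂ) * ∑ j ∈ Finset.range i, (t:ℂ) ^ j * T (i - 1 - j) (fun j => L * l j - a j)
       = phiE (fun j => L * l j - a j) * Complex.exp (2 * Real.pi * k * t * Complex.I) := by
  set N : ℝ := (k:ℝ) + 1 with hNdef
  have hN : 1 ≤ N := by rw [hNdef]; linarith [(Nat.cast_nonneg k : (0:ℝ) ≤ k)]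
  have hN0 : 0 < N := by linarith
  have hL0 : (0:ℝ) < L := by rw [← hL]; positivity
  obtain ⟨c, hc1, hc2, hc⟩ := circ_exists (fun j => (a j : ℝ) / L) N hN
  set la : Fin n → ℝ := (fun j => (a j : ℝ) / L) with hla
  set R : ℝ := N + c / N with hR
  have hcN : c / N ≤ 2 := by rw [div_le_iff₀ hN0]; nlinarith
  have hcN0 : 0 < c / N := by positivity
  have hR0 : 0 < R := by positivity
  have hR3 : R ≤ 3 * N := by linarith
  let z : ℝ → ℂ := circleMap (N * Complex.I) R
  have hz : ∀ θ, ‖z θ - N * Complex.I‖ = R := fun θ => by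
    simp [z, circleMap_sub_center, abs_of_pos hR0]
  have hzsm : Sm z := contDiff_circleMap _ _
  have hPlow : ∀ θ, (1 / (2 * (n + 1 : ℝ) * N)) ^ n ≤ ‖PP la (z θ)‖ := fun θ => hc _ (hz θ)
  have hPne : ∀ θ, PP la (z θ) ≠ 0 := fun θ => norm_pos_iff.1 (lt_of_lt_of_le (by positivity) (hPlow θ))
  have hPinv : ∀ θ, ‖(PP la (z θ))⁻¹‖ ≤ (2 * (n + 1) * N) ^ n := by
    intro θ
    rw [norm_inv]
    refine (inv_anti₀ (by positivity) (hPlow θ)).trans (le_of_eq ?_)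
    rw [one_div, inv_pow, inv_inv]
  have hzn : ∀ θ, ‖z θ‖ ≤ 4 * N := by
    intro θ
    have : ‖z θ‖ ≤ ‖z θ - N * Complex.I‖ + ‖(N:ℂ) * Complex.I‖ := by
      simpa using norm_add_le (z θ - N * Complex.I) (N * Complex.I)
    rw [hz] at this
    have h2 : ‖(N:ℂ) * Complex.I‖ = N := by simp [abs_of_pos hN0]
    linarith
  have hzl : ∀ l ≤ n, ∀ θ, ‖z θ ^ l‖ ≤ (4 * N) ^ n := by
    intro l hl θ
    rw [norm_pow]
    exact (pow_le_pow_left₀ (norm_nonneg _) (hzn θ) l).trans (pow_le_pow_right₀ (by linarith) hl)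
  have hexp : ∀ θ, ‖Complex.exp (2 * Real.pi * k * z θ * Complex.I)‖ ≤ Real.exp (4 * Real.pi) := by
    intro θ
    rw [Complex.norm_exp]
    apply Real.exp_le_exp.2
    have e : (2 * Real.pi * k * z θ * Complex.I).re = - (2 * Real.pi * k * (z θ).im) := by
      have : (2 * Real.pi * k * z θ * Complex.I) = ((2 * Real.pi * k : ℝ) : ℂ) * (z θ * Complex.I) := by push_cast; ring
      rw [this, Complex.re_ofReal_mul]; simp
    rw [e]
    have him : - (c / N) ≤ (z θ).im := by
      have h1 : |(z θ - N * Complex.I).im| ≤ R := by rw [← hz θ]; exact Complex.abs_im_le_norm _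
      have h2 : (z θ - N * Complex.I).im = (z θ).im - N := by simp
      rw [h2] at h1
      have := (abs_le.1 h1).1
      linarith
    have h3 : (k:ℝ) * (c / N) ≤ 2 := by
      rw [← mul_div_assoc, div_le_iff₀ hN0]
      have : (k:ℝ) ≤ N := by linarith
      nlinarith
    have hk : (0:ℝ) ≤ k := Nat.cast_nonneg k
    have h4 : - (z θ).im * k ≤ (c / N) * k := mul_le_mul_of_nonneg_right (by linarith) hk
    have : - ((k:ℝ) * (z θ).im) ≤ 2 := by linarith
    nlinarith [Real.pi_pos]
  let b : ℝ → Fin n → ℂ := fun θ j => z θ ^ (j:ℕ) * (PP la (z θ))⁻¹ * (L:ℂ)⁻¹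
  have hPsm : Sm (fun θ => PP la (z θ)) := by
    unfold PP
    exact ContDiff.sum fun i _ => contDiff_const.mul (hzsm.pow i)
  have hPism : Sm (fun θ => (PP la (z θ))⁻¹) := hPsm.inv hPne
  have hbsm : Sm b := contDiff_pi.2 fun j => ((hzsm.pow _).mul hPism).mul contDiff_const
  have hbj : ∀ θ j, ‖b θ j‖ ≤ 1 / (2 * n + 1) := by
    intro θ j
    simp only [b, norm_mul]
    have h1 := hzl j j.2.le θ
    have h2 := hPinv θ
    have h3 : ‖((L:ℂ))⁻¹‖ = 1 / L := by simp
    rw [h3]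
    calc _ ≤ (4 * N) ^ n * (2 * (n + 1) * N) ^ n * (1 / L) := by gcongr
      _ = 1 / (2 * n + 1) := by
        rw [← hL, ← mul_pow]
        have : (4 * N * (2 * (n + 1) * N)) = 8 * (n + 1) * N ^ 2 := by ring
        rw [this]
        field_simp
  have hb1 : ∀ θ, ‖b θ‖ ≤ 1 := by
    intro θ
    refine (pi_norm_le_iff_of_nonneg zero_le_one).2 fun j => (hbj θ j).trans ?_
    rw [div_le_one (by positivity)]
    linarith [(Nat.cast_nonneg n : (0:ℝ) ≤ n)]
  let κ : ℕ → ℝ → ℂ := fun l θ => (2 * Real.pi * Complex.I)⁻¹ * (circleMap 0 R θ * Complex.I) *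
    (z θ ^ l * Complex.exp (2 * Real.pi * k * z θ * Complex.I) * (PP la (z θ))⁻¹)
  have hκsm : ∀ l, Sm (κ l) := by
    intro l
    refine ContDiff.mul (contDiff_const.mul ((contDiff_circleMap _ _).mul contDiff_const)) ?_
    refine ((hzsm.pow l).mul ?_).mul hPism
    exact ContDiff.cexp ((contDiff_const.mul hzsm).mul contDiff_const)
  have hκb : ∀ l ≤ n, ∀ θ, ‖κ l θ‖ ≤ (2 * Real.pi)⁻¹ * (3 * N * (4 * N) ^ n * Real.exp (4 * Real.pi) * (2 * (n + 1) * N) ^ n) := by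
    intro l hl θ
    simp only [κ, norm_mul, norm_inv, Complex.norm_I, norm_circleMap_zero, abs_of_pos hR0]
    have h1 := hzl l hl θ
    have h2 := hPinv θ
    have h3 := hexp θ
    rw [norm_inv] at h2
    have h4 : ‖(2:ℂ)‖ * ‖(Real.pi:ℂ)‖ * 1 = 2 * Real.pi := by simp [abs_of_pos Real.pi_pos]
    rw [h4, mul_assoc, mul_one]
    refine mul_le_mul_of_nonneg_left ?_ (by positivity)
    calc _ ≤ (3 * N) * ((4 * N) ^ n * Real.exp (4 * Real.pi) * (2 * (n + 1) * N) ^ n) := by gcongr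
      _ = _ := by ring
  let F : ℕ → (Fin n → ℝ) × ℝ → ℂ := fun l p => κ l p.2 * WW (p.1, b p.2)
  have hFsm : ∀ l, Sm (F l) := fun l =>
    ((hκsm l).comp contDiff_snd).mul (WW_sm.comp (contDiff_fst.prodMk (hbsm.comp contDiff_snd)))
  refine ⟨fun l s => ∫ θ in (0:ℝ)..(2 * Real.pi), F l (s, θ), fun l => PI (hFsm l) _ _, ?_, ?_⟩
  · intro m C hC l hl s
    have hC0 : 0 ≤ C := (norm_nonneg _).trans (hC (b 0) (hb1 0) 0)
    have := PI_bound m _ (F l) (hFsm l) 0 (2 * Real.pi)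
      ((2 * Real.pi)⁻¹ * (3 * N * (4 * N) ^ n * Real.exp (4 * Real.pi) * (2 * (n + 1) * N) ^ n) * C) ?_ s
    · refine this.trans (le_of_eq ?_)
      rw [sub_zero, abs_of_pos (by positivity)]
      field_simp
    · intro x θ
      have e : (fun y => F l (y, θ)) = fun y => κ l θ • WW (y, b θ) := by funext y; simp [F]
      rw [e, iteratedFDeriv_const_smul_apply', norm_smul]
      · exact mul_le_mul (hκb l hl θ) (hC _ (hb1 θ) x) (norm_nonneg _) (by positivity)
      · exact (WW_sm.comp (contDiff_id.prodMk contDiff_const)).contDiffAt.of_le (by exact_mod_cast le_top)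
  · intro l t ht hPt
    set s : Fin n → ℝ := fun j => L * l j - a j with hs
    by_cases hφ : phiE s = 0
    · have : ∀ l θ, F l (s, θ) = 0 := fun l θ => by simp [F, WW, hφ]
      simp [this, hφ]
    have hs1 : ‖s‖ ≤ 1 := by
      by_contra h
      exact hφ (phiE_zero (not_le.1 h))
    have hsum : ∀ θ, ‖∑ j, (s j : ℂ) * b θ j‖ ≤ 1 / 2 := by
      intro θ
      refine (norm_sum_le _ _).trans ?_
      have : ∀ j ∈ Finset.univ, ‖(s j : ℂ) * b θ j‖ ≤ 1 / (2 * n + 1) := by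
        intro j _
        rw [norm_mul]
        have h1 : ‖(s j : ℂ)‖ ≤ 1 := by
          rw [Complex.norm_real]; exact (norm_le_pi_norm s j).trans hs1
        calc _ ≤ 1 * (1 / (2 * (n:ℝ) + 1)) := mul_le_mul h1 (hbj θ j) (norm_nonneg _) zero_le_one
          _ = _ := one_mul _
      refine (Finset.sum_le_card_nsmul _ _ _ this).trans ?_
      simp only [Finset.card_univ, Fintype.card_fin, nsmul_eq_mul]
      rw [mul_one_div, div_le_div_iff₀ (by positivity) (by norm_num)]
      linarith
    have hPl : ∀ θ, PP l (z θ) = PP la (z θ) * (1 + ∑ j, (s j : ℂ) * b θ j) := by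
      intro θ
      have hLc : (L:ℂ) ≠ 0 := by exact_mod_cast hL0.ne'
      have : PP la (z θ) * ∑ j, (s j : ℂ) * b θ j = ∑ j : Fin n, ((l j : ℂ) - (la j : ℂ)) * z θ ^ (j:ℕ) := by
        rw [Finset.mul_sum]
        refine Finset.sum_congr rfl fun j _ => ?_
        have e1 : (s j : ℂ) = L * l j - a j := by simp [s]
        have e2 : (la j : ℂ) = a j / L := by simp [la]
        have e3 : b θ j = z θ ^ (j:ℕ) * (PP la (z θ))⁻¹ * (L:ℂ)⁻¹ := rfl
        rw [e1, e2, e3]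
        have := hPne θ
        clear_value la
        field_simp
      rw [mul_add, this, mul_one, PP_eq l, PP_eq la, add_assoc, ← Finset.sum_add_distrib]
      congr 1
      refine Finset.sum_congr rfl fun j _ => ?_
      ring
    have h1ne : ∀ θ, (1 + ∑ j, (s j : ℂ) * b θ j) ≠ 0 := by
      intro θ h0
      have : ∑ j, (s j : ℂ) * b θ j = -1 := by linear_combination h0
      have h2 := hsum θ
      rw [this] at h2
      norm_num at h2
    have hPlne : ∀ θ, PP l (z θ) ≠ 0 := fun θ => by rw [hPl]; exact mul_ne_zero (hPne θ) (h1ne θ)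
    have hzt : ∀ θ, z θ - t ≠ 0 := by
      intro θ h0
      apply hPlne θ
      rw [sub_eq_zero.1 h0, hPt]
    have hF : ∀ l' θ, F l' (s, θ) = phiE s * ((2 * Real.pi * Complex.I)⁻¹ * (circleMap 0 R θ * Complex.I) *
        (Complex.exp (2 * Real.pi * k * z θ * Complex.I) * (PP l (z θ))⁻¹)) * z θ ^ l' := by
      intro l' θ
      simp only [F, κ, WW]
      rw [tau_eq (hsum θ), hPl θ, mul_inv (PP la (z θ))]
      ring
    have hker : ∀ θ, ∑ i ∈ Finset.range (n + 1), (co l i : ℂ) * ∑ j ∈ Finset.range i, (t:ℂ) ^ j * F (i - 1 - j) (s, θ)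
        = phiE s * ((2 * Real.pi * Complex.I)⁻¹ * (deriv (circleMap (N * Complex.I) R) θ •
        ((z θ - t)⁻¹ • Complex.exp (2 * Real.pi * k * z θ * Complex.I)))) := by
      intro θ
      have h := PP_kernel l (z θ) t
      rw [hPt, zero_sub] at h
      have h' : (∑ i ∈ Finset.range (n + 1), (co l i : ℂ) * ∑ j ∈ Finset.range i, (t:ℂ) ^ j * z θ ^ (i - 1 - j)) = PP l (z θ) * (z θ - t)⁻¹ := by
        rw [eq_mul_inv_iff_mul_eq₀ (hzt θ)]
        linear_combination -h
      have e : ∑ i ∈ Finset.range (n + 1), (co l i : ℂ) * ∑ j ∈ Finset.range i, (t:ℂ) ^ j * F (i - 1 - j) (s, θ)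
        = phiE s * ((2 * Real.pi * Complex.I)⁻¹ * (circleMap 0 R θ * Complex.I) *
        (Complex.exp (2 * Real.pi * k * z θ * Complex.I) * (PP l (z θ))⁻¹)) * (∑ i ∈ Finset.range (n + 1), (co l i : ℂ) * ∑ j ∈ Finset.range i, (t:ℂ) ^ j * z θ ^ (i - 1 - j)) := by
        rw [Finset.mul_sum]
        refine Finset.sum_congr rfl fun i _ => ?_
        rw [Finset.mul_sum, Finset.mul_sum, Finset.mul_sum]
        refine Finset.sum_congr rfl fun j _ => ?_
        rw [hF]; ring
      rw [e, h', deriv_circleMap]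
      have := hPlne θ
      simp only [smul_eq_mul]
      field_simp
    have hcont : ∀ l', Continuous (fun θ => F l' (s, θ)) := fun l' => (hFsm l').continuous.comp (by fun_prop)
    have hint : ∑ i ∈ Finset.range (n + 1), (co l i : ℂ) * ∑ j ∈ Finset.range i, (t:ℂ) ^ j * ∫ θ in (0:ℝ)..(2 * Real.pi), F (i - 1 - j) (s, θ)
        = ∫ θ in (0:ℝ)..(2 * Real.pi), ∑ i ∈ Finset.range (n + 1), (co l i : ℂ) * ∑ j ∈ Finset.range i, (t:ℂ) ^ j * F (i - 1 - j) (s, θ) := by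
      rw [intervalIntegral.integral_finsetSum]
      · refine Finset.sum_congr rfl fun i _ => ?_
        rw [intervalIntegral.integral_const_mul, intervalIntegral.integral_finsetSum]
        · congr 1
          refine Finset.sum_congr rfl fun j _ => ?_
          rw [intervalIntegral.integral_const_mul]
        · intro j _
          exact (continuous_const.mul (hcont _)).intervalIntegrable _ _
      · intro i _
        refine Continuous.intervalIntegrable ?_ _ _
        exact continuous_const.mul (continuous_finsetSum _ fun j _ => continuous_const.mul (hcont _))
    rw [hint]
    simp_rw [hker]
    rw [intervalIntegral.integral_const_mul, intervalIntegral.integral_const_mul]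
    congr 1
    have hcauchy := Complex.circleIntegral_sub_inv_smul_of_differentiable_on_off_countable
      (s := ∅) (c := N * Complex.I) (w := (t:ℂ)) (R := R) (f := fun w => Complex.exp (2 * Real.pi * k * w * Complex.I)) (by simp) ?_ ?_ ?_
    · unfold circleIntegral at hcauchy
      rw [show (∫ θ in (0:ℝ)..(2 * Real.pi), deriv (circleMap (N * Complex.I) R) θ •
        ((z θ - t)⁻¹ • Complex.exp (2 * Real.pi * k * z θ * Complex.I))) = _ from hcauchy]
      rw [smul_eq_mul, ← mul_assoc, inv_mul_cancel₀, one_mul]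
      simp [Real.pi_ne_zero]
    · rw [Metric.mem_ball, dist_eq_norm]
      have : ‖(t:ℂ) - N * Complex.I‖ ^ 2 = t ^ 2 + N ^ 2 := by
        rw [Complex.sq_norm, Complex.normSq_apply]; simp; ring
      have ht2 : t ^ 2 ≤ 1 := by rw [← sq_abs]; nlinarith [abs_nonneg t]
      have hcN' : N * (c / N) = c := by field_simp
      have : ‖(t:ℂ) - N * Complex.I‖ ^ 2 < R ^ 2 := by
        rw [this, hR]; nlinarith
      exact lt_of_pow_lt_pow_left₀ 2 hR0.le this
    · fun_prop
    · intro x _; fun_prop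
end Div2

section Div3

lemma MM_exists (n : ℕ) : ∃ M : ℕ → ℕ → (Fin n → ℝ) → ℂ, (∀ k l, Sm (M k l)) ∧
    (∀ m, ∃ (C : ℝ) (p : ℕ), ∀ k, ∀ l ≤ n, ∀ x, ‖iteratedFDeriv ℝ m (M k l) x‖ ≤ C * (k + 1 : ℝ) ^ p) ∧
    ∀ k (l : Fin n → ℝ) (t : ℝ), ‖l‖ ≤ 1 → |t| ≤ 1 → PP l t = 0 →
      ∑ i ∈ Finset.range (n + 1), (co l i : ℂ) * ∑ j ∈ Finset.range i, (t:ℂ) ^ j * M k (i - 1 - j) l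
       = Complex.exp (2 * Real.pi * k * t * Complex.I) := by
  let cL : ℕ := (2 * n + 1) * (8 * (n + 1)) ^ n
  let L : ℕ → ℕ := fun k => cL * (k + 1) ^ (2 * n)
  have hL : ∀ k : ℕ, (2 * n + 1) * (8 * (n + 1) * (k + 1 : ℝ) ^ 2) ^ n = (L k : ℝ) := by
    intro k
    simp only [L, cL]
    push_cast
    rw [mul_pow, ← pow_mul]; ring
  have hLpos : ∀ k, 1 ≤ L k := by
    intro k
    exact Nat.one_le_iff_ne_zero.2 (by simp [L, cL])
  choose T hT1 hT2 hT3 using fun k => fun a => TT_exists n k (L k) (hL k) a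
  let Box : ℕ → Finset (Fin n → ℤ) := fun k => Fintype.piFinset (fun _ : Fin n => Finset.Icc (-(L k:ℤ)) (L k))
  have haff : ∀ k (a : Fin n → ℤ), (fun x : Fin n → ℝ => (fun j => (L k:ℝ) * x j - a j)) = fun x => ((L k:ℝ) • x + (-(fun j => (a j:ℝ)) : Fin n → ℝ)) := by
    intro k a; funext x j; simp [sub_eq_add_neg]
  have hsm : ∀ k l a, Sm (fun x : Fin n → ℝ => T k a l (fun j => (L k:ℝ) * x j - a j)) := by
    intro k l a
    refine (hT1 k a l).comp ?_
    rw [haff]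
    exact (contDiff_const_smul _).add contDiff_const
  refine ⟨fun k l x => ∑ a ∈ Box k, T k a l (fun j => (L k:ℝ) * x j - a j), ?_, ?_, ?_⟩
  · intro k l
    exact ContDiff.sum fun a _ => hsm k l a
  · intro m
    obtain ⟨C, hC0, hC⟩ := WW_bound n m
    refine ⟨(3 * cL) ^ n * ((cL:ℝ) ^ m * ((3 * 4 ^ n * Real.exp (4 * Real.pi) * (2 * (n + 1)) ^ n) * C)),
      2 * n * n + (2 * n * m + (2 * n + 1)), ?_⟩
    intro k l hl x
    rw [iteratedFDeriv_fun_sum_apply (fun a _ => (hsm k l a).contDiffAt.of_le (by exact_mod_cast le_top))]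
    have h1 : ∀ a ∈ Box k, ‖iteratedFDeriv ℝ m (fun x : Fin n → ℝ => T k a l (fun j => (L k:ℝ) * x j - a j)) x‖ ≤
        (L k : ℝ) ^ m * ((3 * (k + 1 : ℝ) * (4 * (k + 1)) ^ n * Real.exp (4 * Real.pi) * (2 * (n + 1) * (k + 1)) ^ n) * C) := by
      intro a _
      have e : (fun x : Fin n → ℝ => T k a l (fun j => (L k:ℝ) * x j - a j)) = fun x => (fun y => T k a l (y + (-(fun j => (a j:ℝ)) : Fin n → ℝ))) ((L k:ℝ) • x) := by
        funext x; congr 1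
      have hs' : Sm (fun y => T k a l (y + (-(fun j => (a j:ℝ)) : Fin n → ℝ))) :=
        (hT1 k a l).comp (contDiff_id.add contDiff_const)
      rw [e, iteratedFDeriv_comp_const_smul (i := m) (L k : ℝ) (hs'.of_le (by exact_mod_cast le_top))]
      simp only [norm_smul, norm_pow, Real.norm_natCast]
      refine mul_le_mul_of_nonneg_left ?_ (by positivity)
      rw [iteratedFDeriv_comp_add_right]
      exact hT2 k a m C hC l hl _
    refine (norm_sum_le _ _).trans ((Finset.sum_le_card_nsmul _ _ _ h1).trans ?_)
    rw [nsmul_eq_mul]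
    have hcard : ((Box k).card : ℝ) ≤ (3 * L k) ^ n := by
      have : (Box k).card ≤ (3 * L k) ^ n := by
        simp only [Box, Fintype.card_piFinset, Int.card_Icc, Finset.prod_const, Finset.card_univ, Fintype.card_fin]
        refine Nat.pow_le_pow_left ?_ n
        have := hLpos k
        omega
      exact_mod_cast this
    refine (mul_le_mul_of_nonneg_right hcard (by positivity)).trans (le_of_eq ?_)
    have : (L k : ℝ) = cL * (k + 1 : ℝ) ^ (2 * n) := by simp [L]
    rw [this]
    simp only [mul_pow, pow_add, ← pow_mul]
    ring
  · intro k l t hl ht hP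
    have hb : ‖(L k : ℝ) • l‖ ≤ L k := by
      rw [norm_smul, Real.norm_natCast]
      nlinarith [norm_nonneg l, (Nat.cast_nonneg (L k) : (0:ℝ) ≤ L k)]
    have h1 := phiE_sum (L k) ((L k : ℝ) • l) hb
    have h2 : ∑ i ∈ Finset.range (n + 1), (co l i : ℂ) * ∑ j ∈ Finset.range i, (t:ℂ) ^ j * ∑ a ∈ Box k, T k a (i - 1 - j) (fun j => (L k:ℝ) * l j - a j)
      = ∑ a ∈ Box k, ∑ i ∈ Finset.range (n + 1), (co l i : ℂ) * ∑ j ∈ Finset.range i, (t:ℂ) ^ j * T k a (i - 1 - j) (fun j => (L k:ℝ) * l j - a j) := by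
      rw [Finset.sum_comm]
      refine Finset.sum_congr rfl fun i _ => ?_
      rw [← Finset.mul_sum, Finset.sum_comm]
      congr 1
      refine Finset.sum_congr rfl fun j _ => ?_
      rw [Finset.mul_sum]
    rw [h2, Finset.sum_congr rfl fun a _ => hT3 k a l t ht hP, ← Finset.sum_mul]
    have h3 : ∑ a ∈ Box k, (phiE (fun j => (L k:ℝ) * l j - a j) : ℂ) = 1 := by
      rw [← Complex.ofReal_sum]
      rw [show (∑ a ∈ Box k, phiE (fun j => (L k:ℝ) * l j - a j)) = 1 from h1]
      simp
    rw [h3, one_mul]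
end Div3

section Div4
open scoped SchwartzMap FourierTransform

lemma summable_dec {c : ℤ → ℝ} {C : ℝ} (h : ∀ n, c n * (1 + |(n:ℝ)|) ^ 2 ≤ C) (h0 : ∀ n, 0 ≤ c n) : Summable c := by
  have h1 : Summable (fun n : ℤ => C * (1 / |(n:ℝ)|^(2:ℕ))) := by
    refine Summable.mul_left _ ?_
    have := Real.summable_one_div_int_pow.2 (one_lt_two)
    refine this.congr fun n => by rw [sq_abs]
  refine Summable.of_norm_bounded_eventually h1 ?_
  rw [Filter.eventually_cofinite]
  refine (Set.finite_singleton (0:ℤ)).subset fun n hn => ?_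
  by_contra hn0
  apply hn
  have hpos : 0 < |(n:ℝ)| := abs_pos.2 (by exact_mod_cast hn0)
  rw [Real.norm_of_nonneg (h0 n), mul_one_div, le_div_iff₀ (by positivity)]
  refine le_trans ?_ (h n)
  exact mul_le_mul_of_nonneg_left (pow_le_pow_left₀ hpos.le (by linarith) 2) (h0 n)

lemma fourier_exp (g : ℝ → ℝ) (hg : Sm g) : ∃ c : ℤ → ℂ,
    (∀ q : ℕ, ∃ C : ℝ, ∀ n : ℤ, ‖c n‖ * (1 + |(n:ℝ)|) ^ q ≤ C) ∧
    ∀ t : ℝ, |t| ≤ 1/4 → HasSum (fun n : ℤ => c n * Complex.exp (2 * Real.pi * n * t * Complex.I)) (g t : ℂ) := by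
  let b : ContDiffBump (0:ℝ) := ⟨1/4, 1/2, by norm_num, by norm_num⟩
  let f0 : ℝ → ℂ := fun t => ((b t * g t : ℝ) : ℂ)
  have hf0 : Sm f0 := Complex.ofRealCLM.contDiff.comp (b.contDiff.mul hg)
  have hcs : HasCompactSupport f0 := by
    have : HasCompactSupport (b : ℝ → ℝ) := b.hasCompactSupport
    refine (this.mul_right (f' := g)).comp_left (g := fun x : ℝ => (x:ℂ)) (by simp)
  let f : 𝓢(ℝ, ℂ) := hcs.toSchwartzMap hf0
  have hf : ∀ x, f x = f0 x := fun x => rfl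
  have hdec : ∀ q : ℕ, ∃ C : ℝ, ∀ n : ℤ, ‖(𝓕 f) (n:ℝ)‖ * (1 + |(n:ℝ)|) ^ q ≤ C := by
    intro q
    obtain ⟨C0, _, h0⟩ := (𝓕 f).decay 0 0
    obtain ⟨C1, _, h1⟩ := (𝓕 f).decay q 0
    refine ⟨2 ^ q * (C0 + C1), fun n => ?_⟩
    have a0 := h0 (n:ℝ)
    have a1 := h1 (n:ℝ)
    simp only [norm_iteratedFDeriv_zero, pow_zero, one_mul, Real.norm_eq_abs] at a0 a1
    have : (1 + |(n:ℝ)|) ^ q ≤ 2 ^ q * (1 + |(n:ℝ)| ^ q) := by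
      rcases le_total (|(n:ℝ)|) 1 with h | h
      · calc _ ≤ (2:ℝ) ^ q := pow_le_pow_left₀ (by positivity) (by linarith) q
          _ ≤ _ := le_mul_of_one_le_right (by positivity) (by linarith [pow_nonneg (abs_nonneg (n:ℝ)) q])
      · calc _ ≤ (2 * |(n:ℝ)|) ^ q := pow_le_pow_left₀ (by positivity) (by linarith) q
          _ = 2 ^ q * |(n:ℝ)| ^ q := mul_pow _ _ _
          _ ≤ _ := by gcongr; linarith
    calc _ ≤ ‖(𝓕 f) (n:ℝ)‖ * (2 ^ q * (1 + |(n:ℝ)| ^ q)) := by gcongr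
      _ = 2 ^ q * (‖(𝓕 f) (n:ℝ)‖ + |(n:ℝ)| ^ q * ‖(𝓕 f) (n:ℝ)‖) := by ring
      _ ≤ _ := by gcongr
  refine ⟨fun n => (𝓕 f) (n:ℝ), hdec, fun t ht => ?_⟩
  have hp := SchwartzMap.tsum_eq_tsum_fourier f t
  have hl : ∑' n : ℤ, f (t + n) = (g t : ℂ) := by
    rw [tsum_eq_single (0:ℤ)]
    · have : b t = 1 := b.one_of_mem_closedBall (by simpa [b] using ht)
      simp [hf, f0, this]
    · intro n hn
      have : b (t + n) = 0 := by
        refine b.zero_of_le_dist ?_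
        change (1/2:ℝ) ≤ dist (t + n) 0
        rw [Real.dist_eq, sub_zero]
        have h1 : (1:ℝ) ≤ |(n:ℝ)| := by exact_mod_cast Int.one_le_abs hn
        have h2 : |(n:ℝ)| ≤ |t + n| + |t| := by
          have := abs_sub (t + n) t
          simpa using this
        linarith
      simp [hf, f0, this]
  have hsummable : Summable (fun n : ℤ => (𝓕 f) (n:ℝ) * fourier n (t : UnitAddCircle)) := by
    obtain ⟨C, hC⟩ := hdec 2
    refine Summable.of_norm ?_
    refine (summable_dec hC (fun n => norm_nonneg _)).congr fun n => ?_
    rw [norm_mul, fourier_apply, Circle.norm_coe, mul_one]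
  have hr : ∀ n : ℤ, fourier n (t : UnitAddCircle) = Complex.exp (2 * Real.pi * n * t * Complex.I) := by
    intro n
    rw [fourier_coe_apply]
    congr 1
    push_cast
    ring
  rw [hl] at hp
  have := hsummable.hasSum_iff.2 hp.symm
  simpa only [hr] using this

def PR {n : ℕ} (l : Fin n → ℝ) (t : ℝ) : ℝ := ∑ i ∈ Finset.range (n + 1), co l i * t ^ i

lemma rem_exists (n : ℕ) (g : ℝ → ℝ) (hg : Sm g) : ∃ R : ℕ → (Fin n → ℝ) → ℝ, (∀ j, Sm (R j)) ∧
    ∀ (l : Fin n → ℝ) (t : ℝ), ‖l‖ ≤ 1 → |t| ≤ 1/4 → PR l t = 0 →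
      g t = ∑ j ∈ Finset.range n, R j l * t ^ j := by
  obtain ⟨M, hM1, hM2, hM3⟩ := MM_exists n
  obtain ⟨c, hc1, hc2⟩ := fourier_exp g hg
  let d : ℤ → ℂ := fun k => if 0 ≤ k then c k else star (c k)
  have hd : ∀ k, ‖d k‖ = ‖c k‖ := by
    intro k; simp only [d]; split_ifs <;> simp
  have hde : ∀ (k : ℤ) (t : ℝ), (d k * Complex.exp (2 * Real.pi * k.natAbs * t * Complex.I)).re =
      (c k * Complex.exp (2 * Real.pi * k * t * Complex.I)).re := by
    intro k t
    by_cases hk : 0 ≤ k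
    · obtain ⟨m, rfl⟩ := Int.eq_ofNat_of_zero_le hk
      simp [d]
    · obtain ⟨m, hm⟩ := Int.eq_ofNat_of_zero_le (show 0 ≤ -k by omega)
      have hk' : k = -(m:ℤ) := by omega
      have : d k = star (c k) := by simp [d, hk]
      rw [this, ← Complex.conj_re]
      congr 1
      rw [map_mul, ← Complex.exp_conj, Complex.star_def, Complex.conj_conj, hk']
      simp [map_ofNat]
  let MR : ℕ → (Fin n → ℝ) → ℝ := fun l x => ∑' k : ℤ, (d k * M k.natAbs l x).re
  have hterm : ∀ l (k : ℤ), Sm (fun x => (d k * M k.natAbs l x).re) := fun l k =>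
    Complex.reCLM.contDiff.comp (contDiff_const.mul (hM1 _ l))
  have hbd : ∀ m : ℕ, ∃ v : ℤ → ℝ, Summable v ∧ ∀ l ≤ n, ∀ k x,
      ‖iteratedFDeriv ℝ m (fun x => (d k * M k.natAbs l x).re) x‖ ≤ v k := by
    intro m
    obtain ⟨C, p, hC⟩ := hM2 m
    obtain ⟨D, hD⟩ := hc1 (p + 2)
    refine ⟨fun k => |C| * (‖c k‖ * (1 + |(k:ℝ)|) ^ p), ?_, ?_⟩
    · refine Summable.mul_left _ ?_
      refine summable_dec (C := D) (fun k => ?_) (fun k => by positivity)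
      rw [mul_assoc, ← pow_add]
      exact hD k
    · intro l hl k x
      have e : (fun x => (d k * M k.natAbs l x).re) = Complex.reCLM ∘ (fun x => d k • M k.natAbs l x) := by
        funext x; simp
      have hs : Sm (fun x => d k • M k.natAbs l x) := (hM1 _ l).const_smul _
      have h1 := Complex.reCLM.norm_iteratedFDeriv_comp_left (n := m) (hs.contDiffAt (x := x)) (by exact_mod_cast le_top)
      rw [Complex.reCLM_norm, one_mul] at h1
      rw [e]
      refine h1.trans ?_
      rw [iteratedFDeriv_const_smul_apply' ((hM1 _ l).contDiffAt.of_le (by exact_mod_cast le_top)), norm_smul, hd]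
      have h2 := hC k.natAbs l hl x
      have h3 : ((k.natAbs : ℕ) : ℝ) = |(k:ℝ)| := by simp [Nat.cast_natAbs]
      rw [h3] at h2
      calc _ ≤ ‖c k‖ * (C * (|(k:ℝ)| + 1) ^ p) := by gcongr
        _ ≤ ‖c k‖ * (|C| * (|(k:ℝ)| + 1) ^ p) := by gcongr; exact le_abs_self C
        _ = _ := by ring
  have hMRsm : ∀ l ≤ n, Sm (MR l) := by
    intro l hl
    choose v hv1 hv2 using hbd
    exact contDiff_tsum (N := ⊤) (v := v) (hterm l) (fun k _ => hv1 k) (fun k i x _ => hv2 k l hl i x)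
  have hMRs : ∀ l ≤ n, ∀ x, HasSum (fun k : ℤ => (d k * M k.natAbs l x).re) (MR l x) := by
    intro l hl x
    obtain ⟨v, hv1, hv2⟩ := hbd 0
    refine Summable.hasSum (Summable.of_norm_bounded hv1 fun k => ?_)
    simpa using hv2 l hl k x
  have hid : ∀ (l : Fin n → ℝ) (t : ℝ), ‖l‖ ≤ 1 → |t| ≤ 1/4 → PR l t = 0 →
      g t = ∑ i ∈ Finset.range (n + 1), co l i * ∑ j ∈ Finset.range i, t ^ j * MR (i - 1 - j) l := by
    intro l t hl ht hP
    have hPP : PP l t = 0 := by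
      have : PP l t = (PR l t : ℂ) := by simp [PP, PR]
      rw [this, hP]; simp
    have h1 : HasSum (fun k : ℤ => ∑ i ∈ Finset.range (n + 1), co l i * ∑ j ∈ Finset.range i, t ^ j * (d k * M k.natAbs (i - 1 - j) l).re)
        (∑ i ∈ Finset.range (n + 1), co l i * ∑ j ∈ Finset.range i, t ^ j * MR (i - 1 - j) l) := by
      refine hasSum_sum fun i hi => HasSum.mul_left _ (hasSum_sum fun j hj => HasSum.mul_left _ (hMRs _ ?_ l))
      simp at hi hj; omega
    have h2 : HasSum (fun k : ℤ => (c k * Complex.exp (2 * Real.pi * k * t * Complex.I)).re) (g t) := by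
      have := Complex.hasSum_re (hc2 t ht)
      simpa using this
    refine h2.unique ?_
    convert h1 using 2 with k
    rw [← hde, ← hM3 k.natAbs l t hl (by linarith) hPP, Finset.mul_sum, Complex.re_sum]
    refine Finset.sum_congr rfl fun i _ => ?_
    rw [mul_left_comm, Complex.re_ofReal_mul, Finset.mul_sum, Complex.re_sum]
    congr 1
    refine Finset.sum_congr rfl fun j _ => ?_
    rw [mul_left_comm, ← Complex.ofReal_pow, Complex.re_ofReal_mul]
  refine ⟨fun j l => ∑ i ∈ Finset.range (n + 1), if j < i then co l i * MR (i - 1 - j) l else 0, ?_, ?_⟩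
  · intro j
    refine ContDiff.sum fun i hi => ?_
    split_ifs with hij
    · refine ContDiff.mul ?_ (hMRsm _ (by simp at hi; omega))
      unfold co
      split_ifs with h
      · exact contDiff_apply ℝ ℝ _
      · exact contDiff_const
    · exact contDiff_const
  · intro l t hl ht hP
    rw [hid l t hl ht hP]
    simp_rw [Finset.sum_mul, Finset.mul_sum]
    rw [Finset.sum_comm]
    refine Finset.sum_congr rfl fun i hi => ?_
    have hsub : Finset.range i ⊆ Finset.range n := by
      intro x hx; simp at *; omega
    rw [← Finset.sum_subset hsub]
    · refine Finset.sum_congr rfl fun j hj => ?_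
      rw [if_pos (Finset.mem_range.1 hj)]; ring
    · intro j _ hj
      rw [if_neg (by simpa using hj)]; simp
end Div4

section Div5

lemma coef_unique (m : ℕ) : ∀ (n : ℕ) (p : ℕ → ℝ) (S : ℝ → ℝ), ContinuousAt S 0 →
    (∀ᶠ t in nhdsWithin (0:ℝ) {0}ᶜ, ∑ i ∈ Finset.range n, p i * t ^ i = t ^ m * S t) →
    (∀ i < m, i < n → p i = 0) ∧ (m < n → p m = S 0) := by
  have lim : ∀ (n : ℕ) (p : ℕ → ℝ), Tendsto (fun t : ℝ => ∑ i ∈ Finset.range (n+1), p i * t ^ i) (nhdsWithin (0:ℝ) {0}ᶜ) (nhds (p 0)) := by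
    intro n p
    have : Continuous (fun t : ℝ => ∑ i ∈ Finset.range (n+1), p i * t ^ i) := by fun_prop
    have h := this.tendsto 0
    simp only [Finset.sum_range_succ'] at h ⊢
    simp at h
    refine (h.mono_left nhdsWithin_le_nhds).congr fun t => by simp
  induction m with
  | zero =>
    intro n p S hS h
    refine ⟨fun i hi => by omega, fun hn => ?_⟩
    obtain ⟨n, rfl⟩ := Nat.exists_eq_succ_of_ne_zero hn.ne'
    have h2 : Tendsto (fun t => t ^ 0 * S t) (nhdsWithin (0:ℝ) {0}ᶜ) (nhds (S 0)) := by
      simpa using hS.tendsto.mono_left nhdsWithin_le_nhds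
    exact tendsto_nhds_unique ((lim n p).congr' h) h2
  | succ m ih =>
    intro n p S hS h
    rcases Nat.eq_zero_or_pos n with rfl | hn
    · exact ⟨fun i _ hi => by omega, fun hi => by omega⟩
    obtain ⟨n, rfl⟩ := Nat.exists_eq_succ_of_ne_zero hn.ne'
    have h2 : Tendsto (fun t => t ^ (m+1) * S t) (nhdsWithin (0:ℝ) {0}ᶜ) (nhds 0) := by
      have : ContinuousAt (fun t : ℝ => t ^ (m+1) * S t) 0 := (continuousAt_id.pow _).mul hS
      have := this.tendsto
      simp only [ne_eq, Nat.add_eq_zero_iff, one_ne_zero, and_false, not_false_eq_true, zero_pow, zero_mul] at this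
      exact this.mono_left nhdsWithin_le_nhds
    have hp0 : p 0 = 0 := tendsto_nhds_unique ((lim n p).congr' h) h2
    have h3 := ih n (fun i => p (i+1)) S hS (by
      filter_upwards [h, self_mem_nhdsWithin] with t ht ht0
      have ht0 : t ≠ 0 := ht0
      rw [Finset.sum_range_succ', hp0] at ht
      apply mul_left_cancel₀ ht0
      rw [Finset.mul_sum]
      calc _ = ∑ i ∈ Finset.range n, p (i+1) * t ^ (i+1) + 0 * t ^ 0 := by
            rw [zero_mul, add_zero]; exact Finset.sum_congr rfl fun i _ => by ring
        _ = _ := by rw [ht]; ring)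
    refine ⟨fun i hi hin => ?_, fun hm => h3.2 (by omega)⟩
    rcases i with _ | i
    · exact hp0
    · exact h3.1 i (by omega) (by omega)

lemma co_sm {n : ℕ} (i : ℕ) : Sm (fun l : Fin n → ℝ => co l i) := by
  unfold co
  split_ifs with h
  · exact contDiff_apply ℝ ℝ _
  · exact contDiff_const

lemma PR_sm {n : ℕ} : Sm (fun p : ℝ × (Fin n → ℝ) => PR p.2 p.1) := by
  unfold PR
  exact ContDiff.sum fun i _ => ((co_sm i).comp contDiff_snd).mul (contDiff_fst.pow i)

lemma PR_zero {n : ℕ} (t : ℝ) : PR (0 : Fin n → ℝ) t = t ^ n := by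
  unfold PR
  rw [Finset.sum_range_succ, Finset.sum_eq_zero]
  · simp [co]
  · intro i hi; simp [co, Finset.mem_range.1 hi]

lemma PR_add {n : ℕ} (l : Fin n → ℝ) (j : Fin n) (c t : ℝ) :
    PR (l + c • Pi.single j 1) t = PR l t + c * t ^ (j:ℕ) := by
  have : ∀ l : Fin n → ℝ, PR l t = t ^ n + ∑ j : Fin n, l j * t ^ (j:ℕ) := by
    intro l
    unfold PR
    rw [Finset.sum_range_succ, add_comm, Finset.sum_range]
    simp [co]
  rw [this, this]
  simp only [Pi.add_apply, Pi.smul_apply, smul_eq_mul, add_mul, Finset.sum_add_distrib]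
  rw [Finset.sum_eq_single (M := ℝ) j (f := fun x => c * Pi.single (M := fun _ => ℝ) j 1 x * t ^ (x:ℕ))]
  · simp; ring
  · intro b _ hb; simp [hb]
  · simp

/-- Division theorem. -/
theorem div_thm (n : ℕ) (hn : 0 < n) (g : ℝ → ℝ) (hg : Sm g) : ∃ (R : ℕ → (Fin n → ℝ) → ℝ)
    (Q : ℝ × (Fin n → ℝ) → ℝ), (∀ j, Sm (R j)) ∧ Sm Q ∧
    ∀ᶠ p in nhds (0 : ℝ × (Fin n → ℝ)), g p.1 = Q p * PR p.2 p.1 + ∑ j ∈ Finset.range n, R j p.2 * p.1 ^ j := by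
  obtain ⟨R, hR, hRe⟩ := rem_exists n g hg
  let e0 : Fin n → ℝ := Pi.single ⟨0, hn⟩ 1
  let h : ℝ × (Fin n → ℝ) → ℝ := fun p => g p.1 - ∑ j ∈ Finset.range n, R j p.2 * p.1 ^ j
  have hh : Sm h := (hg.comp contDiff_fst).sub (ContDiff.sum fun i _ => ((hR i).comp contDiff_snd).mul (contDiff_fst.pow i))
  let c : (ℝ × (Fin n → ℝ)) × ℝ → ℝ × (Fin n → ℝ) := fun q => (q.1.1, q.1.2 + (-(1 - q.2) * PR q.1.2 q.1.1) • e0)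
  have hc : Sm c := by
    have e1 : Sm (fun q : (ℝ × (Fin n → ℝ)) × ℝ => -(1 - q.2)) := by
      have : Sm (fun q : (ℝ × (Fin n → ℝ)) × ℝ => q.2) := contDiff_snd
      exact (contDiff_const.sub this).neg
    have e2 : Sm (fun q : (ℝ × (Fin n → ℝ)) × ℝ => -(1 - q.2) * PR q.1.2 q.1.1) :=
      e1.mul (PR_sm.comp contDiff_fst)
    have e3 : Sm (fun q : (ℝ × (Fin n → ℝ)) × ℝ => (-(1 - q.2) * PR q.1.2 q.1.1) • e0) :=
      e2.smul contDiff_const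
    have e4 : Sm (fun q : (ℝ × (Fin n → ℝ)) × ℝ => q.1.1) := contDiff_fst.comp contDiff_fst
    have e5 : Sm (fun q : (ℝ × (Fin n → ℝ)) × ℝ => q.1.2) := contDiff_snd.comp contDiff_fst
    exact e4.prodMk (e5.add e3)
  let F : (ℝ × (Fin n → ℝ)) × ℝ → ℝ := fun q => fderiv ℝ h (c q) (0, e0)
  have hF : Sm F := (hh.fd.comp hc).clm_apply contDiff_const
  refine ⟨R, fun p => ∫ s in (0:ℝ)..1, F (p, s), hR, PI hF 0 1, ?_⟩
  have hev : ∀ᶠ p in nhds (0 : ℝ × (Fin n → ℝ)), ‖(c (p, 0)).2‖ ≤ 1 ∧ |p.1| ≤ 1/4 := by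
    have hcont : Continuous (fun p : ℝ × (Fin n → ℝ) => ‖(c (p, 0)).2‖) := by
      have := hc.continuous
      fun_prop
    have h1 : ‖(c ((0 : ℝ × (Fin n → ℝ)), 0)).2‖ < 1 := by
      simp [c, PR_zero, hn.ne']
    have h2 : Continuous (fun p : ℝ × (Fin n → ℝ) => |p.1|) := by fun_prop
    have h3 : |(0 : ℝ × (Fin n → ℝ)).1| < 1/4 := by simp
    filter_upwards [hcont.continuousAt.eventually (gt_mem_nhds h1), h2.continuousAt.eventually (gt_mem_nhds h3)] with p a b
    exact ⟨le_of_lt a, le_of_lt b⟩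
  filter_upwards [hev] with p hp
  have hder : ∀ s : ℝ, HasDerivAt (fun s => h (c (p, s))) (F (p, s) * PR p.2 p.1) s := by
    intro s
    have h1 : HasDerivAt (fun s => c (p, s)) ((0:ℝ), (PR p.2 p.1) • e0) s := by
      refine HasDerivAt.prodMk (f₁ := fun _ => p.1) (hasDerivAt_const s p.1) ?_
      have : HasDerivAt (fun s : ℝ => (-(1 - s) * PR p.2 p.1)) (PR p.2 p.1) s := by
        have := (((hasDerivAt_id s).const_sub 1).neg).mul_const (PR p.2 p.1)
        simpa using this
      simpa using (this.smul_const e0).const_add p.2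
    have h2 := (hh.df (c (p, s))).hasFDerivAt.comp_hasDerivAt s h1
    have e : ((0:ℝ), (PR p.2 p.1) • e0) = (PR p.2 p.1) • ((0:ℝ), e0) := by simp
    rw [e, map_smul, smul_eq_mul, mul_comm] at h2
    exact h2
  have hFc : Continuous (fun s => F (p, s)) := hF.continuous.comp (by fun_prop)
  have hI := intervalIntegral.integral_eq_sub_of_hasDerivAt (a := 0) (b := 1) (fun s _ => hder s)
    ((hFc.mul continuous_const).intervalIntegrable _ _)
  rw [intervalIntegral.integral_mul_const] at hI
  have e1 : c (p, 1) = p := by simp [c]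
  have e0' : h (c (p, 0)) = 0 := by
    simp only [h]
    rw [sub_eq_zero]
    refine hRe _ _ hp.1 hp.2 ?_
    simp only [c, e0, PR_add]
    simp
  rw [e1, e0', sub_zero] at hI
  rw [hI]
  simp [h]

/-- Division with information on the remainder at the origin. -/
theorem div_thm' (n : ℕ) (hn : 0 < n) (g gh : ℝ → ℝ) (hg : Sm g) (hgh : Sm gh) (m : ℕ) (hm : m ≤ n)
    (hgm : ∀ᶠ t in nhds (0:ℝ), g t = t ^ m * gh t) : ∃ (R : ℕ → (Fin n → ℝ) → ℝ)
    (Q : ℝ × (Fin n → ℝ) → ℝ), (∀ j, Sm (R j)) ∧ Sm Q ∧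
    (∀ᶠ p in nhds (0 : ℝ × (Fin n → ℝ)), g p.1 = Q p * PR p.2 p.1 + ∑ j ∈ Finset.range n, R j p.2 * p.1 ^ j) ∧
    (∀ i < m, R i 0 = 0) ∧ (m < n → R m 0 = gh 0) ∧
    (m = n → ∀ j : Fin n, (∀ i < (j:ℕ), fderiv ℝ (R i) 0 (Pi.single j 1) = 0) ∧
      fderiv ℝ (R j) 0 (Pi.single j 1) = - gh 0) := by
  obtain ⟨R, Q, hR, hQ, hE⟩ := div_thm n hn g hg
  have hQ0 : Continuous (fun t : ℝ => Q (t, 0)) := hQ.continuous.comp (by fun_prop)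
  have htend : Tendsto (fun t : ℝ => (t, (0 : Fin n → ℝ))) (nhds 0) (nhds 0) := by
    have : Continuous (fun t : ℝ => (t, (0 : Fin n → ℝ))) := by fun_prop
    exact this.tendsto 0
  have hE0 := htend.eventually hE
  have hE1 := htend.eventually hE.eventually_nhds
  have hA := coef_unique m n (fun i => R i 0) (fun t => gh t - Q (t, 0) * t ^ (n - m))
    ((hgh.continuous.sub (hQ0.mul (continuous_id.pow _))).continuousAt) (by
      refine Filter.Eventually.filter_mono nhdsWithin_le_nhds ?_
      filter_upwards [hE0, hgm] with t h1 h2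
      simp only [PR_zero] at h1
      have : t ^ n = t ^ m * t ^ (n - m) := by rw [← pow_add]; congr 1; omega
      rw [this] at h1
      linear_combination h2 - h1)
  refine ⟨R, Q, hR, hQ, hE, fun i hi => hA.1 i hi (by omega), fun hmn => ?_, ?_⟩
  · rw [hA.2 hmn]
    have : n - m ≠ 0 := by omega
    simp [this]
  · rintro rfl j
    have hq : Q (0, 0) = gh 0 := by
      have hev : ∀ᶠ t in nhdsWithin (0:ℝ) {0}ᶜ, Q (t, 0) = gh t := by
        have := Filter.Eventually.filter_mono (nhdsWithin_le_nhds (s := {(0:ℝ)}ᶜ)) (hE0.and hgm)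
        filter_upwards [this, self_mem_nhdsWithin] with t ht ht0
        obtain ⟨h1, h2⟩ := ht
        have ht0 : t ≠ 0 := ht0
        rw [Finset.sum_eq_zero (fun i hi => by rw [hA.1 i (Finset.mem_range.1 hi) (Finset.mem_range.1 hi), zero_mul])] at h1
        simp only [PR_zero, add_zero] at h1
        apply mul_left_cancel₀ (pow_ne_zero m ht0)
        linear_combination h2 - h1
      have l1 := (hQ0.tendsto 0).mono_left (nhdsWithin_le_nhds (s := {(0:ℝ)}ᶜ))
      have l2 := (hgh.continuous.tendsto 0).mono_left (nhdsWithin_le_nhds (s := {(0:ℝ)}ᶜ))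
      exact tendsto_nhds_unique (l1.congr' hev) l2
    have hfd : Continuous (fun t : ℝ => fderiv ℝ Q (t, 0) (0, Pi.single j 1)) := by
      have := hQ.fd.continuous
      have h2 : Continuous (fun t : ℝ => fderiv ℝ Q (t, (0 : Fin m → ℝ))) := this.comp (by fun_prop)
      exact h2.clm_apply continuous_const
    have hB := coef_unique j m (fun i => - fderiv ℝ (R i) 0 (Pi.single j 1))
      (fun t => Q (t, 0) + t ^ (m - j) * fderiv ℝ Q (t, 0) (0, Pi.single j 1))
      ((hQ0.add ((continuous_id.pow _).mul hfd)).continuousAt) (by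
        refine Filter.Eventually.filter_mono nhdsWithin_le_nhds ?_
        filter_upwards [hE1] with t ht
        have hcurve : HasDerivAt (fun c : ℝ => (t, c • (Pi.single j 1 : Fin m → ℝ))) ((0:ℝ), (Pi.single j 1 : Fin m → ℝ)) 0 := by
          refine HasDerivAt.prodMk (hasDerivAt_const _ _) ?_
          simpa using (hasDerivAt_id (0:ℝ)).smul_const (Pi.single j 1 : Fin m → ℝ)
        have hct : Tendsto (fun c : ℝ => (t, c • (Pi.single j 1 : Fin m → ℝ))) (nhds 0) (nhds (t, 0)) := by
          have := hcurve.continuousAt.tendsto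
          simpa using this
        have hid := hct.eventually ht
        have hdQ : HasDerivAt (fun c : ℝ => Q (t, c • (Pi.single j 1 : Fin m → ℝ))) (fderiv ℝ Q (t, 0) (0, Pi.single j 1)) 0 := by
          have h1 : HasDerivAt (fun c : ℝ => Q (t, c • (Pi.single j 1 : Fin m → ℝ))) _ 0 :=
            (hQ.df (t, (0:ℝ) • (Pi.single j 1 : Fin m → ℝ))).hasFDerivAt.comp_hasDerivAt (0:ℝ) hcurve
          rw [zero_smul] at h1
          exact h1
        have hdR : ∀ i, HasDerivAt (fun c : ℝ => R i (c • (Pi.single j 1 : Fin m → ℝ))) (fderiv ℝ (R i) 0 (Pi.single j 1)) 0 := by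
          intro i
          have h0 : HasDerivAt (fun c : ℝ => c • (Pi.single j 1 : Fin m → ℝ)) (Pi.single j 1 : Fin m → ℝ) 0 := by
            simpa using (hasDerivAt_id (0:ℝ)).smul_const (Pi.single j 1 : Fin m → ℝ)
          have h1 : HasDerivAt (fun c : ℝ => R i (c • (Pi.single j 1 : Fin m → ℝ))) _ 0 :=
            ((hR i).df ((0:ℝ) • (Pi.single j 1 : Fin m → ℝ))).hasFDerivAt.comp_hasDerivAt (0:ℝ) h0
          rw [zero_smul] at h1
          exact h1
        have hdP : HasDerivAt (fun c : ℝ => PR (c • (Pi.single j 1 : Fin m → ℝ)) t) (t ^ (j:ℕ)) 0 := by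
          have e : (fun c : ℝ => PR (c • (Pi.single j 1 : Fin m → ℝ)) t) = fun c => t ^ m + c * t ^ (j:ℕ) := by
            funext c
            have := PR_add (0 : Fin m → ℝ) j c t
            rw [zero_add] at this
            rw [this, PR_zero]
          rw [e]
          simpa using ((hasDerivAt_id (0:ℝ)).mul_const (t ^ (j:ℕ))).const_add (t ^ m)
        have hsum := HasDerivAt.fun_sum (u := Finset.range m) (fun i _ => (hdR i).mul_const (t ^ i))
        have htot := (hdQ.mul hdP).add hsum
        have hconst : HasDerivAt (fun _ : ℝ => g t) 0 0 := hasDerivAt_const _ _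
        have hu := (hconst.congr_of_eventuallyEq (hid.mono fun c hc => hc.symm)).unique htot
        simp only [zero_smul, PR_zero] at hu
        have : t ^ m = t ^ (j:ℕ) * t ^ (m - j) := by rw [← pow_add]; congr 1; omega
        rw [this] at hu
        simp only [neg_mul, Finset.sum_neg_distrib]
        linear_combination hu)
    refine ⟨fun i hi => by simpa using hB.1 i hi (by omega), ?_⟩
    have h := hB.2 j.2
    have : m - (j:ℕ) ≠ 0 := by omega
    simp [this, hq] at h
    linarith
end Div5

section Util

lemma IsLocalDiffeoAt.comp' {E F G : Type*} [NormedAddCommGroup E] [NormedSpace ℝ E]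
    [NormedAddCommGroup F] [NormedSpace ℝ F] [NormedAddCommGroup G] [NormedSpace ℝ G]
    {g : F → G} {f : E → F} {p : E} {q : F} (hq : f p = q) (hg : IsLocalDiffeoAt g q) (hf : IsLocalDiffeoAt f p) :
    IsLocalDiffeoAt (fun x => g (f x)) p := by
  subst hq
  obtain ⟨hg1, g', hg2, hg3, hg4⟩ := hg
  obtain ⟨hf1, f', hf2, hf3, hf4⟩ := hf
  have e : g' (g (f p)) = f p := hg3.self_of_nhds
  have e' : f' (f p) = p := hf3.self_of_nhds
  refine ⟨hg1.comp p hf1, fun x => f' (g' x), ?_, ?_, ?_⟩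
  · exact ContDiffAt.comp (g := f') (f := g') (g (f p)) (by rw [e]; exact hf2) hg2
  · filter_upwards [hf3, hf1.continuousAt.eventually hg3] with x h1 h2
    rw [h2, h1]
  · have t : Tendsto g' (nhds (g (f p))) (nhds (f p)) := by
      have := hg2.continuousAt.tendsto
      rwa [e] at this
    filter_upwards [hg4, t.eventually hf4] with x h1 h2
    rw [h2, h1]

lemma IsLocalDiffeoAt.symm' {E F : Type*} [NormedAddCommGroup E] [NormedSpace ℝ E]
    [NormedAddCommGroup F] [NormedSpace ℝ F] {f : E → F} {p : E} (hf : IsLocalDiffeoAt f p) :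
    ∃ ψ : F → E, IsLocalDiffeoAt ψ (f p) ∧ ψ (f p) = p ∧ (∀ᶠ x in nhds p, ψ (f x) = x) ∧
      (∀ᶠ y in nhds (f p), f (ψ y) = y) := by
  obtain ⟨h1, ψ, h2, h3, h4⟩ := hf
  have e : ψ (f p) = p := h3.self_of_nhds
  exact ⟨ψ, ⟨h2, f, by rw [e]; exact h1, h4, by rw [e]; exact h3⟩, e, h3, h4⟩

lemma AEquivAt.trans' {f g h : ℝ × ℝ → R3} {p q r : ℝ × ℝ} (h1 : AEquivAt f p g q)
    (h2 : AEquivAt g q h r) : AEquivAt f p h r := by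
  obtain ⟨a, A, ha, hap, hA, hf⟩ := h1
  obtain ⟨b, B, hb, hbq, hB, hg⟩ := h2
  have e : A (f p) = g q := by
    have := hf.self_of_nhds
    rwa [hap] at this
  refine ⟨fun x => a (b x), fun y => B (A y), IsLocalDiffeoAt.comp' hbq ha hb, by simp [hbq, hap],
    IsLocalDiffeoAt.comp' e hB hA, ?_⟩
  have t : Tendsto b (nhds r) (nhds q) := by
    have := hb.1.continuousAt.tendsto
    rwa [hbq] at this
  filter_upwards [hg, t.eventually hf] with x h1 h2
  rw [h2, h1]

lemma AEquivAt.of_eq {f g : ℝ × ℝ → R3} {p q : ℝ × ℝ} (σ : ℝ × ℝ → ℝ × ℝ) (Ω : R3 → R3)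
    (hσ : IsLocalDiffeoAt σ q) (hp : σ q = p) (hΩ : IsLocalDiffeoAt Ω (g q)) (hg : ContinuousAt g q)
    (h : ∀ᶠ x in nhds q, f (σ x) = Ω (g x)) : AEquivAt f p g q := by
  obtain ⟨Ψ, h1, h2, h3, h4⟩ := hΩ.symm'
  refine ⟨σ, Ψ, hσ, hp, ?_, ?_⟩
  · have := h.self_of_nhds
    rw [hp] at this
    rwa [this]
  · filter_upwards [h, hg.eventually h3] with x a b
    rw [a, b]

lemma AEquivAt.symm' {f g : ℝ × ℝ → R3} {p q : ℝ × ℝ} (h1 : AEquivAt f p g q)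
    (hf : ContinuousAt f p) : AEquivAt g q f p := by
  obtain ⟨a, A, ha, hap, hA, h⟩ := h1
  obtain ⟨b, hb1, hb2, hb3, hb4⟩ := ha.symm'
  rw [hap] at hb1 hb2 hb4
  have e : A (f p) = g q := by
    have := h.self_of_nhds
    rwa [hap] at this
  refine AEquivAt.of_eq b A hb1 hb2 hA hf ?_
  have t : Tendsto b (nhds p) (nhds q) := by
    have := hb1.1.continuousAt.tendsto
    rwa [hb2] at this
  filter_upwards [hb4, t.eventually h] with x h1 h2
  rw [← h2, h1]

lemma ld_of {E : Type} [NormedAddCommGroup E] [NormedSpace ℝ E] [FiniteDimensional ℝ E]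
    {f : E → E} (hf : Sm f) (p : E) (hinj : ∀ v, fderiv ℝ f p v = 0 → v = 0) : IsLocalDiffeoAt f p := by
  have : CompleteSpace E := FiniteDimensional.complete ℝ E
  let e : E ≃L[ℝ] E := (LinearEquiv.ofInjectiveEndo (fderiv ℝ f p : E →ₗ[ℝ] E)
    ((injective_iff_map_eq_zero _).2 hinj)).toContinuousLinearEquiv
  have he : HasFDerivAt f (e : E →L[ℝ] E) p := by
    have : (e : E →L[ℝ] E) = fderiv ℝ f p := by ext v; simp [e]
    rw [this]
    exact (hf.df p).hasFDerivAt
  have hn : (((⊤ : ℕ∞) : WithTop ℕ∞)) ≠ 0 := by simp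
  have hs : HasStrictFDerivAt f (e : E →L[ℝ] E) p := hf.contDiffAt.hasStrictFDerivAt' he hn
  exact ⟨hf.contDiffAt, _, ContDiffAt.to_localInverse hf.contDiffAt he hn,
    hs.eventually_left_inverse, hs.eventually_right_inverse⟩

lemma inv_glob {E : Type} [NormedAddCommGroup E] [NormedSpace ℝ E] [FiniteDimensional ℝ E]
    {f : E → E} (hf : Sm f) (p : E) (hinj : ∀ v, fderiv ℝ f p v = 0 → v = 0) : ∃ ψ : E → E, Sm ψ ∧ ψ (f p) = p ∧
    (∀ᶠ x in nhds p, ψ (f x) = x) ∧ (∀ᶠ y in nhds (f p), f (ψ y) = y) := by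
  have : CompleteSpace E := FiniteDimensional.complete ℝ E
  let e : E ≃L[ℝ] E := (LinearEquiv.ofInjectiveEndo (fderiv ℝ f p : E →ₗ[ℝ] E)
    ((injective_iff_map_eq_zero _).2 hinj)).toContinuousLinearEquiv
  have he' : (e : E →L[ℝ] E) = fderiv ℝ f p := by ext v; simp [e]
  have he : HasFDerivAt f (e : E →L[ℝ] E) p := by
    rw [he']
    exact (hf.df p).hasFDerivAt
  have hn : (((⊤ : ℕ∞) : WithTop ℕ∞)) ≠ 0 := by simp
  have hs : HasStrictFDerivAt f (e : E →L[ℝ] E) p := hf.contDiffAt.hasStrictFDerivAt' he hn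
  let P := hs.toOpenPartialHomeomorph f
  have hP : (P : E → E) = f := hs.toOpenPartialHomeomorph_coe
  have hps : p ∈ P.source := hs.mem_toOpenPartialHomeomorph_source
  have hfp : f p ∈ P.target := hs.image_mem_toOpenPartialHomeomorph_target
  have hsym : P.symm (f p) = p := by
    have := P.left_inv hps
    rwa [hP] at this
  have hcont : ContinuousAt P.symm (f p) := P.continuousAt_symm hfp
  have hev : ∀ᶠ y in nhds (f p), fderiv ℝ f (P.symm y) ∈ Set.range ((↑) : (E ≃L[ℝ] E) → E →L[ℝ] E) := by
    have h1 : ContinuousAt (fun y => fderiv ℝ f (P.symm y)) (f p) :=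
      ContinuousAt.comp (g := fderiv ℝ f) hf.fd.continuous.continuousAt hcont
    refine h1.eventually ?_
    have h2 := ContinuousLinearEquiv.nhds e
    rw [he'] at h2
    beta_reduce
    rw [hsym]
    exact h2
  have hsm : ∀ᶠ y in nhds (f p), ContDiffAt ℝ (⊤ : ℕ∞) P.symm y := by
    filter_upwards [hev, P.open_target.mem_nhds hfp] with y h1 h2
    obtain ⟨e', he'⟩ := h1
    refine P.contDiffAt_symm (f₀' := e') h2 ?_ ?_
    · rw [hP, he']; exact (hf.df _).hasFDerivAt
    · rw [hP]; exact hf.contDiffAt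
  obtain ⟨ψ, hψ, hψe⟩ := glob P.symm (f p) hsm
  refine ⟨ψ, hψ, by rw [hψe.self_of_nhds, hsym], ?_, ?_⟩
  · filter_upwards [P.open_source.mem_nhds hps, hf.continuous.continuousAt.eventually hψe] with x h1 h2
    rw [h2]
    have := P.left_inv h1
    rwa [hP] at this
  · filter_upwards [P.open_target.mem_nhds hfp, hψe] with y h1 h2
    rw [h2]
    have := P.right_inv h1
    rwa [hP] at this

lemma fd2 {f : ℝ × ℝ → ℝ} (hf : Sm f) {p : ℝ × ℝ} {a b : ℝ} (ha : HasDerivAt (fun s => f (s, p.2)) a p.1)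
    (hb : HasDerivAt (fun s => f (p.1, s)) b p.2) (v : ℝ × ℝ) : fderiv ℝ f p v = v.1 * a + v.2 * b := by
  have h := (hf.df p).hasFDerivAt
  have h1 : HasDerivAt (fun s => f (s, p.2)) (fderiv ℝ f p (1, 0)) p.1 :=
    HasFDerivAt.comp_hasDerivAt (l := f) (f := fun s => (s, p.2)) p.1 h
      ((hasDerivAt_id p.1).prodMk (hasDerivAt_const p.1 p.2))
  have h2 : HasDerivAt (fun s => f (p.1, s)) (fderiv ℝ f p (0, 1)) p.2 :=
    HasFDerivAt.comp_hasDerivAt (l := f) (f := fun s => (p.1, s)) p.2 h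
      ((hasDerivAt_const p.2 p.1).prodMk (hasDerivAt_id p.2))
  rw [ha.unique h1, hb.unique h2]
  have : v = v.1 • ((1:ℝ), (0:ℝ)) + v.2 • ((0:ℝ), (1:ℝ)) := by ext <;> simp
  conv_lhs => rw [this]
  rw [map_add, map_smul, map_smul]
  simp

lemma fd2' {f : ℝ × ℝ → ℝ} (hf : Sm f) (p : ℝ × ℝ) :
   HasDerivAt (fun s => f (s, p.2)) (fderiv ℝ f p (1, 0)) p.1 ∧ HasDerivAt (fun s => f (p.1, s)) (fderiv ℝ f p (0, 1)) p.2 := by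
  have h := (hf.df p).hasFDerivAt
  exact ⟨HasFDerivAt.comp_hasDerivAt (l := f) (f := fun s => (s, p.2)) p.1 h
      ((hasDerivAt_id p.1).prodMk (hasDerivAt_const p.1 p.2)), HasFDerivAt.comp_hasDerivAt (l := f) (f := fun s => (p.1, s)) p.2 h
      ((hasDerivAt_const p.2 p.1).prodMk (hasDerivAt_id p.2))⟩

lemma ld2 {f g : ℝ × ℝ → ℝ} (hf : Sm f) (hg : Sm g) (p : ℝ × ℝ)
    (h : ∀ v, fderiv ℝ f p v = 0 → fderiv ℝ g p v = 0 → v = 0) : IsLocalDiffeoAt (fun x => (f x, g x)) p := by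
  refine ld_of (hf.prodMk hg) p fun v hv => ?_
  rw [((hf.df p).hasFDerivAt.prodMk (hg.df p).hasFDerivAt).fderiv] at hv
  simp at hv
  exact h v hv.1 hv.2

lemma sm3 {E : Type} [NormedAddCommGroup E] [NormedSpace ℝ E] {f g k : E → ℝ} (hf : Sm f) (hg : Sm g) (hk : Sm k) :
    Sm (fun x => (![f x, g x, k x] : R3)) := by
  rw [Sm, contDiff_pi]
  intro i
  fin_cases i <;> simpa

lemma ld3 {f g k : R3 → ℝ} (hf : Sm f) (hg : Sm g) (hk : Sm k) (p : R3)
    (h : ∀ v, fderiv ℝ f p v = 0 → fderiv ℝ g p v = 0 → fderiv ℝ k p v = 0 → v = 0) :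
    IsLocalDiffeoAt (fun x => (![f x, g x, k x] : R3)) p := by
  have hs := sm3 hf hg hk
  refine ld_of hs p fun v hv => ?_
  have key : ∀ i : Fin 3, fderiv ℝ (fun x => (![f x, g x, k x] : R3) i) p v = 0 := by
    intro i
    have h1 := (hasFDerivAt_pi'.1 ((hs.df p).hasFDerivAt)) i
    rw [h1.fderiv]
    simp only [ContinuousLinearMap.comp_apply, hv, map_zero]
  exact h v (key 0) (key 1) (key 2)

lemma sm_ap (i : Fin 3) : Sm (fun x : R3 => x i) := contDiff_apply ℝ ℝ i

lemma eq3 {v : R3} (h0 : v 0 = 0) (h1 : v 1 = 0) (h2 : v 2 = 0) : v = 0 := by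
  funext i; fin_cases i <;> assumption

/-- primitive with a power -/
lemma prim (i : ℕ) {f w : ℝ → ℝ} (hw : Sm w) (h0 : f 0 = 0) (h : ∀ᶠ t in nhds 0, HasDerivAt f (t ^ i * w t) t) :
    ∃ W : ℝ → ℝ, Sm W ∧ W 0 = w 0 / (i + 1) ∧ ∀ᶠ t in nhds 0, f t = t ^ (i + 1) * W t := by
  refine ⟨fun t => ∫ τ in (0:ℝ)..1, (fun q : ℝ × ℝ => q.2 ^ i * w (q.2 * q.1)) (t, τ), PI (F := fun q : ℝ × ℝ => q.2 ^ i * w (q.2 * q.1)) ?_ 0 1, ?_, ?_⟩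
  · exact (contDiff_snd.pow i).mul (hw.comp (contDiff_snd.mul contDiff_fst))
  · simp only [mul_zero]
    rw [intervalIntegral.integral_mul_const, integral_pow]
    simp
    ring
  · obtain ⟨ε, hε, hb⟩ := Metric.eventually_nhds_iff_ball.1 h
    filter_upwards [Metric.ball_mem_nhds (0:ℝ) hε] with t ht
    have hd : ∀ τ ∈ Set.uIcc (0:ℝ) 1, HasDerivAt (fun τ => f (τ * t)) (t ^ (i + 1) * (τ ^ i * w (τ * t))) τ := by
      intro τ hτ
      have hm : τ * t ∈ Metric.ball (0:ℝ) ε := by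
        rw [Set.uIcc_of_le zero_le_one] at hτ
        simp at ht ⊢
        calc |τ| * |t| ≤ 1 * |t| := by gcongr; rw [abs_of_nonneg hτ.1]; exact hτ.2
          _ < ε := by simpa using ht
      have h1 := (hb _ hm).comp τ ((hasDerivAt_id τ).mul_const t)
      refine HasDerivAt.congr_deriv h1 ?_
      ring
    have hI := intervalIntegral.integral_eq_sub_of_hasDerivAt hd (by
      apply Continuous.intervalIntegrable
      have := hw.continuous
      fun_prop)
    simp only [zero_mul, one_mul, h0, sub_zero] at hI
    rw [← hI, intervalIntegral.integral_const_mul]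

/-- Hadamard's lemma in the second variable -/
lemma hada {f : ℝ × ℝ → ℝ} (hf : Sm f) (h0 : ∀ x, f (x, 0) = 0) : ∃ g : ℝ × ℝ → ℝ, Sm g ∧ ∀ x y, f (x, y) = y * g (x, y) := by
  refine ⟨fun p => ∫ s in (0:ℝ)..1, (fun q : (ℝ × ℝ) × ℝ => fderiv ℝ f (q.1.1, q.2 * q.1.2) (0, 1)) (p, s), PI (F := fun q : (ℝ × ℝ) × ℝ => fderiv ℝ f (q.1.1, q.2 * q.1.2) (0, 1)) ?_ 0 1, ?_⟩
  · refine ContDiff.clm_apply (hf.fd.comp (ContDiff.prodMk (contDiff_fst.comp contDiff_fst) (contDiff_snd.mul (contDiff_snd.comp contDiff_fst)))) contDiff_const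
  · intro x y
    have hd : ∀ s ∈ Set.uIcc (0:ℝ) 1, HasDerivAt (fun s => f (x, s * y)) (y * fderiv ℝ f (x, s * y) (0, 1)) s := by
      intro s _
      have h1 : HasDerivAt (fun s : ℝ => f (x, s * y)) _ s := HasDerivAt.comp (h₂ := fun y => f (x, y)) (h := fun s => s * y) s (fd2' hf (x, s * y)).2 ((hasDerivAt_id s).mul_const y)
      refine HasDerivAt.congr_deriv h1 ?_
      ring
    have hI := intervalIntegral.integral_eq_sub_of_hasDerivAt hd (by
      apply Continuous.intervalIntegrable
      have h1 := hf.fd.continuous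
      have h2 : Continuous (fun s : ℝ => fderiv ℝ f (x, s * y)) := h1.comp (by fun_prop)
      exact continuous_const.mul (h2.clm_apply continuous_const))
    simp only [zero_mul, one_mul, h0, sub_zero] at hI
    rw [← hI, intervalIntegral.integral_const_mul]
end Util

section NF
def lam2 (p : ℝ × ℝ) : Fin 2 → ℝ := ![p.1 ^ 2 - p.2, 2 * p.1]

lemma lam2_sm : Sm lam2 := by
  rw [Sm, contDiff_pi]
  intro i
  fin_cases i
  · exact (contDiff_fst.pow 2).sub contDiff_snd
  · exact contDiff_const.mul contDiff_fst

lemma lam2_zero : lam2 0 = 0 := by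
  funext i; fin_cases i <;> simp [lam2]

lemma PR2 (l : Fin 2 → ℝ) (t : ℝ) : PR l t = l 0 + l 1 * t + t ^ 2 := by
  simp [PR, Finset.sum_range_succ, co]

/-- the map `(s,v) ↦ (v - s, lam2 (s, v^2))` -/
def kap (p : ℝ × ℝ) : ℝ × (Fin 2 → ℝ) := (p.2 - p.1, lam2 (p.1, p.2 ^ 2))

lemma kap_sm : Sm kap :=
  (contDiff_snd.sub contDiff_fst).prodMk (lam2_sm.comp (contDiff_fst.prodMk (contDiff_snd.pow 2)))

lemma kap_tend : Tendsto kap (nhds 0) (nhds 0) := by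
  have h := kap_sm.continuous.tendsto 0
  have : kap 0 = 0 := by
    have := lam2_zero
    unfold kap
    simp
    exact this
  rwa [this] at h

lemma kap_PR (p : ℝ × ℝ) : PR (kap p).2 (kap p).1 = 0 := by
  rw [PR2]; simp [kap, lam2]; ring

lemma evenodd (g : ℝ → ℝ) (hg : Sm g) : ∃ a b : ℝ × ℝ → ℝ, Sm a ∧ Sm b ∧ a 0 = g 0 ∧
    ∀ᶠ p in nhds (0 : ℝ × ℝ), g (p.2 - p.1) = a (p.1, p.2 ^ 2) + b (p.1, p.2 ^ 2) * p.2 := by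
  obtain ⟨R, Q, hR, hQ, hE, -, h0, -⟩ := div_thm' 2 (by norm_num) g g hg hg 0 (by norm_num) (by simp)
  refine ⟨fun p => R 0 (lam2 p) - p.1 * R 1 (lam2 p), fun p => R 1 (lam2 p),
    ((hR 0).comp lam2_sm).sub (contDiff_fst.mul ((hR 1).comp lam2_sm)), (hR 1).comp lam2_sm, ?_, ?_⟩
  · simp [lam2_zero, h0 (by norm_num)]
  · filter_upwards [kap_tend.eventually hE] with p hp
    rw [kap_PR] at hp
    simp [Finset.sum_range_succ, kap] at hp
    rw [hp]; ring

lemma lam2_fd (v : ℝ × ℝ) : fderiv ℝ lam2 0 v = ![- v.2, 2 * v.1] := by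
  have h := hasFDerivAt_pi'.1 ((lam2_sm.df 0).hasFDerivAt)
  funext i
  have e : fderiv ℝ lam2 0 v i = fderiv ℝ (fun x => lam2 x i) 0 v := by
    rw [(h i).fderiv]; rfl
  rw [e]
  fin_cases i
  · have : Sm (fun x : ℝ × ℝ => x.1 ^ 2 - x.2) := (contDiff_fst.pow 2).sub contDiff_snd
    have := fd2 (p := 0) (a := 0) (b := -1) this (by simpa using (hasDerivAt_pow 2 (0:ℝ))) (by
      simpa using hasDerivAt_neg (0:ℝ)) v
    simp [lam2, this]
  · have : Sm (fun x : ℝ × ℝ => 2 * x.1) := contDiff_const.mul contDiff_fst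
    have := fd2 (p := 0) (a := 2) (b := 0) this (by simpa using (hasDerivAt_id (0:ℝ)).const_mul 2) (by
      simpa using (hasDerivAt_const (0:ℝ) (0:ℝ))) v
    simp [lam2, this]
    ring

lemma comp_lam2_fd {R : (Fin 2 → ℝ) → ℝ} (hR : Sm R) (v : ℝ × ℝ) : fderiv ℝ (fun p => R (lam2 p)) 0 v =
    - v.2 * fderiv ℝ R 0 (Pi.single 0 1) + 2 * v.1 * fderiv ℝ R 0 (Pi.single 1 1) := by
  have h : HasFDerivAt (fun p => R (lam2 p)) _ 0 := (hR.df (lam2 0)).hasFDerivAt.comp 0 (lam2_sm.df 0).hasFDerivAt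
  rw [h.fderiv, lam2_zero]
  simp only [ContinuousLinearMap.comp_apply, lam2_fd]
  have : (![- v.2, 2 * v.1] : Fin 2 → ℝ) = (- v.2) • Pi.single 0 1 + (2 * v.1) • Pi.single 1 1 := by
    funext i; fin_cases i <;> simp
  rw [this, map_add, map_smul, map_smul]
  simp

/-- averaged integral operator -/
def MI (i : ℕ) (U : ℝ × ℝ → ℝ) (p : ℝ × ℝ) : ℝ := ∫ τ in (0:ℝ)..1, τ ^ i * U (p.1, τ ^ 2 * p.2)

lemma MI_sm (i : ℕ) {U : ℝ × ℝ → ℝ} (hU : Sm U) : Sm (MI i U) := by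
  refine PI (F := fun q : (ℝ × ℝ) × ℝ => q.2 ^ i * U (q.1.1, q.2 ^ 2 * q.1.2)) ?_ 0 1
  exact (contDiff_snd.pow i).mul (hU.comp ((contDiff_fst.comp contDiff_fst).prodMk
    ((contDiff_snd.pow 2).mul (contDiff_snd.comp contDiff_fst))))

lemma MI_cont (i : ℕ) {U : ℝ × ℝ → ℝ} (hU : Sm U) (p : ℝ × ℝ) : Continuous (fun τ : ℝ => τ ^ i * U (p.1, τ ^ 2 * p.2)) := by
  have := hU.continuous
  fun_prop

lemma MI_zero (i : ℕ) (U : ℝ × ℝ → ℝ) : MI i U 0 = U 0 / (i + 1) := by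
  simp only [MI, Prod.fst_zero, Prod.snd_zero, mul_zero]
  rw [intervalIntegral.integral_mul_const, integral_pow]
  simp
  rw [show ((0:ℝ),(0:ℝ)) = 0 from rfl]
  ring

lemma MI_split (j : ℕ) {U V : ℝ × ℝ → ℝ} (hU : Sm U) (hV : Sm V) (p : ℝ × ℝ) :
    MI 2 (fun q => q.1 ^ j * U q + q.2 * V q) p = p.1 ^ j * MI 2 U p + p.2 * MI 4 V p := by
  unfold MI
  rw [← intervalIntegral.integral_const_mul, ← intervalIntegral.integral_const_mul, ← intervalIntegral.integral_add]
  · congr 1; funext τ; ring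
  · exact (continuous_const.mul (MI_cont 2 hU p)).intervalIntegrable _ _
  · exact (continuous_const.mul (MI_cont 4 hV p)).intervalIntegrable _ _

lemma fd01 {f : ℝ × ℝ → ℝ} (hf : Sm f) (v : R3) :
    fderiv ℝ (fun X : R3 => f (X 0, X 1)) 0 v = fderiv ℝ f 0 (v 0, v 1) := by
  let L : R3 →L[ℝ] ℝ × ℝ := (ContinuousLinearMap.proj 0).prod (ContinuousLinearMap.proj 1)
  have h : HasFDerivAt (fun X : R3 => f (X 0, X 1)) ((fderiv ℝ f (L 0)).comp L) 0 := (hf.df (L 0)).hasFDerivAt.comp 0 L.hasFDerivAt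
  rw [h.fderiv, map_zero]
  rfl

lemma sm01 {f : ℝ × ℝ → ℝ} (hf : Sm f) : Sm (fun X : R3 => f (X 0, X 1)) :=
  hf.comp ((sm_ap 0).prodMk (sm_ap 1))

def FF (A B C D : ℝ → ℝ) (p : ℝ × ℝ) : R3 := ![p.1, p.1 * B p.2 + A p.2, p.1 * C p.2 + D p.2]

def GG (q : ℝ × ℝ → ℝ) (p : ℝ × ℝ) : R3 := ![p.1, p.2 ^ 2, p.2 ^ 3 * q (p.1, p.2 ^ 2)]

lemma GG_sm {q : ℝ × ℝ → ℝ} (hq : Sm q) : Sm (GG q) :=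
  sm3 contDiff_fst (contDiff_snd.pow 2) ((contDiff_snd.pow 3).mul (hq.comp (contDiff_fst.prodMk (contDiff_snd.pow 2))))

theorem NF1 (k : ℕ) {A C D r Ah ρ : ℝ → ℝ} (hA : Sm A) (hC : Sm C) (hD : Sm D) (hAh : Sm Ah)
    (hρ : Sm ρ) (eA : ∀ᶠ t in nhds 0, A t = t ^ 2 * Ah t) (nA : Ah 0 ≠ 0)
    (er : ∀ᶠ t in nhds 0, r t = t ^ k * ρ t) (C0 : C 0 = 0) (dC : ∀ᶠ t in nhds 0, HasDerivAt C (r t) t)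
    (dD : ∀ᶠ t in nhds 0, HasDerivAt D (r t * deriv A t) t)
    (e o e' o' : ℝ × ℝ → ℝ) (he : Sm e) (ho : Sm o) (he' : Sm e') (ho' : Sm o')
    (heo : ∀ s v : ℝ, (v - s) ^ k = e (s, v ^ 2) + o (s, v ^ 2) * v)
    (heo' : ∀ s v : ℝ, (v - s) ^ (k+1) = e' (s, v ^ 2) + o' (s, v ^ 2) * v) :
    ∃ a b a' b' X Y : ℝ × ℝ → ℝ, Sm a ∧ Sm b ∧ Sm a' ∧ Sm b' ∧ Sm X ∧ Sm Y ∧ a 0 = ρ 0 ∧ Y 0 = Ah 0 ∧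
      AEquivAt (FF A id C D) 0 (GG (MI 2 (fun p => 2 * ((o' p * a' p + e' p * b' p) * X p + (o p * a p + e p * b p) * Y p)))) 0 := by
  obtain ⟨R, Q, hR, hQ, hE, hR0, -, hRd⟩ := div_thm' 2 (by norm_num) A Ah hA hAh 2 le_rfl eA
  have hR0d := hRd rfl 0
  have hR1d := hRd rfl 1
  obtain ⟨Ch, hCh, -, eC⟩ := prim k hρ C0 (by
    filter_upwards [dC, er] with t h1 h2
    rwa [← h2])
  obtain ⟨a, b, ha, hb, ha0, hab⟩ := evenodd ρ hρ
  obtain ⟨a', b', ha', hb', -, hab'⟩ := evenodd (fun t => Ch t - ρ t) (hCh.sub hρ)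
  let xx : ℝ × ℝ → ℝ := fun p => - R 1 (lam2 p)
  let YY : ℝ × ℝ → ℝ := fun p => R 0 (lam2 p)
  have hxx : Sm xx := ((hR 1).comp lam2_sm).neg
  have hYY : Sm YY := (hR 0).comp lam2_sm
  let X : ℝ × ℝ → ℝ := fun p => fderiv ℝ xx p (0, 1)
  let Y : ℝ × ℝ → ℝ := fun p => fderiv ℝ YY p (0, 1)
  have hX : Sm X := hxx.fd.clm_apply contDiff_const
  have hY : Sm Y := hYY.fd.clm_apply contDiff_const
  have fxx : ∀ v : ℝ × ℝ, fderiv ℝ xx 0 v = 2 * Ah 0 * v.1 + v.2 * fderiv ℝ (R 1) 0 (Pi.single 0 1) := by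
    intro v
    have : fderiv ℝ xx 0 v = - fderiv ℝ (fun p => R 1 (lam2 p)) 0 v := by
      rw [show xx = fun p => - R 1 (lam2 p) from rfl, fderiv_fun_neg]; rfl
    rw [this, comp_lam2_fd (hR 1)]
    have := hR1d.2
    simp at this
    rw [this]; ring
  have fYY : ∀ v : ℝ × ℝ, fderiv ℝ YY 0 v = Ah 0 * v.2 := by
    intro v
    rw [comp_lam2_fd (hR 0)]
    have h1 := hR0d.2
    have h2 := hR1d.1 0 (by norm_num)
    simp at h1 h2
    rw [h1, h2]; ring
  have hY0 : Y 0 = Ah 0 := by simp [Y, fYY]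
  have hxx0 : xx 0 = 0 := by simp [xx, lam2_zero, hR0 1]
  have hYY0 : YY 0 = 0 := by simp [YY, lam2_zero, hR0 0]
  -- basic identity
  have hid : ∀ᶠ p in nhds (0 : ℝ × ℝ), xx (p.1, p.2 ^ 2) * (p.2 - p.1) + A (p.2 - p.1) = YY (p.1, p.2 ^ 2) := by
    filter_upwards [kap_tend.eventually hE] with p hp
    rw [kap_PR] at hp
    simp [Finset.sum_range_succ, kap] at hp
    rw [hp]; simp only [xx, YY]; ring
  let K : ℝ × ℝ → ℝ := fun p => 2 * ((o' p * a' p + e' p * b' p) * X p + (o p * a p + e p * b p) * Y p)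
  let ke : ℝ × ℝ → ℝ := fun p => (e' p * a' p + p.2 * (o' p * b' p)) * X p + (e p * a p + p.2 * (o p * b p)) * Y p
  have hK : Sm K := contDiff_const.mul ((((ho'.mul ha').add (he'.mul hb')).mul hX).add (((ho.mul ha).add (he.mul hb)).mul hY))
  have hke : Sm ke := (((he'.mul ha').add (contDiff_snd.mul (ho'.mul hb'))).mul hX).add
    (((he.mul ha).add (contDiff_snd.mul (ho.mul hb))).mul hY)
  refine ⟨a, b, a', b', X, Y, ha, hb, ha', hb', hX, hY, ha0, hY0, ?_⟩
  change AEquivAt (FF A id C D) 0 (GG (MI 2 K)) 0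
  let E0 : ℝ × ℝ → ℝ := fun p => xx (p.1, 0) * C (-p.1) + D (-p.1) + p.2 * (2 * MI 1 ke p)
  have hE0 : Sm E0 := by
    have h1 : Sm (fun p : ℝ × ℝ => xx (p.1, 0)) := hxx.comp (contDiff_fst.prodMk contDiff_const)
    have h2 : Sm (fun p : ℝ × ℝ => -p.1) := contDiff_fst.neg
    exact ((h1.mul (hC.comp h2)).add (hD.comp h2)).add (contDiff_snd.mul (contDiff_const.mul (MI_sm 1 hke)))
  let Z : ℝ × ℝ → ℝ := fun p => xx (p.1, p.2 ^ 2) * C (p.2 - p.1) + D (p.2 - p.1)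
  have ht : Tendsto (fun p : ℝ × ℝ => p.2 - p.1) (nhds 0) (nhds 0) := by
    have : Continuous (fun p : ℝ × ℝ => p.2 - p.1) := by fun_prop
    simpa using this.tendsto 0
  have hder : ∀ᶠ p in nhds (0 : ℝ × ℝ), HasDerivAt (fun v => Z (p.1, v)) (2 * p.2 * ke (p.1, p.2 ^ 2) + p.2 ^ 2 * K (p.1, p.2 ^ 2)) p.2 := by
    filter_upwards [hid.eventually_nhds, ht.eventually dC, ht.eventually dD, ht.eventually er, ht.eventually eC, hab, hab'] with p h1 h2 h3 h4 h5 h6 h7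
    have hcv : ContinuousAt (fun v : ℝ => (p.1, v)) p.2 := by fun_prop
    have h1' : ∀ᶠ v in nhds p.2, xx (p.1, v ^ 2) * (v - p.1) + A (v - p.1) = YY (p.1, v ^ 2) := hcv.eventually h1
    have dsq : HasDerivAt (fun v : ℝ => v ^ 2) (2 * p.2) p.2 := by simpa using hasDerivAt_pow 2 p.2
    have dt : HasDerivAt (fun v : ℝ => v - p.1) 1 p.2 := (hasDerivAt_id p.2).sub_const p.1
    have dx : HasDerivAt (fun v : ℝ => xx (p.1, v ^ 2)) (X (p.1, p.2 ^ 2) * (2 * p.2)) p.2 :=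
      HasDerivAt.comp (h₂ := fun y => xx (p.1, y)) (h := fun v => v ^ 2) p.2 (fd2' hxx (p.1, p.2 ^ 2)).2 dsq
    have dy : HasDerivAt (fun v : ℝ => YY (p.1, v ^ 2)) (Y (p.1, p.2 ^ 2) * (2 * p.2)) p.2 :=
      HasDerivAt.comp (h₂ := fun y => YY (p.1, y)) (h := fun v => v ^ 2) p.2 (fd2' hYY (p.1, p.2 ^ 2)).2 dsq
    have dA : HasDerivAt (fun v : ℝ => A (v - p.1)) (deriv A (p.2 - p.1) * 1) p.2 :=
      HasDerivAt.comp (h₂ := A) (h := fun v => v - p.1) p.2 (hA.df _).hasDerivAt dt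
    have dCC : HasDerivAt (fun v : ℝ => C (v - p.1)) (r (p.2 - p.1) * 1) p.2 :=
      HasDerivAt.comp (h₂ := C) (h := fun v => v - p.1) p.2 h2 dt
    have dDD : HasDerivAt (fun v : ℝ => D (v - p.1)) ((r (p.2 - p.1) * deriv A (p.2 - p.1)) * 1) p.2 :=
      HasDerivAt.comp (h₂ := D) (h := fun v => v - p.1) p.2 h3 dt
    have hu := (((dx.mul dt).add dA).congr_of_eventuallyEq (h1'.mono fun v hv => hv.symm)).unique dy
    have hZ : HasDerivAt (fun v => Z (p.1, v)) _ p.2 := (dx.mul dCC).add dDD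
    refine hZ.congr_deriv ?_
    have e1 : r (p.2 - p.1) = (e (p.1, p.2 ^ 2) + o (p.1, p.2 ^ 2) * p.2) * (a (p.1, p.2 ^ 2) + b (p.1, p.2 ^ 2) * p.2) := by
      rw [h4, h6, heo]
    have e2 : C (p.2 - p.1) = (p.2 - p.1) * r (p.2 - p.1) + (e' (p.1, p.2 ^ 2) + o' (p.1, p.2 ^ 2) * p.2) * (a' (p.1, p.2 ^ 2) + b' (p.1, p.2 ^ 2) * p.2) := by
      rw [h5, h4, ← heo', ← h7]; ring
    rw [e2]
    have e3 : r (p.2 - p.1) * (xx (p.1, p.2 ^ 2) + deriv A (p.2 - p.1)) = r (p.2 - p.1) * (Y (p.1, p.2 ^ 2) * (2 * p.2) - X (p.1, p.2 ^ 2) * (2 * p.2) * (p.2 - p.1)) := by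
      rw [← hu]; ring
    simp only [K, ke]
    have e4 : Y (p.1, p.2 ^ 2) * (2 * p.2) * r (p.2 - p.1) = Y (p.1, p.2 ^ 2) * (2 * p.2) * ((e (p.1, p.2 ^ 2) + o (p.1, p.2 ^ 2) * p.2) * (a (p.1, p.2 ^ 2) + b (p.1, p.2 ^ 2) * p.2)) := by rw [e1]
    linear_combination e3 + e4
  have hZE : ∀ᶠ p in nhds (0 : ℝ × ℝ), Z p = p.2 ^ 3 * MI 2 K (p.1, p.2 ^ 2) + E0 (p.1, p.2 ^ 2) := by
    obtain ⟨ε, hε, hb⟩ := Metric.eventually_nhds_iff_ball.1 hder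
    filter_upwards [Metric.ball_mem_nhds (0 : ℝ × ℝ) hε] with p hp
    have hd : ∀ τ ∈ Set.uIcc (0:ℝ) 1, HasDerivAt (fun τ => Z (p.1, τ * p.2))
        (2 * p.2 ^ 2 * (τ ^ 1 * ke (p.1, τ ^ 2 * p.2 ^ 2)) + p.2 ^ 3 * (τ ^ 2 * K (p.1, τ ^ 2 * p.2 ^ 2))) τ := by
      intro τ hτ
      have hm : (p.1, τ * p.2) ∈ Metric.ball (0 : ℝ × ℝ) ε := by
        rw [Set.uIcc_of_le zero_le_one] at hτ
        simp [Prod.norm_def] at hp ⊢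
        refine ⟨hp.1, ?_⟩
        calc |τ| * |p.2| ≤ 1 * |p.2| := by gcongr; rw [abs_of_nonneg hτ.1]; exact hτ.2
          _ < ε := by simpa using hp.2
      have h1 : HasDerivAt (fun τ => Z (p.1, τ * p.2)) _ τ := HasDerivAt.comp (h₂ := fun v => Z (p.1, v)) (h := fun τ => τ * p.2) τ (hb _ hm) ((hasDerivAt_id τ).mul_const p.2)
      refine h1.congr_deriv ?_
      simp only [mul_pow]
      ring
    have c1 := MI_cont 1 hke (p.1, p.2 ^ 2)
    have c2 := MI_cont 2 hK (p.1, p.2 ^ 2)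
    have c1' : Continuous (fun τ : ℝ => 2 * p.2 ^ 2 * (τ ^ 1 * ke (p.1, τ ^ 2 * p.2 ^ 2))) := continuous_const.mul c1
    have c2' : Continuous (fun τ : ℝ => p.2 ^ 3 * (τ ^ 2 * K (p.1, τ ^ 2 * p.2 ^ 2))) := continuous_const.mul c2
    have hI := intervalIntegral.integral_eq_sub_of_hasDerivAt hd
      ((c1'.add c2').intervalIntegrable _ _)
    rw [intervalIntegral.integral_add (c1'.intervalIntegrable _ _) (c2'.intervalIntegrable _ _),
      intervalIntegral.integral_const_mul, intervalIntegral.integral_const_mul] at hI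
    change 2 * p.2 ^ 2 * MI 1 ke (p.1, p.2 ^ 2) + p.2 ^ 3 * MI 2 K (p.1, p.2 ^ 2) = _ at hI
    simp only [one_mul, zero_mul] at hI
    simp only [E0]
    have e0 : Z (p.1, 0) = xx (p.1, 0) * C (-p.1) + D (-p.1) := by simp [Z]
    rw [← e0]
    linear_combination -hI
  -- assemble
  have hsx : Sm (fun p : ℝ × ℝ => xx (p.1, p.2 ^ 2)) := hxx.comp (contDiff_fst.prodMk (contDiff_snd.pow 2))
  have hst : Sm (fun p : ℝ × ℝ => p.2 - p.1) := contDiff_snd.sub contDiff_fst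
  have hG := GG_sm (MI_sm 2 hK)
  have hG0 : GG (MI 2 K) 0 = 0 := by apply eq3 <;> simp [GG]
  refine AEquivAt.of_eq (fun p => (xx (p.1, p.2 ^ 2), p.2 - p.1))
    (fun X => ![xx (X 0, X 1), YY (X 0, X 1), X 2 + E0 (X 0, X 1)]) (ld2 hsx hst 0 ?_) ?_ ?_ hG.continuous.continuousAt ?_
  · intro v h1 h2
    have d0 := fd2' hxx 0
    rw [fxx, fxx] at d0
    simp at d0
    rw [fd2 (a := 2 * Ah 0) (b := 0) hsx (by simpa using d0.1) (by
      have : HasDerivAt (fun v : ℝ => xx (0, v ^ 2)) _ 0 := HasDerivAt.comp (h₂ := fun y => xx (0, y)) (h := fun v : ℝ => v ^ 2) 0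
        (by simpa using d0.2) (hasDerivAt_pow 2 (0:ℝ))
      simpa using this)] at h1
    rw [fd2 (a := -1) (b := 1) hst (by simpa using hasDerivAt_neg (0:ℝ)) (by simpa using hasDerivAt_id' (0:ℝ))] at h2
    have h1' : v.1 = 0 := by
      simp at h1
      exact h1.resolve_right nA
    have h2' : v.2 = 0 := by linarith
    exact Prod.ext h1' h2'
  · simp
    exact hxx0
  · rw [hG0]
    refine ld3 (sm01 hxx) (sm01 hYY) ((sm_ap 2).add (sm01 hE0)) 0 fun v h1 h2 h3 => ?_
    rw [fd01 hxx, fxx] at h1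
    rw [fd01 hYY, fYY] at h2
    have v1 : v 1 = 0 := by simpa [nA] using h2
    have v0 : v 0 = 0 := by simpa [nA, v1] using h1
    have : HasFDerivAt (fun X : R3 => X 2 + E0 (X 0, X 1)) _ 0 := (ContinuousLinearMap.proj (R := ℝ) (φ := fun _ : Fin 3 => ℝ) 2).hasFDerivAt.add ((sm01 hE0).df 0).hasFDerivAt
    rw [this.fderiv, add_apply, fd01 hE0, v0, v1, show ((0:ℝ),(0:ℝ)) = 0 from rfl, map_zero, add_zero] at h3
    have v2 : v 2 = 0 := h3
    exact eq3 v0 v1 v2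
  · filter_upwards [hid, hZE] with p h1 h2
    simp only [FF, GG, id]
    funext i
    fin_cases i
    · simp
    · simpa using h1
    · simpa using h2

end NF

section NFb

lemma GG_zero (q : ℝ × ℝ → ℝ) : GG q 0 = 0 := by apply eq3 <;> simp [GG]

lemma ev_ne {f : ℝ × ℝ → ℝ} (hf : Sm f) (h : f 0 ≠ 0) : ∀ᶠ p in nhds (0 : ℝ × ℝ), f p ≠ 0 :=
  hf.continuous.continuousAt.eventually_ne h

lemma glob_inv {f : ℝ × ℝ → ℝ} (hf : Sm f) (h : f 0 ≠ 0) : ∃ g : ℝ × ℝ → ℝ, Sm g ∧ g 0 ≠ 0 ∧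
    ∀ᶠ p in nhds (0 : ℝ × ℝ), f p * g p = 1 := by
  obtain ⟨g, hg, he⟩ := glob (fun p => (f p)⁻¹) 0 ((ev_ne hf h).mono fun p hp => hf.contDiffAt.inv hp)
  refine ⟨g, hg, ?_, ?_⟩
  · rw [he.self_of_nhds]; exact inv_ne_zero h
  · filter_upwards [he, ev_ne hf h] with p h1 h2
    rw [h1, mul_inv_cancel₀ h2]

lemma sqv_tend : Tendsto (fun p : ℝ × ℝ => (p.1, p.2 ^ 2)) (nhds 0) (nhds 0) := by
  have : Continuous (fun p : ℝ × ℝ => (p.1, p.2 ^ 2)) := by fun_prop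
  have h := this.tendsto 0
  simp at h
  exact h

lemma GG_final {q k i S : ℝ × ℝ → ℝ} (hq : Sm q) (hk : Sm k) (hi : Sm i) (hS : Sm S) (i0 : i 0 ≠ 0)
    (S0 : S 0 = 0) (dS : fderiv ℝ S 0 (1, 0) ≠ 0) (h : ∀ᶠ p in nhds (0 : ℝ × ℝ), q p * i p = k (S p, p.2)) :
    AEquivAt (GG q) 0 (GG k) 0 := by
  refine AEquivAt.symm' ?_ (GG_sm hk).continuous.continuousAt
  have hS2 : Sm (fun p : ℝ × ℝ => S (p.1, p.2 ^ 2)) := hS.comp (contDiff_fst.prodMk (contDiff_snd.pow 2))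
  have d0 := fd2' hS 0
  simp only [Prod.fst_zero, Prod.snd_zero] at d0
  refine AEquivAt.of_eq (fun p => (S (p.1, p.2 ^ 2), p.2)) (fun X => ![S (X 0, X 1), X 1, X 2 * i (X 0, X 1)])
    (ld2 hS2 contDiff_snd 0 ?_) (by simp; exact S0) ?_ (GG_sm hq).continuous.continuousAt ?_
  · intro v h1 h2
    rw [fd2 (a := fderiv ℝ S 0 (1,0)) (b := 0) hS2 (by simpa using d0.1) (by
      have : HasDerivAt (fun v : ℝ => S (0, v ^ 2)) _ 0 := HasDerivAt.comp (h₂ := fun y => S (0, y)) (h := fun v : ℝ => v ^ 2) 0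
        (by simpa using d0.2) (hasDerivAt_pow 2 (0:ℝ))
      simpa using this)] at h1
    have e : v.2 = 0 := by rw [fderiv_snd] at h2; exact h2
    simp at h1
    exact Prod.ext (h1.resolve_right dS) e
  · rw [GG_zero]
    refine ld3 (sm01 hS) (sm_ap 1) ((sm_ap 2).mul (sm01 hi)) 0 fun v h1 h2 h3 => ?_
    have v1 : v 1 = 0 := by
      have : HasFDerivAt (fun X : R3 => X 1) _ 0 := (ContinuousLinearMap.proj (R := ℝ) (φ := fun _ : Fin 3 => ℝ) 1).hasFDerivAt
      rw [this.fderiv] at h2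
      exact h2
    have v0 : v 0 = 0 := by
      rw [fd01 hS, v1] at h1
      have : ((v 0, 0) : ℝ × ℝ) = v 0 • ((1:ℝ), (0:ℝ)) := by simp
      rw [this, map_smul, smul_eq_mul] at h1
      exact (mul_eq_zero.1 h1).resolve_right dS
    have : HasFDerivAt (fun X : R3 => X 2 * i (X 0, X 1)) _ 0 := (ContinuousLinearMap.proj (R := ℝ) (φ := fun _ : Fin 3 => ℝ) 2).hasFDerivAt.mul ((sm01 hi).df 0).hasFDerivAt
    rw [this.fderiv] at h3
    simp at h3
    exact eq3 v0 v1 (h3.resolve_left i0)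
  · filter_upwards [sqv_tend.eventually h] with p hp
    simp only [GG]
    funext j
    fin_cases j
    · simp
    · simp
    · simp at hp ⊢
      rw [← hp]; ring

lemma sm_poly1 : Sm (fun p : ℝ × ℝ => p.1) := contDiff_fst
lemma sm_poly2 : Sm (fun p : ℝ × ℝ => p.2) := contDiff_snd

structure CED (k : ℕ) (A C D r Ah ρ : ℝ → ℝ) : Prop where
  hA : Sm A
  hC : Sm C
  hD : Sm D
  hAh : Sm Ah
  hρ : Sm ρ
  eA : ∀ᶠ t in nhds 0, A t = t ^ 2 * Ah t
  nA : Ah 0 ≠ 0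
  er : ∀ᶠ t in nhds 0, r t = t ^ k * ρ t
  nρ : ρ 0 ≠ 0
  C0 : C 0 = 0
  dC : ∀ᶠ t in nhds 0, HasDerivAt C (r t) t
  dD : ∀ᶠ t in nhds 0, HasDerivAt D (r t * deriv A t) t

theorem CED.edge {A C D r Ah ρ : ℝ → ℝ} (H : CED 1 A C D r Ah ρ) : AEquivAt (FF A id C D) 0 (GG fun _ => 1) 0 := by
  have p1 := sm_poly1
  have p2 := sm_poly2
  obtain ⟨a, b, a', b', X, Y, ha, hb, ha', hb', hX, hY, ha0, hY0, h⟩ := NF1 1 H.hA H.hC H.hD H.hAh H.hρ H.eA H.nA H.er H.C0 H.dC H.dD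
    (fun p => -p.1) (fun _ => 1) (fun p => p.1 ^ 2 + p.2) (fun p => -2 * p.1) (by unfold Sm; fun_prop) (by unfold Sm; fun_prop) (by unfold Sm; fun_prop) (by unfold Sm; fun_prop)
    (by intros; ring) (by intros; ring)
  refine h.trans' ?_
  set K : ℝ × ℝ → ℝ := fun p => 2 * ((-2 * p.1 * a' p + (p.1 ^ 2 + p.2) * b' p) * X p + (1 * a p + -p.1 * b p) * Y p) with hKd
  have hK : Sm K := by unfold Sm at *; fun_prop
  have hq := MI_sm 2 hK
  have q0 : MI 2 K 0 ≠ 0 := by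
    rw [MI_zero]
    have : K 0 = 2 * (a 0 * Y 0) := by simp [hKd]
    rw [this, ha0, hY0]
    have := H.nρ; have := H.nA
    positivity
  obtain ⟨i, hi, i0, he⟩ := glob_inv hq q0
  exact GG_final (S := fun p => p.1) hq contDiff_const hi contDiff_fst i0 rfl (by simp [fderiv_fst]) he

theorem CED.cross {A C D r Ah ρ : ℝ → ℝ} (H : CED 2 A C D r Ah ρ) : AEquivAt (FF A id C D) 0 (GG fun p => p.1) 0 := by
  have p1 := sm_poly1
  have p2 := sm_poly2
  obtain ⟨a, b, a', b', X, Y, ha, hb, ha', hb', hX, hY, ha0, hY0, h⟩ := NF1 2 H.hA H.hC H.hD H.hAh H.hρ H.eA H.nA H.er H.C0 H.dC H.dD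
    (fun p => p.1 ^ 2 + p.2) (fun p => -2 * p.1) (fun p => -(p.1 ^ 3 + 3 * p.1 * p.2)) (fun p => p.2 + 3 * p.1 ^ 2) (by unfold Sm; fun_prop) (by unfold Sm; fun_prop) (by unfold Sm; fun_prop) (by unfold Sm; fun_prop)
    (by intros; ring) (by intros; ring)
  refine h.trans' ?_
  let Ka : ℝ × ℝ → ℝ := fun p => 2 * ((3 * p.1 * a' p - (p.1 ^ 2 + 3 * p.2) * b' p) * X p + (-2 * a p + p.1 * b p) * Y p)
  let Kb : ℝ × ℝ → ℝ := fun p => 2 * (a' p * X p + b p * Y p)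
  have hKa : Sm Ka := by unfold Sm at *; fun_prop
  have hKb : Sm Kb := by unfold Sm at *; fun_prop
  have e : (fun p : ℝ × ℝ => 2 * (((p.2 + 3 * p.1 ^ 2) * a' p + -(p.1 ^ 3 + 3 * p.1 * p.2) * b' p) * X p + (-2 * p.1 * a p + (p.1 ^ 2 + p.2) * b p) * Y p))
      = fun p => p.1 ^ 1 * Ka p + p.2 * Kb p := by
    funext p; simp only [Ka, Kb]; ring
  rw [e]
  have hK : Sm (fun p : ℝ × ℝ => p.1 ^ 1 * Ka p + p.2 * Kb p) := by unfold Sm at *; fun_prop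
  have hq := MI_sm 2 hK
  refine GG_final (i := fun _ => 1) hq contDiff_fst contDiff_const hq one_ne_zero ?_ ?_ ?_
  · rw [MI_split 1 hKa hKb]; simp
  · have d0 := (fd2' hq 0).1
    simp only [MI_split 1 hKa hKb] at d0
    have d1 := (fd2' (MI_sm 2 hKa) 0).1
    simp only [Prod.fst_zero, Prod.snd_zero] at d0 d1
    have d2 := (hasDerivAt_id' (0:ℝ)).mul d1
    have d3 : HasDerivAt (fun s : ℝ => s ^ 1 * MI 2 Ka (s, 0) + 0 * MI 4 Kb (s, 0)) _ 0 :=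
      d2.congr_of_eventuallyEq (Eventually.of_forall fun s => by simp)
    rw [d0.unique d3]
    have : MI 2 Ka (0, 0) ≠ 0 := by
      have := MI_zero 2 Ka
      rw [show ((0:ℝ),(0:ℝ)) = 0 from rfl, this]
      have : Ka 0 = 2 * (-2 * a 0 * Y 0) := by simp [Ka]
      rw [this, ha0, hY0]
      have := H.nρ; have := H.nA
      have h3 := mul_ne_zero H.nρ H.nA
      intro h4; apply h3; push_cast at h4; linarith
    simpa using this
  · exact Eventually.of_forall fun p => by simp

theorem CED.s1 {A C D r Ah ρ : ℝ → ℝ} (H : CED 3 A C D r Ah ρ) : AEquivAt (FF A id C D) 0 (GG fun p => p.1 ^ 2 + p.2) 0 := by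
  have p1 := sm_poly1
  have p2 := sm_poly2
  obtain ⟨a, b, a', b', X, Y, ha, hb, ha', hb', hX, hY, ha0, hY0, h⟩ := NF1 3 H.hA H.hC H.hD H.hAh H.hρ H.eA H.nA H.er H.C0 H.dC H.dD
    (fun p => -(p.1 ^ 3 + 3 * p.1 * p.2)) (fun p => p.2 + 3 * p.1 ^ 2) (fun p => p.1 ^ 4 + 6 * p.1 ^ 2 * p.2 + p.2 ^ 2)
    (fun p => -4 * p.1 ^ 3 - 4 * p.1 * p.2) (by unfold Sm; fun_prop) (by unfold Sm; fun_prop) (by unfold Sm; fun_prop) (by unfold Sm; fun_prop)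
    (by intros; ring) (by intros; ring)
  refine h.trans' ?_
  let U1 : ℝ × ℝ → ℝ := fun p => 2 * ((-4 * p.1 * a' p + p.2 * b' p) * X p + (a p - 3 * p.1 * b p) * Y p)
  let U2 : ℝ × ℝ → ℝ := fun p => 2 * ((-4 * p.1 * a' p + (p.1 ^ 2 + 6 * p.2) * b' p) * X p + (3 * a p - p.1 * b p) * Y p)
  have hU1 : Sm U1 := by unfold Sm at *; fun_prop
  have hU2 : Sm U2 := by unfold Sm at *; fun_prop
  have e : (fun p : ℝ × ℝ => 2 * (((-4 * p.1 ^ 3 - 4 * p.1 * p.2) * a' p + (p.1 ^ 4 + 6 * p.1 ^ 2 * p.2 + p.2 ^ 2) * b' p) * X p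
      + ((p.2 + 3 * p.1 ^ 2) * a p + -(p.1 ^ 3 + 3 * p.1 * p.2) * b p) * Y p))
      = fun p => p.1 ^ 2 * U2 p + p.2 * U1 p := by
    funext p; simp only [U1, U2]; ring
  rw [e]
  have hK : Sm (fun p : ℝ × ℝ => p.1 ^ 2 * U2 p + p.2 * U1 p) := by unfold Sm at *; fun_prop
  have hq := MI_sm 2 hK
  have m1 := MI_sm 4 hU1
  have m2 := MI_sm 2 hU2
  have z1 : MI 4 U1 0 = 2 * (ρ 0 * Ah 0) / 5 := by
    rw [MI_zero]; simp [U1, ha0, hY0]; ring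
  have z2 : MI 2 U2 0 = 2 * (ρ 0 * Ah 0) := by
    rw [MI_zero]; simp [U2, ha0, hY0]; ring
  have hne : ρ 0 * Ah 0 ≠ 0 := mul_ne_zero H.nρ H.nA
  have n1 : MI 4 U1 0 ≠ 0 := by rw [z1]; intro h; apply hne; linarith
  obtain ⟨i, hi, i0, he⟩ := glob_inv m1 n1
  have hpos : 0 < MI 2 U2 0 * i 0 := by
    have h1 := he.self_of_nhds
    rw [z1] at h1
    rw [z2]
    linarith
  have hQ : Sm (fun p => MI 2 U2 p * i p) := m2.mul hi
  have hev : ∀ᶠ p in nhds (0 : ℝ × ℝ), 0 < MI 2 U2 p * i p := hQ.continuous.continuousAt.eventually (lt_mem_nhds hpos)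
  obtain ⟨T, hT, hTe⟩ := glob (fun p => Real.sqrt (MI 2 U2 p * i p)) 0 (hev.mono fun p hp => hQ.contDiffAt.sqrt hp.ne')
  refine GG_final (S := fun p => p.1 * T p) hq (by unfold Sm; fun_prop) hi (p1.mul hT) i0 (by simp) ?_ ?_
  · have d0 := (fd2' (p1.mul hT) 0).1
    have d1 := (fd2' hT 0).1
    simp only [Prod.fst_zero, Prod.snd_zero] at d0 d1
    have d2 := (hasDerivAt_id' (0:ℝ)).mul d1
    rw [d0.unique d2]
    have : T (0, 0) ≠ 0 := by
      have := hTe.self_of_nhds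
      rw [show ((0:ℝ),(0:ℝ)) = 0 from rfl, this]
      exact (Real.sqrt_pos.2 hpos).ne'
    simpa using this
  · filter_upwards [hev, hTe, he] with p h1 h2 h3
    rw [MI_split 2 hU2 hU1]
    simp only [mul_pow, h2]
    rw [Real.sq_sqrt h1.le]
    linear_combination p.2 * h3

end NFb

section SW

def SWm (x : ℝ × ℝ) : R3 := ![x.1, 4 * x.2 ^ 3 + 2 * x.1 * x.2, 3 * x.2 ^ 4 + x.1 * x.2 ^ 2]

lemma SWm_sm : Sm SWm := sm3 (by unfold Sm; fun_prop) (by unfold Sm; fun_prop) (by unfold Sm; fun_prop)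

lemma fd_line {E : Type} [NormedAddCommGroup E] [NormedSpace ℝ E] {f : E → ℝ} (hf : Sm f) {v : E} {d : ℝ}
    (h : HasDerivAt (fun τ : ℝ => f (τ • v)) d 0) : fderiv ℝ f 0 v = d := by
  have h1 : HasDerivAt (fun τ : ℝ => τ • v) v 0 := by
    simpa using (hasDerivAt_id (0:ℝ)).smul_const v
  have h2 : HasDerivAt (fun τ : ℝ => f (τ • v)) _ 0 := (hf.df ((0:ℝ) • v)).hasFDerivAt.comp_hasDerivAt (0:ℝ) h1
  rw [zero_smul] at h2
  exact h2.unique h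

lemma lineD (c : ℝ) {g : ℝ → ℝ} (hg : Differentiable ℝ g) {f : ℝ → ℝ} (h : ∀ τ, f τ = c * τ + τ ^ 2 * g τ) : HasDerivAt f c 0 := by
  have e : f = fun τ => c * τ + τ ^ 2 * g τ := funext h
  rw [e]
  have : HasDerivAt (fun τ => c * τ + τ ^ 2 * g τ) _ 0 := ((hasDerivAt_id' (0:ℝ)).const_mul c).add ((hasDerivAt_pow 2 (0:ℝ)).mul (hg 0).hasDerivAt)
  exact this.congr_deriv (by simp)

def lamS (p : R3 × ℝ) : Fin 4 → ℝ :=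
  ![p.2 ^ 4 + p.1 0 * p.2 ^ 2 - p.1 1 * p.2 + p.1 2, 4 * p.2 ^ 3 + 2 * p.1 0 * p.2 - p.1 1, 6 * p.2 ^ 2 + p.1 0, 4 * p.2]

lemma lamS_sm : Sm lamS := by
  have h0 : Sm (fun p : R3 × ℝ => p.1 0) := (sm_ap 0).comp contDiff_fst
  have h1 : Sm (fun p : R3 × ℝ => p.1 1) := (sm_ap 1).comp contDiff_fst
  have h2 : Sm (fun p : R3 × ℝ => p.1 2) := (sm_ap 2).comp contDiff_fst
  rw [Sm, contDiff_pi]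
  intro i
  unfold Sm at *
  fin_cases i <;> simp [lamS] <;> fun_prop

lemma lamS_zero : lamS 0 = 0 := by
  funext i; fin_cases i <;> simp [lamS]

lemma lamS_fd (p : R3 × ℝ) : fderiv ℝ lamS 0 p = ![p.1 2, - p.1 1, p.1 0, 4 * p.2] := by
  have h := hasFDerivAt_pi'.1 ((lamS_sm.df 0).hasFDerivAt)
  funext i
  have hs : ∀ i, Sm (fun x => lamS x i) := fun i => (contDiff_pi.1 lamS_sm) i
  have e : fderiv ℝ lamS 0 p i = fderiv ℝ (fun x => lamS x i) 0 p := by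
    rw [(h i).fderiv]; rfl
  rw [e]
  apply fd_line (hs i)
  fin_cases i
  · exact lineD (g := fun τ => τ ^ 2 * p.2 ^ 4 + τ * p.1 0 * p.2 ^ 2 - p.1 1 * p.2) _ (by fun_prop) fun τ => by simp [lamS]; ring
  · exact lineD (g := fun τ => τ * 4 * p.2 ^ 3 + 2 * p.1 0 * p.2) _ (by fun_prop) fun τ => by simp [lamS]; ring
  · exact lineD (g := fun τ => 6 * p.2 ^ 2) _ (by fun_prop) fun τ => by simp [lamS]; ring
  · exact lineD (g := fun τ => 0) _ (by fun_prop) fun τ => by simp [lamS]; ring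

lemma fd_sum4 {R : (Fin 4 → ℝ) → ℝ} (w : Fin 4 → ℝ) : fderiv ℝ R 0 w = w 0 * fderiv ℝ R 0 (Pi.single 0 1) +
    w 1 * fderiv ℝ R 0 (Pi.single 1 1) + w 2 * fderiv ℝ R 0 (Pi.single 2 1) + w 3 * fderiv ℝ R 0 (Pi.single 3 1) := by
  have : w = w 0 • Pi.single 0 1 + w 1 • Pi.single 1 1 + w 2 • Pi.single 2 1 + w 3 • Pi.single 3 1 := by
    funext i; fin_cases i <;> simp
  conv_lhs => rw [this]
  simp only [map_add, map_smul, smul_eq_mul]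

lemma fd_mul0 {E : Type} [NormedAddCommGroup E] [NormedSpace ℝ E] {f g : E → ℝ} (hf : Sm f) (hg : Sm g) (p w : E) :
    fderiv ℝ (fun l => f l * g l) p w = f p * fderiv ℝ g p w + g p * fderiv ℝ f p w := by
  have := (hf.df p).hasFDerivAt.mul (hg.df p).hasFDerivAt
  have h : HasFDerivAt (fun l => f l * g l) _ p := this
  rw [h.fderiv]
  simp

lemma PR4 (l : Fin 4 → ℝ) (t : ℝ) : PR l t = l 0 + l 1 * t + l 2 * t ^ 2 + l 3 * t ^ 3 + t ^ 4 := by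
  simp [PR, Finset.sum_range_succ, co]

theorem NFsw {A B C D Ah Bh : ℝ → ℝ} (hA : Sm A) (hB : Sm B) (hC : Sm C) (hD : Sm D) (hAh : Sm Ah) (hBh : Sm Bh)
    (eA : ∀ᶠ t in nhds 0, A t = t ^ 3 * Ah t) (nA : Ah 0 ≠ 0)
    (eB : ∀ᶠ t in nhds 0, B t = t ^ 1 * Bh t) (nB : Bh 0 ≠ 0) (C0 : C 0 = 0) (D0 : D 0 = 0)
    (dC : ∀ᶠ t in nhds 0, HasDerivAt C (t * deriv B t) t)
    (dD : ∀ᶠ t in nhds 0, HasDerivAt D (t * deriv A t) t) : AEquivAt (FF A B C D) 0 SWm 0 := by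
  let a : ℝ → ℝ := fun t => t * A t - D t
  let b : ℝ → ℝ := fun t => t * B t - C t
  have ha : Sm a := (contDiff_id.mul hA).sub hD
  have hb : Sm b := (contDiff_id.mul hB).sub hC
  have da : ∀ᶠ t in nhds 0, HasDerivAt a (A t) t := by
    filter_upwards [dD] with t h
    have : HasDerivAt a _ t := ((hasDerivAt_id' t).mul (hA.df t).hasDerivAt).sub h
    exact this.congr_deriv (by ring)
  have db : ∀ᶠ t in nhds 0, HasDerivAt b (B t) t := by
    filter_upwards [dC] with t h
    have : HasDerivAt b _ t := ((hasDerivAt_id' t).mul (hB.df t).hasDerivAt).sub h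
    exact this.congr_deriv (by ring)
  obtain ⟨ah, hah, ah0, eah⟩ := prim 3 (f := a) hAh (by simp [a, D0]) (by
    filter_upwards [da, eA] with t h1 h2
    rwa [← h2])
  obtain ⟨bh, hbh, bh0, ebh⟩ := prim 1 (f := b) hBh (by simp [b, C0]) (by
    filter_upwards [db, eB] with t h1 h2
    rwa [← h2])
  have na : ah 0 ≠ 0 := by rw [ah0]; positivity
  have nb : bh 0 ≠ 0 := by rw [bh0]; positivity
  obtain ⟨Ra, Qa, hRa, hQa, hEa, ra0, -, rad⟩ := div_thm' 4 (by norm_num) a ah ha hah 4 le_rfl eah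
  obtain ⟨Rb, Qb, hRb, hQb, hEb, rb0, rb2, -⟩ := div_thm' 4 (by norm_num) b bh hb hbh 2 (by norm_num) ebh
  have rb2 := rb2 (by norm_num)
  have rad := rad rfl
  have d00 : fderiv ℝ (Ra 0) 0 (Pi.single 0 1) = -ah 0 := (rad 0).2
  have d11 : fderiv ℝ (Ra 1) 0 (Pi.single 1 1) = -ah 0 := (rad 1).2
  have d22 : fderiv ℝ (Ra 2) 0 (Pi.single 2 1) = -ah 0 := (rad 2).2
  have d33 : fderiv ℝ (Ra 3) 0 (Pi.single 3 1) = -ah 0 := (rad 3).2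
  have d01 : fderiv ℝ (Ra 0) 0 (Pi.single 1 1) = 0 := (rad 1).1 0 (by decide)
  have d02 : fderiv ℝ (Ra 0) 0 (Pi.single 2 1) = 0 := (rad 2).1 0 (by decide)
  have d03 : fderiv ℝ (Ra 0) 0 (Pi.single 3 1) = 0 := (rad 3).1 0 (by decide)
  have d12 : fderiv ℝ (Ra 1) 0 (Pi.single 2 1) = 0 := (rad 2).1 1 (by decide)
  have d13 : fderiv ℝ (Ra 1) 0 (Pi.single 3 1) = 0 := (rad 3).1 1 (by decide)
  have d23 : fderiv ℝ (Ra 2) 0 (Pi.single 3 1) = 0 := (rad 3).1 2 (by decide)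
  have hne2 : ∀ᶠ l in nhds (0 : Fin 4 → ℝ), Rb 2 l ≠ 0 :=
    (hRb 2).continuous.continuousAt.eventually_ne (by rw [rb2]; exact nb)
  obtain ⟨i, hi, hie⟩ := glob (fun l => (Rb 2 l)⁻¹) 0 (hne2.mono fun l hl => (hRb 2).contDiffAt.inv hl)
  have i0 : i 0 ≠ 0 := by rw [hie.self_of_nhds, rb2]; exact inv_ne_zero nb
  -- the implicit function
  let Th : (Fin 4 → ℝ) → ℝ := fun l => Ra 3 l * Rb 2 l - Ra 2 l * Rb 3 l
  have hTh : Sm Th := ((hRa 3).mul (hRb 2)).sub ((hRa 2).mul (hRb 3))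
  have fTh : ∀ w, fderiv ℝ Th 0 w = bh 0 * fderiv ℝ (Ra 3) 0 w - Rb 3 0 * fderiv ℝ (Ra 2) 0 w := by
    intro w
    have h : HasFDerivAt Th _ 0 := (Sm.df ((hRa 3).mul (hRb 2)) 0).hasFDerivAt.sub (Sm.df ((hRa 2).mul (hRb 3)) 0).hasFDerivAt
    rw [h.fderiv]
    have e1 := fd_mul0 (hRa 3) (hRb 2) 0 w
    have e2 := fd_mul0 (hRa 2) (hRb 3) 0 w
    change fderiv ℝ (fun l => Ra 3 l * Rb 2 l) 0 w - fderiv ℝ (fun l => Ra 2 l * Rb 3 l) 0 w = _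
    rw [e1, e2, ra0 3 (by norm_num), ra0 2 (by norm_num), rb2]
    ring
  let M : R3 × ℝ → R3 × ℝ := fun p => (p.1, Th (lamS p))
  have hM : Sm M := contDiff_fst.prodMk (hTh.comp lamS_sm)
  have hMd : ∀ p, fderiv ℝ M 0 p = 0 → p = 0 := by
    intro p hp
    have h1 : HasFDerivAt (fun p => Th (lamS p)) _ 0 := (hTh.df (lamS 0)).hasFDerivAt.comp 0 (lamS_sm.df 0).hasFDerivAt
    have h2 : HasFDerivAt M _ 0 := hasFDerivAt_fst.prodMk h1
    rw [h2.fderiv] at hp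
    simp only [ContinuousLinearMap.prod_apply, Prod.mk_eq_zero] at hp
    obtain ⟨hp1, hp2⟩ := hp
    have hp1 : p.1 = 0 := hp1
    rw [ContinuousLinearMap.comp_apply, lamS_fd, lamS_zero, fTh, fd_sum4, fd_sum4 (R := Ra 2), hp1, d33, d23] at hp2
    simp at hp2
    rcases hp2 with h | h | h
    · exact absurd h nb
    · exact Prod.ext hp1 h
    · exact absurd h na
  obtain ⟨ψg, hψg, ψ0, -, hψr⟩ := inv_glob hM 0 hMd
  have hM0 : M 0 = 0 := by
    simp [M, lamS_zero, Th, ra0]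
  rw [hM0] at ψ0 hψr
  let ς : R3 → ℝ := fun X => (ψg (X, 0)).2
  have hς : Sm ς := contDiff_snd.comp (hψg.comp (contDiff_id.prodMk contDiff_const))
  have hX0 : Tendsto (fun X : R3 => (X, (0:ℝ))) (nhds 0) (nhds 0) := by
    have : Continuous (fun X : R3 => (X, (0:ℝ))) := by fun_prop
    exact this.tendsto 0
  have ς0 : ς 0 = 0 := by
    change (ψg 0).2 = 0
    rw [ψ0]; rfl
  let lam : R3 → Fin 4 → ℝ := fun X => lamS (X, ς X)
  have hlam : Sm lam := lamS_sm.comp (contDiff_id.prodMk hς)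
  have lam0 : lam 0 = 0 := by
    simp only [lam, ς0]; exact lamS_zero
  have hThz : ∀ᶠ X in nhds (0 : R3), Th (lam X) = 0 := by
    filter_upwards [hX0.eventually hψr] with X h1
    simp only [M, Prod.mk.injEq] at h1
    have : (X, ς X) = ψg (X, 0) := Prod.ext h1.1.symm rfl
    simp only [lam, this]
    exact h1.2
  have flam : ∀ v, ∃ c, fderiv ℝ lam 0 v = ![v 2, - v 1, v 0, 4 * c] := by
    intro v
    have h1 : HasFDerivAt (fun X : R3 => (X, ς X)) _ 0 := (hasFDerivAt_id (0:R3)).prodMk (hς.df 0).hasFDerivAt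
    have h2 : HasFDerivAt lam _ 0 := HasFDerivAt.comp (g := lamS) (0:R3) (lamS_sm.df ((0:R3), ς 0)).hasFDerivAt h1
    rw [h2.fderiv, ς0, show ((0:R3),(0:ℝ)) = 0 from rfl, ContinuousLinearMap.comp_apply, lamS_fd]
    exact ⟨_, rfl⟩
  let xl : (Fin 4 → ℝ) → ℝ := fun l => Ra 2 l * (- i l)
  let yl : (Fin 4 → ℝ) → ℝ := fun l => Ra 1 l + xl l * Rb 1 l
  let zl : (Fin 4 → ℝ) → ℝ := fun l => - (Ra 0 l + xl l * Rb 0 l)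
  have hxl : Sm xl := (hRa 2).mul hi.neg
  have hyl : Sm yl := (hRa 1).add (hxl.mul (hRb 1))
  have hzl : Sm zl := ((hRa 0).add (hxl.mul (hRb 0))).neg
  have xl0 : xl 0 = 0 := by simp [xl, ra0]
  have fxl : ∀ w, fderiv ℝ xl 0 w = - i 0 * fderiv ℝ (Ra 2) 0 w := by
    intro w
    rw [fd_mul0 (hRa 2) hi.neg, ra0 2 (by norm_num)]; ring
  have fyl : ∀ w, fderiv ℝ yl 0 w = fderiv ℝ (Ra 1) 0 w := by
    intro w
    have h : HasFDerivAt yl _ 0 := ((hRa 1).df 0).hasFDerivAt.add (Sm.df (hxl.mul (hRb 1)) 0).hasFDerivAt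
    rw [h.fderiv]
    change fderiv ℝ (Ra 1) 0 w + fderiv ℝ (fun l => xl l * Rb 1 l) 0 w = _
    rw [fd_mul0 hxl (hRb 1), xl0, rb0 1 (by norm_num)]; ring
  have fzl : ∀ w, fderiv ℝ zl 0 w = - fderiv ℝ (Ra 0) 0 w := by
    intro w
    have h : HasFDerivAt zl _ 0 := (((hRa 0).df 0).hasFDerivAt.add (Sm.df (hxl.mul (hRb 0)) 0).hasFDerivAt).neg
    rw [h.fderiv]
    change - (fderiv ℝ (Ra 0) 0 w + fderiv ℝ (fun l => xl l * Rb 0 l) 0 w) = _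
    rw [fd_mul0 hxl (hRb 0), xl0, rb0 0 (by norm_num)]; ring
  have fcomp : ∀ (f : (Fin 4 → ℝ) → ℝ), Sm f → ∀ v, fderiv ℝ (fun X => f (lam X)) 0 v = fderiv ℝ f 0 (fderiv ℝ lam 0 v) := by
    intro f hf v
    have h : HasFDerivAt (fun X => f (lam X)) _ 0 := (hf.df (lam 0)).hasFDerivAt.comp 0 (hlam.df 0).hasFDerivAt
    rw [h.fderiv, lam0]; rfl
  have SW0 : SWm 0 = 0 := by apply eq3 <;> simp [SWm]
  have hsx : Sm (fun p => xl (lam (SWm p))) := hxl.comp (hlam.comp SWm_sm)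
  have hst : Sm (fun p => p.2 - ς (SWm p)) := contDiff_snd.sub (hς.comp SWm_sm)
  have fSW : ∀ v, fderiv ℝ SWm 0 v = ![v.1, 0, 0] := by
    intro v
    have h := hasFDerivAt_pi'.1 ((SWm_sm.df 0).hasFDerivAt)
    have hs : ∀ i, Sm (fun x => SWm x i) := fun i => (contDiff_pi.1 SWm_sm) i
    funext j
    have e : fderiv ℝ SWm 0 v j = fderiv ℝ (fun x => SWm x j) 0 v := by
      rw [(h j).fderiv]; rfl
    rw [e]
    apply fd_line (hs j)
    fin_cases j
    · exact lineD (g := fun τ => 0) _ (by fun_prop) fun τ => by simp [SWm]; ring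
    · exact lineD (g := fun τ => 4 * τ * v.2 ^ 3 + 2 * v.1 * v.2) _ (by fun_prop) fun τ => by simp [SWm]; ring
    · exact lineD (g := fun τ => 3 * τ ^ 2 * v.2 ^ 4 + τ * v.1 * v.2 ^ 2) _ (by fun_prop) fun τ => by simp [SWm]; ring
  refine AEquivAt.of_eq (fun p => (xl (lam (SWm p)), p.2 - ς (SWm p)))
    (fun X => ![xl (lam X), yl (lam X), zl (lam X)]) (ld2 hsx hst 0 ?_) ?_ ?_ SWm_sm.continuous.continuousAt ?_
  · intro v h1 h2
    have e1 : HasFDerivAt (fun p => xl (lam (SWm p))) _ 0 := (Sm.df (hxl.comp hlam) (SWm 0)).hasFDerivAt.comp 0 (SWm_sm.df 0).hasFDerivAt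
    have e2 : HasFDerivAt (fun p : ℝ × ℝ => p.2 - ς (SWm p)) _ 0 := hasFDerivAt_snd.sub ((hς.df (SWm 0)).hasFDerivAt.comp 0 (SWm_sm.df 0).hasFDerivAt)
    rw [e1.fderiv, SW0, ContinuousLinearMap.comp_apply, fSW] at h1
    have h1' := fcomp xl hxl ![v.1, 0, 0]
    rw [show xl ∘ lam = fun X => xl (lam X) from rfl, h1'] at h1
    obtain ⟨c, hc⟩ := flam ![v.1, 0, 0]
    rw [hc, fxl, fd_sum4, d22, d23] at h1
    have v1 : v.1 = 0 := by simpa [i0, na] using h1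
    rw [e2.fderiv] at h2
    change v.2 - fderiv ℝ ς (SWm 0) (fderiv ℝ SWm 0 v) = 0 at h2
    rw [fSW, v1, show (![0, 0, 0] : R3) = 0 by apply eq3 <;> simp, map_zero, sub_zero] at h2
    exact Prod.ext v1 h2
  · simp [SW0, lam0, xl0, ς0]
  · rw [SW0]
    refine ld3 (hxl.comp hlam) (hyl.comp hlam) (hzl.comp hlam) 0 fun v h1 h2 h3 => ?_
    have h1 := (fcomp xl hxl v).symm.trans h1
    have h2 := (fcomp yl hyl v).symm.trans h2
    have h3 := (fcomp zl hzl v).symm.trans h3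
    obtain ⟨c, hc⟩ := flam v
    rw [hc, fzl, fd_sum4, d00, d01, d02, d03] at h3
    have v2 : v 2 = 0 := by simpa [na] using h3
    rw [hc, fyl, fd_sum4, d11, d12, d13, v2] at h2
    have v1 : v 1 = 0 := by simpa [na] using h2
    rw [hc, fxl, fd_sum4, d22, d23, v2, v1] at h1
    have v0 : v 0 = 0 := by simpa [na, i0] using h1
    exact eq3 v0 v1 v2
  · have tSW : Tendsto SWm (nhds 0) (nhds 0) := by
      have := SWm_sm.continuous.tendsto 0
      rwa [SW0] at this
    have tlam : Tendsto (fun p => lam (SWm p)) (nhds 0) (nhds 0) := by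
      have := (hlam.comp SWm_sm).continuous.tendsto 0
      simp only [Function.comp, SW0, lam0] at this
      exact this
    have tt : Tendsto (fun p => p.2 - ς (SWm p)) (nhds 0) (nhds 0) := by
      have := hst.continuous.tendsto 0
      simpa [SW0, ς0] using this
    have tl : Tendsto (fun p => (p.2 - ς (SWm p), lam (SWm p))) (nhds 0) (nhds 0) := tt.prodMk_nhds tlam
    filter_upwards [tl.eventually hEa.eventually_nhds, tl.eventually hEb.eventually_nhds, tt.eventually da, tt.eventually db,
      tSW.eventually hThz, tlam.eventually hie, tlam.eventually hne2] with p h1 h2 h3 h4 h5 h6 h7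
    set l := lam (SWm p) with hl
    set t := p.2 - ς (SWm p) with ht
    have hc : ContinuousAt (fun t : ℝ => (t, l)) t := by fun_prop
    have h1' := hc.eventually h1
    have h2' := hc.eventually h2
    have hi2 : i l * Rb 2 l = 1 := by rw [h6]; exact inv_mul_cancel₀ h7
    have z2 : xl l * Rb 2 l + Ra 2 l = 0 := by simp only [xl]; linear_combination (-Ra 2 l) * hi2
    have z3 : xl l * Rb 3 l + Ra 3 l = 0 := by
      simp only [xl, Th] at h5 ⊢; linear_combination (-Ra 3 l) * hi2 + i l * h5
    have P0 : PR l t = 0 := by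
      rw [PR4]
      simp [hl, ht, lam, lamS, SWm]
      ring
    have P1 : HasDerivAt (fun t => PR l t) 0 t := by
      have : (fun t => PR l t) = fun t => l 0 + l 1 * t + l 2 * t ^ 2 + l 3 * t ^ 3 + t ^ 4 := funext (PR4 l)
      rw [this]
      have := (((((hasDerivAt_id' t).const_mul (l 1)).const_add (l 0)).add ((hasDerivAt_pow 2 t).const_mul (l 2))).add
        ((hasDerivAt_pow 3 t).const_mul (l 3))).add (hasDerivAt_pow 4 t)
      refine HasDerivAt.congr_deriv this ?_
      simp [hl, ht, lam, lamS, SWm]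
      ring
    let G : ℝ → ℝ := fun t => (xl l * Qb (t, l) + Qa (t, l)) * PR l t + (yl l * t - zl l)
    have hG : ∀ᶠ t' in nhds t, xl l * b t' + a t' = G t' := by
      filter_upwards [h1', h2'] with t' g1 g2
      simp [Finset.sum_range_succ] at g1 g2
      rw [g1, g2]
      simp only [G, yl, zl]
      linear_combination t' ^ 2 * z2 + t' ^ 3 * z3
    have dQ : DifferentiableAt ℝ (fun t => xl l * Qb (t, l) + Qa (t, l)) t := by
      have q1 : Differentiable ℝ (fun t => Qb (t, l)) := hQb.df.comp (by fun_prop)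
      have q2 : Differentiable ℝ (fun t => Qa (t, l)) := hQa.df.comp (by fun_prop)
      exact ((q1 t).const_mul _).add (q2 t)
    have dG : HasDerivAt G _ t := (dQ.hasDerivAt.mul P1).add (((hasDerivAt_id' t).const_mul (yl l)).sub_const (zl l))
    have dL : HasDerivAt (fun t => xl l * b t + a t) (xl l * B t + A t) t := (h4.const_mul (xl l)).add h3
    have hu := (dL.congr_of_eventuallyEq (hG.mono fun t' ht' => ht'.symm)).unique dG
    have hv := hG.self_of_nhds
    rw [P0] at hu
    simp only [G, P0] at hv
    have e1 : xl l * B t + A t = yl l := by linear_combination hu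
    have e2 : xl l * C t + D t = zl l := by
      simp only [a, b] at hv
      linear_combination t * e1 - hv
    simp only [FF]
    funext j
    fin_cases j
    · simp
    · simpa using e1
    · simpa using e2
end SW

section FDATS

structure FDat (κs κd A B C D r l b m U V : ℝ → ℝ) : Prop where
  hs : Sm κs
  hd : Sm κd
  hA : Sm A
  hB : Sm B
  hC : Sm C
  hD : Sm D
  hr : Sm r
  hl : Sm l
  hb : Sm b
  hm : Sm m
  hU : Sm U
  hV : Sm V
  A0 : A 0 = 0
  B0 : B 0 = 0
  C0 : C 0 = 0
  D0 : D 0 = 0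
  r0 : r 0 = 0
  l0 : l 0 = 0
  b0 : b 0 ≠ 0
  m0 : m 0 ≠ 0
  U0 : U 0 ≠ 0
  V0 : V 0 ≠ 0
  dB : ∀ᶠ t in nhds 0, HasDerivAt B (b t) t
  dC : ∀ᶠ t in nhds 0, HasDerivAt C (r t * b t) t
  dA : ∀ᶠ t in nhds 0, HasDerivAt A (l t * m t) t
  dD : ∀ᶠ t in nhds 0, HasDerivAt D (r t * (l t * m t)) t
  dl : ∀ᶠ t in nhds 0, HasDerivAt l (κd t * V t) t
  dr : ∀ᶠ t in nhds 0, HasDerivAt r (κs t * U t) t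

lemma prim' (j : ℕ) {f g σ V : ℝ → ℝ} (hσ : Sm σ) (hV : Sm V) (h0 : f 0 = 0) (hf : ∀ᶠ t in nhds 0, HasDerivAt f (g t * V t) t)
    (hg : ∀ᶠ t in nhds 0, g t = t ^ j * σ t) :
    ∃ W : ℝ → ℝ, Sm W ∧ W 0 = σ 0 * V 0 / (j + 1) ∧ ∀ᶠ t in nhds 0, f t = t ^ (j + 1) * W t := by
  refine prim j (w := fun t => σ t * V t) (hσ.mul hV) h0 ?_
  filter_upwards [hf, hg] with t h1 h2
  rw [h2] at h1
  exact h1.congr_deriv (by ring)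

variable {κs κd A B C D r l b m U V : ℝ → ℝ}

lemma nz (j : ℕ) {a c d : ℝ} (ha : a ≠ 0) (hc : c ≠ 0) (h : d = a * c / ((j:ℝ) + 1)) : d ≠ 0 := by
  rw [h]
  have : (j:ℝ) + 1 ≠ 0 := by positivity
  exact div_ne_zero (mul_ne_zero ha hc) this

lemma FDat.r_ord (H : FDat κs κd A B C D r l b m U V) (j : ℕ) {σ : ℝ → ℝ} (hσ : Sm σ)
    (h : ∀ᶠ t in nhds 0, κs t = t ^ j * σ t) :
    ∃ W : ℝ → ℝ, Sm W ∧ (σ 0 ≠ 0 → W 0 ≠ 0) ∧ ∀ᶠ t in nhds 0, r t = t ^ (j + 1) * W t := by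
  obtain ⟨W, h1, h2, h3⟩ := prim' j hσ H.hU H.r0 H.dr h
  exact ⟨W, h1, fun h => nz j h H.U0 h2, h3⟩

lemma FDat.A_ord (H : FDat κs κd A B C D r l b m U V) (j : ℕ) {σ : ℝ → ℝ} (hσ : Sm σ)
    (h : ∀ᶠ t in nhds 0, κd t = t ^ j * σ t) :
    ∃ W : ℝ → ℝ, Sm W ∧ (σ 0 ≠ 0 → W 0 ≠ 0) ∧ ∀ᶠ t in nhds 0, A t = t ^ (j + 2) * W t := by
  obtain ⟨W, h1, h2, h3⟩ := prim' j hσ H.hV H.l0 H.dl h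
  obtain ⟨W', h4, h5, h6⟩ := prim' (j+1) h1 H.hm H.A0 H.dA h3
  exact ⟨W', h4, fun h => nz _ (nz j h H.V0 h2) H.m0 h5, h6⟩

lemma hasDer {f : ℝ → ℝ} (hf : Sm f) (t : ℝ) : HasDerivAt f (deriv f t) t := (hf.df t).hasDerivAt
lemma sm_der {f : ℝ → ℝ} (hf : Sm f) : Sm (deriv f) := (contDiff_infty_iff_deriv.1 hf).2

lemma tay0 {f : ℝ → ℝ} (hf : Sm f) : ∃ W, Sm W ∧ W 0 = f 0 ∧ ∀ᶠ t in nhds 0, f t = t ^ 0 * W t :=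
  ⟨f, hf, rfl, Eventually.of_forall fun t => by simp⟩

lemma tayS (j : ℕ) {f : ℝ → ℝ} (h0 : f 0 = 0) (hf : Sm f) {w : ℝ → ℝ} (hw : Sm w) (h : ∀ᶠ t in nhds 0, deriv f t = t ^ j * w t) :
    ∃ W, Sm W ∧ (w 0 ≠ 0 → W 0 ≠ 0) ∧ ∀ᶠ t in nhds 0, f t = t ^ (j + 1) * W t := by
  obtain ⟨W, h1, h2, h3⟩ := prim j (f := f) hw h0 (by
    filter_upwards [h] with t ht
    rw [← ht]; exact hasDer hf t)
  exact ⟨W, h1, fun h => by rw [h2]; exact div_ne_zero h (by positivity), h3⟩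

lemma tay1 {f : ℝ → ℝ} (hf : Sm f) (h0 : f 0 = 0) : ∃ W, Sm W ∧ (deriv f 0 ≠ 0 → W 0 ≠ 0) ∧ ∀ᶠ t in nhds 0, f t = t ^ 1 * W t := 
  tayS 0 h0 hf (sm_der hf) (Eventually.of_forall fun t => by simp)

lemma tay2 {f : ℝ → ℝ} (hf : Sm f) (h0 : f 0 = 0) (h1 : deriv f 0 = 0) :
    ∃ W, Sm W ∧ (deriv (deriv f) 0 ≠ 0 → W 0 ≠ 0) ∧ ∀ᶠ t in nhds 0, f t = t ^ 2 * W t := by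
  obtain ⟨w, a, b, c⟩ := tay1 (sm_der hf) h1
  obtain ⟨W, a', b', c'⟩ := tayS 1 h0 hf a c
  exact ⟨W, a', fun h => b' (b h), c'⟩

lemma tay3 {f : ℝ → ℝ} (hf : Sm f) (h0 : f 0 = 0) (h1 : deriv f 0 = 0) (h2 : deriv (deriv f) 0 = 0) :
    ∃ W, Sm W ∧ ∀ᶠ t in nhds 0, f t = t ^ 3 * W t := by
  obtain ⟨w, a, b, c⟩ := tay2 (sm_der hf) h1 h2
  obtain ⟨W, a', b', c'⟩ := tayS 2 h0 hf a c
  exact ⟨W, a', c'⟩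

/-- inverse function on the line -/
lemma inv1 {f : ℝ → ℝ} (hf : Sm f) (h0 : f 0 = 0) {d : ℝ} (hd : HasDerivAt f d 0) (nd : d ≠ 0) :
    ∃ β : ℝ → ℝ, Sm β ∧ β 0 = 0 ∧ deriv β 0 ≠ 0 ∧ ∀ᶠ t in nhds 0, f (β t) = t := by
  obtain ⟨β, h1, h2, h3, h4⟩ := inv_glob hf 0 (by
    intro v hv
    have e : fderiv ℝ f 0 v = v * d := by
      rw [hd.hasFDerivAt.fderiv]; simp
    rw [e] at hv
    simpa [nd] using hv)
  rw [h0] at h2 h4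
  refine ⟨β, h1, h2, ?_, h4⟩
  intro hz
  have a1 : HasDerivAt (fun t => f (β t)) (d * deriv β 0) 0 :=
    HasDerivAt.comp (h₂ := f) (h := β) 0 (by rw [h2]; exact hd) (hasDer h1 0)
  have a2 : HasDerivAt (fun t => f (β t)) 1 0 := (hasDerivAt_id' (0:ℝ)).congr_of_eventuallyEq h4
  have := a1.unique a2
  rw [hz] at this
  simp at this

lemma FF_cont (hA : Sm A) (hB : Sm B) (hC : Sm C) (hD : Sm D) : Sm (FF A B C D) := by
  refine sm3 ?_ ?_ ?_
  · exact contDiff_fst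
  · exact (contDiff_fst.mul (hB.comp contDiff_snd)).add (hA.comp contDiff_snd)
  · exact (contDiff_fst.mul (hC.comp contDiff_snd)).add (hD.comp contDiff_snd)

lemma reparam {β : ℝ → ℝ} (hA : Sm A) (hB : Sm B) (hC : Sm C) (hD : Sm D) (hβ : Sm β) (h0 : β 0 = 0) (h1 : deriv β 0 ≠ 0) :
    AEquivAt (FF A B C D) 0 (FF (fun t => A (β t)) (fun t => B (β t)) (fun t => C (β t)) (fun t => D (β t))) 0 := by
  refine AEquivAt.of_eq (fun x => (x.1, β x.2)) id ?_ (by simp [h0]) ?_ ?_ (Eventually.of_forall fun x => rfl)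
  · refine ld2 (f := fun x => x.1) (g := fun x => β x.2) contDiff_fst (hβ.comp contDiff_snd) 0 ?_
    intro v hv hw
    have e1 : HasFDerivAt (fun x : ℝ × ℝ => x.1) (ContinuousLinearMap.fst ℝ ℝ ℝ) 0 := hasFDerivAt_fst
    rw [e1.fderiv] at hv
    rw [fd2 (f := fun x => β x.2) (p := 0) (hβ.comp contDiff_snd) (a := 0) (b := deriv β 0) (by exact hasDerivAt_const (0:ℝ) (β 0)) (by exact hasDer hβ 0)] at hw
    simp at hv
    simp [h1] at hw
    exact Prod.ext hv hw
  · exact ⟨contDiffAt_id, id, contDiffAt_id, by simp, by simp⟩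
  · exact (FF_cont (hA.comp hβ) (hB.comp hβ) (hC.comp hβ) (hD.comp hβ)).continuous.continuousAt

lemma pull (k : ℕ) {f W β : ℝ → ℝ} (hW : Sm W) (hβ : Sm β) (h0 : β 0 = 0) (h1 : deriv β 0 ≠ 0)
    (h : ∀ᶠ t in nhds 0, f t = t ^ k * W t) : ∃ W', Sm W' ∧ (W 0 ≠ 0 → W' 0 ≠ 0) ∧ ∀ᶠ t in nhds 0, f (β t) = t ^ k * W' t := by
  obtain ⟨b, hb, nb, eb⟩ := tay1 hβ h0
  refine ⟨fun t => b t ^ k * W (β t), (hb.pow k).mul (hW.comp hβ), ?_, ?_⟩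
  · intro h
    beta_reduce
    rw [h0]
    exact mul_ne_zero (pow_ne_zero _ (nb h1)) h
  · have t : Tendsto β (nhds 0) (nhds 0) := by
      have := hβ.continuous.tendsto 0
      rwa [h0] at this
    filter_upwards [t.eventually h, eb] with t a1 a2
    rw [a1]
    nth_rw 1 [a2]
    ring

lemma compd {f g β : ℝ → ℝ} (hβ : Sm β) (h0 : β 0 = 0) (h : ∀ᶠ t in nhds 0, HasDerivAt f (g t) t) :
    ∀ᶠ t in nhds 0, HasDerivAt (fun t => f (β t)) (g (β t) * deriv β t) t := by
  have t : Tendsto β (nhds 0) (nhds 0) := by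
    have := hβ.continuous.tendsto 0
    rwa [h0] at this
  filter_upwards [t.eventually h] with t a1
  exact HasDerivAt.comp (h₂ := f) (h := β) t a1 (hasDer hβ t)

theorem FDat.ced (H : FDat κs κd A B C D r l b m U V) (j : ℕ) {σ : ℝ → ℝ} (hσ : Sm σ)
    (h : ∀ᶠ t in nhds 0, κs t = t ^ j * σ t) (h0 : σ 0 ≠ 0) (hd : κd 0 ≠ 0) :
    ∃ A' C' D' r' Ah ρ : ℝ → ℝ, CED (j+1) A' C' D' r' Ah ρ ∧ AEquivAt (FF A B C D) 0 (FF A' id C' D') 0 := by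
  obtain ⟨β, hβ, β0, nβ, hinv⟩ := inv1 H.hB H.B0 H.dB.self_of_nhds H.b0
  obtain ⟨ρ, hρ, nρ, eρ⟩ := H.r_ord j hσ h
  obtain ⟨ρ', hρ', nρ', eρ'⟩ := pull _ hρ hβ β0 nβ eρ
  obtain ⟨k, hk, k0, ek⟩ := tay0 H.hd
  obtain ⟨a, ha, na, ea⟩ := H.A_ord 0 hk ek
  obtain ⟨a', ha', na', ea'⟩ := pull _ ha hβ β0 nβ ea
  have d1 := compd hβ β0 H.dB
  have d2 := compd hβ β0 H.dC
  have d3 := compd hβ β0 H.dA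
  have d4 := compd hβ β0 H.dD
  have hb1 : ∀ᶠ t in nhds 0, b (β t) * deriv β t = 1 := by
    filter_upwards [d1, hinv.eventually_nhds] with t a1 a2
    exact a1.unique ((hasDerivAt_id' t).congr_of_eventuallyEq a2)
  refine ⟨fun t => A (β t), fun t => C (β t), fun t => D (β t), fun t => r (β t), a', ρ', 
    ⟨H.hA.comp hβ, H.hC.comp hβ, H.hD.comp hβ, ha', hρ', ea', na' (na (by rw [k0]; exact hd)), eρ', nρ' (nρ h0), ?_, ?_, ?_⟩, ?_⟩
  · simp [β0, H.C0]
  · filter_upwards [d2, hb1] with t a1 a2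
    exact a1.congr_deriv (by rw [mul_assoc, a2, mul_one])
  · filter_upwards [d3, d4] with t a1 a2
    rw [a1.deriv]
    exact a2.congr_deriv (by ring)
  · refine (reparam H.hA H.hB H.hC H.hD hβ β0 nβ).trans' ?_
    refine AEquivAt.of_eq id id ⟨contDiffAt_id, id, contDiffAt_id, by simp, by simp⟩ rfl
      ⟨contDiffAt_id, id, contDiffAt_id, by simp, by simp⟩ ?_ ?_
    · exact (FF_cont (H.hA.comp hβ) contDiff_id (H.hC.comp hβ) (H.hD.comp hβ)).continuous.continuousAt
    · have t : Tendsto (fun p : ℝ × ℝ => p.2) (nhds 0) (nhds 0) := continuous_snd.tendsto _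
      filter_upwards [t.eventually hinv] with p hp
      simp [FF, hp]

theorem FDat.sw (H : FDat κs κd A B C D r l b m U V) (hs : κs 0 ≠ 0) {σ : ℝ → ℝ} (hσ : Sm σ)
    (h : ∀ᶠ t in nhds 0, κd t = t ^ 1 * σ t) (h0 : σ 0 ≠ 0) : AEquivAt (FF A B C D) 0 SWm 0 := by
  obtain ⟨β, hβ, β0, nβ, hinv⟩ := inv1 H.hr H.r0 H.dr.self_of_nhds (mul_ne_zero hs H.U0)
  obtain ⟨a, ha, na, ea⟩ := H.A_ord 1 hσ h
  obtain ⟨a', ha', na', ea'⟩ := pull _ ha hβ β0 nβ ea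
  obtain ⟨c, hc, nc, ec⟩ := tay1 H.hB H.B0
  obtain ⟨c', hc', nc', ec'⟩ := pull _ hc hβ β0 nβ ec
  have d1 := compd hβ β0 H.dB
  have d2 := compd hβ β0 H.dC
  have d3 := compd hβ β0 H.dA
  have d4 := compd hβ β0 H.dD
  refine (reparam H.hA H.hB H.hC H.hD hβ β0 nβ).trans' ?_
  refine NFsw (H.hA.comp hβ) (H.hB.comp hβ) (H.hC.comp hβ) (H.hD.comp hβ) ha' hc' ea' (na' (na h0)) ec' (nc' (nc ?_)) ?_ ?_ ?_ ?_
  · rw [H.dB.self_of_nhds.deriv]; exact H.b0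
  · simp [β0, H.C0]
  · simp [β0, H.D0]
  · filter_upwards [d1, d2, hinv] with t a1 a2 a3
    rw [a1.deriv]
    refine a2.congr_deriv ?_
    rw [a3]; ring
  · filter_upwards [d3, d4, hinv] with t a1 a2 a3
    rw [a1.deriv]
    refine a2.congr_deriv ?_
    rw [a3]; ring
end FDATS

section NRFORM

lemma inv_d {f : ℝ → ℝ} (hf : Sm f) (h : f 0 ≠ 0) : ∃ g : ℝ → ℝ, Sm g ∧ (∀ᶠ t in nhds 0, f t * g t = 1) ∧
    ∀ d : ℝ → ℝ, (∀ t, HasDerivAt f (d t) t) → ∀ᶠ t in nhds 0, HasDerivAt g (- d t * g t ^ 2) t := by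
  have hn : ∀ᶠ t in nhds 0, f t ≠ 0 := hf.continuous.continuousAt.eventually_ne h
  obtain ⟨g, hg, he⟩ := glob (fun t => (f t)⁻¹) 0 (hn.mono fun t ht => hf.contDiffAt.inv ht)
  refine ⟨g, hg, ?_, ?_⟩
  · filter_upwards [hn, he] with t h1 h2
    rw [h2, mul_inv_cancel₀ h1]
  · intro d hd
    filter_upwards [hn, he.eventually_nhds] with t h1 h2
    have h3 : HasDerivAt (fun t => (f t)⁻¹) (-d t / f t ^ 2) t := (hd t).fun_inv h1
    refine (h3.congr_of_eventuallyEq h2).congr_deriv ?_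
    rw [h2.self_of_nhds]
    field_simp

/-- coordinates of a developable frame -/
structure Crd (s k a n T h : ℝ → ℝ) : Prop where
  ha : Sm a
  hn : Sm n
  hT : Sm T
  hh : Sm h
  da : ∀ t, HasDerivAt a (T t) t
  dn : ∀ t, HasDerivAt n (- k t * T t) t
  dT : ∀ t, HasDerivAt T (s t * h t + k t * n t) t
  dh : ∀ t, HasDerivAt h (- s t * T t) t

theorem mkF {s k a1 n1 T1 h1 a2 n2 T2 h2 a3 n3 T3 h3 : ℝ → ℝ} (hs : Sm s) (hk : Sm k)
    (K1 : Crd s k a1 n1 T1 h1) (K2 : Crd s k a2 n2 T2 h2) (K3 : Crd s k a3 n3 T3 h3)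
    (n10 : n1 0 = 1) (n20 : n2 0 = 0) (n30 : n3 0 = 0)
    (T10 : T1 0 = 0) (T20 : T2 0 = 1) (T30 : T3 0 = 0)
    (h10 : h1 0 = 0) (h20 : h2 0 = 0) (h30 : h3 0 = 1) (w0 : ℝ) (hw : w0 * k 0 = 1) :
    ∃ A B C D r l b m U V i1 : ℝ → ℝ, FDat s (deriv k) A B C D r l b m U V ∧ Sm i1 ∧ i1 0 = 1 ∧
    (∀ᶠ t in nhds 0, n1 t * i1 t = 1) ∧
    (∀ t, B t = n2 t * i1 t) ∧ (∀ t, C t = n3 t * i1 t) ∧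
    (∀ t, A t = a2 t - a2 0 + (a1 0 + w0 - a1 t) * B t) ∧ (∀ t, D t = a3 t - a3 0 + (a1 0 + w0 - a1 t) * C t) := by
  obtain ⟨i, hi, ei, di⟩ := inv_d K1.hn (by rw [n10]; exact one_ne_zero)
  have di := di _ K1.dn
  let p : ℝ → ℝ := fun t => T2 t * n1 t - n2 t * T1 t
  let o : ℝ → ℝ := fun t => T3 t * n1 t - n3 t * T1 t
  have p0 : p 0 = 1 := by simp [p, T20, n10, n20]
  have o0 : o 0 = 0 := by simp [o, T30, n30]
  have hp : Sm p := (K2.hT.mul K1.hn).sub (K2.hn.mul K1.hT)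
  have ho : Sm o := (K3.hT.mul K1.hn).sub (K3.hn.mul K1.hT)
  have dp : ∀ t, HasDerivAt p (s t * (h2 t * n1 t - n2 t * h1 t)) t := fun t =>
    (((K2.dT t).mul (K1.dn t)).sub ((K2.dn t).mul (K1.dT t))).congr_deriv (by ring)
  have dO : ∀ t, HasDerivAt o (s t * (h3 t * n1 t - n3 t * h1 t)) t := fun t =>
    (((K3.dT t).mul (K1.dn t)).sub ((K3.dn t).mul (K1.dT t))).congr_deriv (by ring)
  obtain ⟨q, hq, eq, dq⟩ := inv_d hp (by rw [p0]; exact one_ne_zero)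
  have dq := dq _ dp
  have i0 : i 0 = 1 := by have := ei.self_of_nhds; rwa [n10, one_mul] at this
  have q0 : q 0 = 1 := by have := eq.self_of_nhds; rwa [p0, one_mul] at this
  have hk0 : k 0 ≠ 0 := by rintro h; rw [h] at hw; simp at hw
  have hw0 : w0 ≠ 0 := by rintro h; rw [h] at hw; simp at hw
  let x : ℝ → ℝ := fun t => a1 0 + w0 - a1 t
  have hx : Sm x := contDiff_const.sub K1.ha
  have dx : ∀ t, HasDerivAt x (- T1 t) t := fun t => (K1.da t).const_sub _
  have x0 : x 0 = w0 := by simp [x]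
  have dk := hasDer hk
  have dB : ∀ᶠ t in nhds 0, HasDerivAt (fun t => n2 t * i t) (- k t * p t * i t ^ 2) t := by
    filter_upwards [ei, di] with t e1 e2
    refine ((K2.dn t).mul e2).congr_deriv ?_
    simp only [p]
    linear_combination (-k t * T2 t * i t) * (-e1) 
  have dC : ∀ᶠ t in nhds 0, HasDerivAt (fun t => n3 t * i t) (- k t * o t * i t ^ 2) t := by
    filter_upwards [ei, di] with t e1 e2
    refine ((K3.dn t).mul e2).congr_deriv ?_
    simp only [o]
    linear_combination (-k t * T3 t * i t) * (-e1) 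
  refine ⟨fun t => a2 t - a2 0 + x t * (n2 t * i t), fun t => n2 t * i t, fun t => n3 t * i t,
    fun t => a3 t - a3 0 + x t * (n3 t * i t), fun t => o t * q t, fun t => n1 t - k t * x t, 
    fun t => - k t * p t * i t ^ 2, fun t => p t * i t ^ 2,
    fun t => ((h3 t * n1 t - n3 t * h1 t) * p t - o t * (h2 t * n1 t - n2 t * h1 t)) * q t ^ 2,
    fun t => - x t, i, ?_, hi, i0, ei, fun _ => rfl, fun _ => rfl, fun _ => rfl, fun _ => rfl⟩
  refine 
   { hs := hs
     hd := sm_der hk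
     hA := (K2.ha.sub contDiff_const).add (hx.mul (K2.hn.mul hi))
     hB := K2.hn.mul hi
     hC := K3.hn.mul hi
     hD := (K3.ha.sub contDiff_const).add (hx.mul (K3.hn.mul hi))
     hr := ho.mul hq
     hl := K1.hn.sub (hk.mul hx)
     hb := (hk.neg.mul hp).mul (hi.pow 2)
     hm := hp.mul (hi.pow 2)
     hU := ((((K3.hh.mul K1.hn).sub (K3.hn.mul K1.hh)).mul hp).sub (ho.mul ((K2.hh.mul K1.hn).sub (K2.hn.mul K1.hh)))).mul (hq.pow 2)
     hV := hx.neg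
     A0 := by simp [n20]
     B0 := by simp [n20]
     C0 := by simp [n30]
     D0 := by simp [n30]
     r0 := by simp [o0]
     l0 := by simp only [n10, x0]; linarith
     b0 := by simp [p0, i0, hk0]
     m0 := by simp [p0, i0]
     U0 := by simp [p0, q0, h30, n10, n30, o0]
     V0 := by simp [x0, hw0]
     dB := dB
     dC := ?_
     dA := ?_
     dD := ?_
     dl := ?_
     dr := ?_ }
  · filter_upwards [dC, eq] with t h1 h2
    refine h1.congr_deriv ?_
    linear_combination (k t * o t * i t ^ 2) * h2
  · filter_upwards [dB, ei] with t h1 h2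
    have h3 : HasDerivAt (fun t => a2 t - a2 0 + x t * (n2 t * i t)) _ t := ((K2.da t).sub_const (a2 0)).add ((dx t).mul h1)
    refine h3.congr_deriv ?_
    simp only [p]
    linear_combination (-(T2 t * n1 t - n2 t * T1 t) * i t - T2 t ) * h2
  · filter_upwards [dC, ei, eq] with t h1 h2 h4
    have h3 : HasDerivAt (fun t => a3 t - a3 0 + x t * (n3 t * i t)) _ t := ((K3.da t).sub_const (a3 0)).add ((dx t).mul h1)
    refine h3.congr_deriv ?_
    have e : o t * q t * ((n1 t - k t * x t) * (p t * i t ^ 2)) = o t * ((n1 t - k t * x t) * i t ^ 2) * (p t * q t) := by ring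
    rw [e, h4]
    simp only [o]
    linear_combination (-(T3 t * n1 t - n3 t * T1 t) * i t - T3 t ) * h2
  · refine Eventually.of_forall fun t => ?_
    have h3 : HasDerivAt (fun t => n1 t - k t * x t) _ t := (K1.dn t).sub ((dk t).mul (dx t))
    exact h3.congr_deriv (by ring)
  · filter_upwards [dq, eq] with t g1 g2
    refine ((dO t).mul g1).congr_deriv ?_
    linear_combination (-(s t * (h3 t * n1 t - n3 t * h1 t) * q t)) * g2

lemma dot_basis {e1 e2 e3 : R3} (h11 : dot3 e1 e1 = 1) (h22 : dot3 e2 e2 = 1) (h33 : dot3 e3 e3 = 1)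
    (h12 : dot3 e1 e2 = 0) (h13 : dot3 e1 e3 = 0) (h23 : dot3 e2 e3 = 0) {v : R3} (h1 : dot3 v e1 = 0) (h2 : dot3 v e2 = 0)
    (h3 : dot3 v e3 = 0) : v = 0 := by
  let M : Matrix (Fin 3) (Fin 3) ℝ := Matrix.of ![e1, e2, e3]
  have h : M * M.transpose = 1 := by
    unfold dot3 at *
    ext i j
    fin_cases i <;> fin_cases j <;> simp [M, Matrix.mul_apply, Fin.sum_univ_three, Matrix.one_apply] <;> linarith
  have h' := mul_eq_one_comm.1 h
  have hv : M.mulVec v = 0 := by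
    unfold dot3 at *
    apply eq3 <;> simp [M, Matrix.mulVec, dotProduct, Fin.sum_univ_three] <;> linarith
  calc v = (M.transpose * M).mulVec v := by rw [h', Matrix.one_mulVec]
    _ = 0 := by rw [← Matrix.mulVec_mulVec, hv, Matrix.mulVec_zero]

lemma dot3_add (a b e : R3) : dot3 (a + b) e = dot3 a e + dot3 b e := by simp [dot3]; ring
lemma dot3_sub (a b e : R3) : dot3 (a - b) e = dot3 a e - dot3 b e := by simp [dot3]; ring
lemma dot3_smul (c : ℝ) (b e : R3) : dot3 (c • b) e = c * dot3 b e := by simp [dot3]; ring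
lemma dot3_comm (a b : R3) : dot3 a b = dot3 b a := by simp [dot3]; ring

lemma dot_sm {f : ℝ → R3} (hf : Sm f) (e : R3) (u : ℝ) : Sm (fun t => dot3 (f (u + t)) e) := by
  have h1 : Sm (fun t : ℝ => u + t) := contDiff_const.add contDiff_id
  have h (i : Fin 3) : Sm (fun t => f (u + t) i) := (sm_ap i).comp (hf.comp h1)
  exact (((h 0).mul contDiff_const).add ((h 1).mul contDiff_const)).add ((h 2).mul contDiff_const)

lemma dot_d {f : ℝ → R3} (hf : Sm f) (e : R3) (u t : ℝ) : HasDerivAt (fun t => dot3 (f (u + t)) e) (dot3 (deriv f (u + t)) e) t := by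
  have h1 : HasDerivAt (fun t : ℝ => f (u + t)) (deriv f (u + t)) t := by
    have := (hf.df (u + t)).hasDerivAt
    exact this.comp_const_add u t
  have h (i : Fin 3) := hasDerivAt_pi.1 h1 i
  exact (((h 0).mul_const (e 0)).add ((h 1).mul_const (e 1))).add ((h 2).mul_const (e 2))

lemma Om_ld {P e1 e2 e3 : R3} (h11 : dot3 e1 e1 = 1) (h22 : dot3 e2 e2 = 1) (h33 : dot3 e3 e3 = 1)
    (h12 : dot3 e1 e2 = 0) (h13 : dot3 e1 e3 = 0) (h23 : dot3 e2 e3 = 0) (q : R3) :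
    IsLocalDiffeoAt (fun X : R3 => P + (X 0 • e1 + X 1 • e2 + X 2 • e3)) q := by
  let pr (i : Fin 3) : R3 →L[ℝ] ℝ := ContinuousLinearMap.proj i
  let L : R3 →L[ℝ] R3 := (pr 0).smulRight e1 + (pr 1).smulRight e2 + (pr 2).smulRight e3
  have hL : ∀ X, L X = X 0 • e1 + X 1 • e2 + X 2 • e3 := fun X => rfl
  have e : (fun X : R3 => P + (X 0 • e1 + X 1 • e2 + X 2 • e3)) = fun X => P + L X := rfl
  rw [e]
  refine ld_of (contDiff_const.add L.contDiff) q fun v hv => ?_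
  have hd : HasFDerivAt (fun X => P + L X) L q := L.hasFDerivAt.const_add P
  rw [hd.fderiv, hL] at hv
  have h0 : ∀ e, dot3 (v 0 • e1 + v 1 • e2 + v 2 • e3) e = 0 := by intro e; rw [hv]; simp [dot3]
  have a1 := h0 e1
  have a2 := h0 e2
  have a3 := h0 e3
  simp only [dot3_add, dot3_smul, h11, h22, h33, h12, h13, h23, dot3_comm e2 e1, dot3_comm e3 e1, dot3_comm e3 e2] at a1 a2 a3
  apply eq3 <;> linarith

theorem NRform {γ h ν : ℝ → R3} {κs κν κt : ℝ → ℝ} (H : FrenetSetup γ h ν κs κν κt) (hdev : ∀ u, κt u = 0)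
    (u₀ w₀ : ℝ) (hsing : w₀ * κν u₀ = 1) : ∃ A B C D r l b m U V : ℝ → ℝ,
      FDat (fun t => κs (u₀ + t)) (fun t => deriv κν (u₀ + t)) A B C D r l b m U V ∧
      AEquivAt (NR γ ν) (u₀, w₀) (FF A B C D) 0 := by
  have hsh : Sm (fun t : ℝ => u₀ + t) := contDiff_const.add contDiff_id
  have hγ' : Sm (deriv γ) := (contDiff_infty_iff_deriv.1 H.smooth_γ).2
  have crd : ∀ e : R3, Crd (fun t => κs (u₀ + t)) (fun t => κν (u₀ + t)) (fun t => dot3 (γ (u₀ + t)) e) 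
      (fun t => dot3 (ν (u₀ + t)) e) (fun t => dot3 (deriv γ (u₀ + t)) e) (fun t => dot3 (h (u₀ + t)) e) := by
    intro e
    refine ⟨dot_sm H.smooth_γ e _, dot_sm H.smooth_ν e _, dot_sm hγ' e _, dot_sm H.smooth_h e _, dot_d H.smooth_γ e _, 
      fun t => (dot_d H.smooth_ν e _ t).congr_deriv ?_, fun t => (dot_d hγ' e _ t).congr_deriv ?_,
      fun t => (dot_d H.smooth_h e _ t).congr_deriv ?_⟩
    · rw [H.frenet_ν, hdev, zero_smul, sub_zero, dot3_smul]
    · rw [H.frenet_t, dot3_add, dot3_smul, dot3_smul]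
    · rw [H.frenet_h, hdev, zero_smul, add_zero, dot3_smul]
  have h11 := H.unit_ν u₀
  have h22 := H.unit_t u₀
  have h33 := H.unit_h u₀
  have h12 := H.orth_tν u₀
  have h13 := H.orth_hν u₀
  have h23 := H.orth_th u₀
  obtain ⟨A, B, C, D, r, l, b, m, U, V, i, hF, hi, i0, ei, eB, eC, eA, eD⟩ := mkF (H.smooth_κs.comp hsh) (H.smooth_κν.comp hsh)
    (crd (ν u₀)) (crd (deriv γ u₀)) (crd (h u₀)) (by simpa using h11) (by simpa [dot3_comm] using h12)
    (by simpa [dot3_comm] using h13) (by simpa using h12) (by simpa using h22) (by simpa using h23)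
    (by simpa using h13) (by simpa [dot3_comm] using h23) (by simpa using h33) w₀ (by simpa using hsing)
  simp only [add_zero] at eA eD
  have ek : deriv (κν ∘ fun t => u₀ + t) = fun t => deriv κν (u₀ + t) := by
    funext t
    exact deriv_comp_const_add κν u₀ t
  refine ⟨A, B, C, D, r, l, b, m, U, V, ?_, ?_⟩
  · rw [ek] at hF
    exact hF
  let a1 : ℝ → ℝ := fun t => dot3 (γ (u₀ + t)) (ν u₀)
  have ha1 : Sm a1 := (crd (ν u₀)).ha
  have hσ2 : Sm (fun p : ℝ × ℝ => (p.1 + (dot3 (γ u₀) (ν u₀) + w₀ - a1 p.2)) * i p.2) :=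
    (contDiff_fst.add (contDiff_const.sub (ha1.comp contDiff_snd))).mul (hi.comp contDiff_snd)
  refine AEquivAt.of_eq (fun p => (u₀ + p.2, (p.1 + (dot3 (γ u₀) (ν u₀) + w₀ - a1 p.2)) * i p.2))
    (fun X : R3 => (γ u₀ + w₀ • ν u₀) + (X 0 • ν u₀ + X 1 • deriv γ u₀ + X 2 • h u₀)) ?_ ?_ ?_ ?_ ?_
  · refine ld2 (f := fun p => u₀ + p.2) (contDiff_const.add contDiff_snd) hσ2 0 ?_
    intro v hv hw
    rw [fd2 (f := fun p => u₀ + p.2) (p := 0) (contDiff_const.add contDiff_snd) (a := 0) (b := 1) (by exact hasDerivAt_const (0:ℝ) (u₀ + 0)) 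
      (by exact (hasDerivAt_id' (0:ℝ)).const_add u₀)] at hv
    have hd2 := fd2' hσ2 0
    rw [fd2 hσ2 (p := 0) (a := i 0) (by
      have : HasDerivAt (fun s : ℝ => (s + (dot3 (γ u₀) (ν u₀) + w₀ - a1 0)) * i 0) (1 * i 0) 0 :=
        ((hasDerivAt_id' (0:ℝ)).add_const _).mul_const _
      exact this.congr_deriv (one_mul _)) 
      (DifferentiableAt.hasDerivAt (by
        refine DifferentiableAt.comp (g := fun p : ℝ × ℝ => (p.1 + (dot3 (γ u₀) (ν u₀) + w₀ - a1 p.2)) * i p.2) (f := fun s : ℝ => ((0:ℝ×ℝ).1, s)) _ (hσ2.df _) (by fun_prop)))] at hw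
    have hv2 : v.2 = 0 := by simpa using hv
    rw [hv2, i0] at hw
    have hv1 : v.1 = 0 := by simpa using hw
    exact Prod.ext hv1 hv2
  · simp [a1, i0]
  · exact Om_ld h11 h22 h33 (by rw [dot3_comm]; exact h12) (by rw [dot3_comm]; exact h13) h23 _
  · exact (FF_cont hF.hA hF.hB hF.hC hF.hD).continuous.continuousAt
  · have t : Tendsto (fun p : ℝ × ℝ => p.2) (nhds 0) (nhds 0) := continuous_snd.tendsto _
    filter_upwards [t.eventually ei] with p hp
    rw [← sub_eq_zero]
    have hp' := hp
    refine dot_basis h11 h22 h33 (by rw [dot3_comm]; exact h12) (by rw [dot3_comm]; exact h13) h23 ?_ ?_ ?_ <;>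
    simp only [NR, FF, dot3_add, dot3_sub, dot3_smul, h11, h22, h33, h12, h13, h23, dot3_comm (ν u₀) (deriv γ u₀), dot3_comm (ν u₀) (h u₀), dot3_comm (h u₀) (deriv γ u₀), eA, eB, eC, eD, a1, Matrix.cons_val]
    · linear_combination (p.1 + (dot3 (γ u₀) (ν u₀) + w₀ - dot3 (γ (u₀ + p.2)) (ν u₀))) * hp
    · ring
    · ring
end NRFORM

section INVARS
open Asymptotics

def Lo (k : ℕ) (f : ℝ × ℝ → R3) (p : ℝ × ℝ) : Prop := (fun x => ‖x - p‖ ^ k) =O[nhds p] (fun x => f x - f p)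

def Ct (k : ℕ) (f : ℝ × ℝ → R3) (p : ℝ × ℝ) : Prop := ∃ Ψ : R3 → ℝ, ContDiffAt ℝ (⊤ : ℕ∞) Ψ (f p) ∧
  fderiv ℝ Ψ (f p) ≠ 0 ∧ (fun x => Ψ (f x) - Ψ (f p)) =O[nhds p] (fun x => ‖x - p‖ ^ k)

lemma cd_O {E F : Type*} [NormedAddCommGroup E] [NormedSpace ℝ E] [NormedAddCommGroup F] [NormedSpace ℝ F] {f : E → F} {p : E}
    (h : ContDiffAt ℝ (⊤ : ℕ∞) f p) : (fun x => f x - f p) =O[nhds p] (fun x => x - p) :=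
  ((h.differentiableAt (by simp)).hasFDerivAt).isBigO_sub

lemma Lo.inv {k : ℕ} {f g : ℝ × ℝ → R3} {p q : ℝ × ℝ} (h : AEquivAt f p g q) (hg : ContinuousAt g q) (hf : ContinuousAt f p) (hL : Lo k f p) : Lo k g q := by
  obtain ⟨φ, Φ, hφ, e, hΦ, hh⟩ := h
  obtain ⟨φ', a1, a2, a3, a4⟩ := hφ.symm'
  obtain ⟨Φ', b1, b2, b3, b4⟩ := hΦ.symm'
  have eq : Φ (f p) = g q := by
    have := hh.self_of_nhds
    rwa [e] at this
  rw [e] at a1 a2 a4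
  rw [eq] at b1 b2 b4
  have tφ : Tendsto φ (nhds q) (nhds p) := by
    have := hφ.1.continuousAt.tendsto
    rwa [e] at this
  have c1 := (cd_O a1.1).comp_tendsto tφ
  have c2 := (cd_O b1.1).comp_tendsto hg.tendsto
  have c3 := hL.comp_tendsto tφ
  rw [a2] at c1
  rw [b2] at c2
  have d1 : (fun x => ‖x - q‖ ^ k) =O[nhds q] (fun x => ‖φ x - p‖ ^ k) := by
    refine (IsBigO.norm_norm (c1.congr' ?_ EventuallyEq.rfl)).pow k
    filter_upwards [a3] with x hx
    simp [hx]
  refine d1.trans (c3.trans (c2.congr' ?_ EventuallyEq.rfl))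
  have t2 : Tendsto (fun x => f (φ x)) (nhds q) (nhds (f p)) := hf.tendsto.comp tφ
  filter_upwards [hh, t2.eventually b3] with x hx hy
  simp [← hx, hy]

lemma Ct.inv {k : ℕ} {f g : ℝ × ℝ → R3} {p q : ℝ × ℝ} (h : AEquivAt f p g q) (hf : ContinuousAt f p) (hC : Ct k f p) : Ct k g q := by
  obtain ⟨φ, Φ, hφ, e, hΦ, hh⟩ := h
  obtain ⟨Φ', b1, b2, b3, b4⟩ := hΦ.symm'
  have eq : Φ (f p) = g q := by
    have := hh.self_of_nhds
    rwa [e] at this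
  rw [eq] at b1 b2 b4
  have tφ : Tendsto φ (nhds q) (nhds p) := by
    have := hφ.1.continuousAt.tendsto
    rwa [e] at this
  obtain ⟨Ψ, h1, h2, h3⟩ := hC
  have hcd : ContDiffAt ℝ (⊤ : ℕ∞) (fun y => Ψ (Φ' y)) (g q) :=
    ContDiffAt.comp (g := Ψ) (f := Φ') (g q) (by rw [b2]; exact h1) b1.1
  refine ⟨fun y => Ψ (Φ' y), hcd, ?_, ?_⟩
  · intro hz
    apply h2
    have d1 : HasFDerivAt (fun y => Ψ (Φ' y)) (0 : R3 →L[ℝ] ℝ) (Φ (f p)) := by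
      rw [eq, ← hz]; exact (hcd.differentiableAt (by simp)).hasFDerivAt
    have d2 := HasFDerivAt.comp (f p) d1 (hΦ.1.differentiableAt (by simp)).hasFDerivAt
    have d3 : HasFDerivAt Ψ _ (f p) := d2.congr_of_eventuallyEq (by
      filter_upwards [b3] with y hy
      simp [hy])
    rw [d3.fderiv]
    simp
  · have c1 := (cd_O hφ.1)
    rw [e] at c1
    have c2 := h3.comp_tendsto tφ
    refine IsBigO.trans (c2.congr' ?_ EventuallyEq.rfl) (c1.norm_norm.pow k)
    have t2 : Tendsto (fun x => f (φ x)) (nhds q) (nhds (f p)) := hf.tendsto.comp tφ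
    filter_upwards [hh, t2.eventually b3] with x hx hy
    simp [← hx, hy, b2]

lemma norm_pow_mono {j k : ℕ} (h : j ≤ k) : (fun x : ℝ × ℝ => ‖x - 0‖ ^ k) =O[nhds 0] (fun x => ‖x - 0‖ ^ j) := by
  refine IsBigO.of_bound 1 ?_
  filter_upwards [Metric.ball_mem_nhds (0 : ℝ × ℝ) one_pos] with x hx
  rw [mem_ball_zero_iff] at hx
  simp only [sub_zero, norm_pow, norm_norm, one_mul]
  exact pow_le_pow_of_le_one (norm_nonneg _) hx.le h

lemma Ct.mono {j k : ℕ} (h : j ≤ k) {f : ℝ × ℝ → R3} (hC : Ct k f 0) : Ct j f 0 := by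
  obtain ⟨Ψ, h1, h2, h3⟩ := hC
  exact ⟨Ψ, h1, h2, h3.trans (norm_pow_mono h)⟩

/-- lower bounds -/
lemma Lo_of {k : ℕ} {f : ℝ × ℝ → R3} (h0 : f 0 = 0) (h1 : (fun x : ℝ × ℝ => x.1 ^ k) =O[nhds 0] f)
    (h2 : (fun x : ℝ × ℝ => x.2 ^ k) =O[nhds 0] f) : Lo k f 0 := by
  have e : (fun x : ℝ × ℝ => ‖x - 0‖ ^ k) =O[nhds 0] (fun x : ℝ × ℝ => (x.1 ^ k, x.2 ^ k)) := by
    refine IsBigO.of_bound 1 (Eventually.of_forall fun x => ?_)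
    simp only [sub_zero, norm_pow, one_mul, Prod.norm_def]
    rcases max_choice ‖x.1‖ ‖x.2‖ with h | h <;> rw [h, norm_norm]
    · exact le_max_left _ _
    · exact le_max_right _ _
  unfold Lo
  rw [h0]
  simp only [sub_zero]
  simp only [sub_zero] at e
  exact e.trans (h1.prod_left h2)

lemma co_O {f : ℝ × ℝ → R3} (i : Fin 3) : (fun x => f x i) =O[nhds 0] f :=
  IsBigO.of_bound 1 (Eventually.of_forall fun x => by rw [one_mul]; exact norm_le_pi_norm (f x) i)

lemma one_O {h : ℝ × ℝ → ℝ} (hh : Continuous h) : h =O[nhds 0] (fun _ => (1:ℝ)) :=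
  (hh.tendsto 0).isBigO_one ℝ

lemma mul_O {h g : ℝ × ℝ → ℝ} {f : ℝ × ℝ → R3} (hh : Continuous h) (hg : g =O[nhds 0] f) : (fun x => h x * g x) =O[nhds 0] f := by
  have := (one_O hh).mul hg.norm_right
  simp only [one_mul] at this
  exact this.trans (isBigO_refl _ _).norm_left

lemma GG_Lo {q : ℝ × ℝ → ℝ} : Lo 2 (GG q) 0 := by
  refine Lo_of (GG_zero q) ?_ ?_
  · refine (mul_O (h := fun x => x.1) continuous_fst (co_O (f := GG q) 0)).congr_left fun x => ?_
    simp [GG]; ring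
  · exact (co_O (f := GG q) 1).congr_left fun x => by simp [GG]

lemma SW_zero : SWm 0 = 0 := by apply eq3 <;> simp [SWm]

lemma SW_Lo : Lo 3 SWm 0 := by
  refine Lo_of SW_zero ?_ ?_
  · refine (mul_O (h := fun x => x.1 ^ 2) (continuous_fst.pow 2) (co_O (f := SWm) 0)).congr_left fun x => ?_
    simp [SWm]; ring
  · have h1 := mul_O (h := fun x => -x.2/2) (by fun_prop) (co_O (f := SWm) 0)
    have h2 := mul_O (h := fun x => 1/4) (by fun_prop) (co_O (f := SWm) 1)
    refine (h1.add h2).congr_left fun x => ?_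
    simp [SWm]; ring

lemma notLo {k : ℕ} {f : ℝ × ℝ → R3} (h0 : f 0 = 0) (h : (fun t : ℝ => f (0, t)) =O[nhds 0] (fun t : ℝ => t ^ (k + 1))) : ¬ Lo k f 0 := by
  intro hL
  have t : Tendsto (fun t : ℝ => ((0 : ℝ), t)) (nhds 0) (nhds 0) := by
    have : Continuous (fun t : ℝ => ((0 : ℝ), t)) := by fun_prop
    exact this.tendsto 0
  have h1 := (hL.comp_tendsto t)
  rw [h0] at h1
  have h2 : (fun t : ℝ => t ^ k) =O[nhds 0] (fun t : ℝ => t ^ (k + 1)) := by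
    refine IsBigO.trans ?_ (IsBigO.trans h1 ?_)
    · refine IsBigO.of_bound 1 (Eventually.of_forall fun x => ?_)
      simp [Prod.norm_def]
    · simpa [Function.comp_def] using h
  have h3 : (fun t : ℝ => t ^ (k + 1)) =o[nhds 0] (fun t : ℝ => t ^ k) := isLittleO_pow_pow (by omega)
  have h4 := h2.trans_isLittleO h3
  have h5 := (isLittleO_iff.1 h4) (c := 1/2) (by norm_num)
  obtain ⟨ε, hε, hb⟩ := Metric.eventually_nhds_iff_ball.1 h5
  have := hb (ε/2) (by simp [abs_of_pos hε]; linarith)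
  have hp : 0 < ‖(ε/2)^k‖ := norm_pos_iff.2 (pow_ne_zero _ (by positivity))
  linarith

lemma SW_notLo : ¬ Lo 2 SWm 0 := by
  refine notLo SW_zero ?_
  refine isBigO_pi.2 fun i => ?_
  have c : ∀ g : ℝ → ℝ, Continuous g → (fun t : ℝ => g t * t ^ 3) =O[nhds 0] (fun t : ℝ => t ^ (2 + 1)) := fun g hg => by
    simpa using ((hg.tendsto 0).isBigO_one ℝ).mul (isBigO_refl (fun t : ℝ => t ^ 3) (nhds 0))
  fin_cases i
  · exact (c (fun _ => 0) (by fun_prop)).congr_left fun t => by simp [SWm]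
  · exact (c (fun _ => 4) (by fun_prop)).congr_left fun t => by simp [SWm]
  · exact (c (fun t => 3 * t) (by fun_prop)).congr_left fun t => by simp [SWm]; ring

variable {κs κd A B C D r l b m U V : ℝ → ℝ}

lemma FF_zero (H : FDat κs κd A B C D r l b m U V) : FF A B C D 0 = 0 := by
  apply eq3 <;> simp [FF, H.A0, H.D0]

lemma FF_Lo (H : FDat κs κd A B C D r l b m U V) (hd : κd 0 ≠ 0) : Lo 2 (FF A B C D) 0 := by
  obtain ⟨k, hk, k0, ek⟩ := tay0 H.hd
  obtain ⟨a, ha, na, ea⟩ := H.A_ord 0 hk ek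
  obtain ⟨i, hi, ei, -⟩ := inv_d ha (na (by rw [k0]; exact hd))
  refine Lo_of (FF_zero H) ?_ ?_
  · refine (mul_O (h := fun x => x.1) continuous_fst (co_O (f := FF A B C D) 0)).congr_left fun x => ?_
    simp [FF]; ring
  · have h1 := mul_O (h := fun x => - B x.2 * i x.2) ((H.hB.continuous.comp continuous_snd).neg.mul (hi.continuous.comp continuous_snd)) (co_O (f := FF A B C D) 0)
    have h2 := mul_O (h := fun x => i x.2) (hi.continuous.comp continuous_snd) (co_O (f := FF A B C D) 1)
    refine (h1.add h2).congr' ?_ EventuallyEq.rfl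
    have t : Tendsto (fun p : ℝ × ℝ => p.2) (nhds 0) (nhds 0) := continuous_snd.tendsto _
    filter_upwards [t.eventually ei, t.eventually ea] with x e1 e2
    simp only [FF, Matrix.cons_val]
    rw [e2]
    linear_combination x.2 ^ 2 * e1

lemma FF_notLo (H : FDat κs κd A B C D r l b m U V) (j : ℕ) {σ : ℝ → ℝ} (hσ : Sm σ)
    (h : ∀ᶠ t in nhds 0, κd t = t ^ j * σ t) : ¬ Lo (j + 1) (FF A B C D) 0 := by
  refine notLo (FF_zero H) ?_
  obtain ⟨L, hL, -, eL⟩ := prim' j hσ H.hV H.l0 H.dl h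
  obtain ⟨a, ha, -, ea⟩ := prim' (j+1) hL H.hm H.A0 H.dA eL
  obtain ⟨d, hd, -, ed⟩ := prim' (j+1) (g := l) (f := D) (V := fun t => m t * r t) hL (H.hm.mul H.hr) H.D0 
    (H.dD.mono fun t ht => ht.congr_deriv (by ring)) eL
  have c : ∀ g : ℝ → ℝ, Continuous g → (fun t : ℝ => g t * t ^ (j+1+1)) =O[nhds 0] (fun t : ℝ => t ^ (j + 1 + 1)) := fun g hg => by
    simpa using ((hg.tendsto 0).isBigO_one ℝ).mul (isBigO_refl (fun t : ℝ => t ^ (j+1+1)) (nhds 0))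
  refine isBigO_pi.2 fun i => ?_
  fin_cases i
  · exact (c (fun _ => 0) (by fun_prop)).congr_left fun t => by simp [FF]
  · refine (c a ha.continuous).congr' ?_ EventuallyEq.rfl
    filter_upwards [ea] with t ht
    simp [FF, ht]; ring
  · refine (c d hd.continuous).congr' ?_ EventuallyEq.rfl
    filter_upwards [ed] with t ht
    simp [FF, ht]; ring

lemma Ct_of {k : ℕ} {f : ℝ × ℝ → R3} (h0 : f 0 = 0) (h : (fun x => f x 2) =O[nhds 0] (fun x : ℝ × ℝ => ‖x - 0‖ ^ k)) : Ct k f 0 := by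
  have hd : ∀ y : R3, HasFDerivAt (fun x : R3 => x 2) (ContinuousLinearMap.proj 2 : R3 →L[ℝ] ℝ) y := fun y => 
    (ContinuousLinearMap.proj 2 : R3 →L[ℝ] ℝ).hasFDerivAt
  refine ⟨fun x => x 2, (sm_ap 2).contDiffAt, ?_, ?_⟩
  · rw [(hd _).fderiv]
    intro hz
    have := congrArg (fun L : R3 →L[ℝ] ℝ => L ![0,0,1]) hz
    simp at this
  · rw [h0]; simpa using h

lemma x1_O : (fun x : ℝ × ℝ => x.1) =O[nhds 0] (fun x : ℝ × ℝ => ‖x - 0‖) := by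
  refine IsBigO.of_bound 1 (Eventually.of_forall fun x => ?_)
  rw [one_mul, norm_norm, sub_zero]; exact norm_fst_le x
lemma x2_O : (fun x : ℝ × ℝ => x.2) =O[nhds 0] (fun x : ℝ × ℝ => ‖x - 0‖) := by
  refine IsBigO.of_bound 1 (Eventually.of_forall fun x => ?_)
  rw [one_mul, norm_norm, sub_zero]; exact norm_snd_le x

lemma FF_Ct (H : FDat κs κd A B C D r l b m U V) (j : ℕ) {σ : ℝ → ℝ} (hσ : Sm σ)
    (h : ∀ᶠ t in nhds 0, κs t = t ^ j * σ t) : Ct (j + 3) (FF A B C D) 0 := by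
  refine Ct_of (FF_zero H) ?_
  obtain ⟨R, hR, -, eR⟩ := H.r_ord j hσ h
  obtain ⟨c, hc, -, ec⟩ := prim' (j+1) hR H.hb H.C0 H.dC eR
  obtain ⟨L, hL, -, eL⟩ := tay1 H.hl H.l0
  obtain ⟨d, hd, -, ed⟩ := prim' (j+1+1) (g := fun t => r t * l t) (f := D) (V := m) (σ := fun t => R t * L t) (hR.mul hL) H.hm H.D0 
    (H.dD.mono fun t ht => ht.congr_deriv (by ring)) (by
      filter_upwards [eR, eL] with t e1 e2
      rw [e1, e2]; ring)
  have h1 := (one_O (hc.continuous.comp continuous_snd)).mul (x1_O.mul (x2_O.pow (j + 2)))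
  have h2 := (one_O (hd.continuous.comp continuous_snd)).mul (x2_O.pow (j + 3))
  have h3 : (fun x : ℝ × ℝ => 1 * (‖x - 0‖ * ‖x - 0‖ ^ (j + 2))) = fun x : ℝ × ℝ => 1 * ‖x - 0‖ ^ (j + 3) := by funext x; ring
  rw [h3] at h1
  refine (h1.add h2).congr' ?_ (Eventually.of_forall fun x => one_mul _)
  have t : Tendsto (fun p : ℝ × ℝ => p.2) (nhds 0) (nhds 0) := continuous_snd.tendsto _
  filter_upwards [t.eventually ec, t.eventually ed] with x e1 e2
  simp only [FF, Matrix.cons_val, e1, e2, Function.comp]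
  ring

lemma cross_Ct : Ct 4 (GG fun p => p.1) 0 := by
  refine Ct_of (GG_zero _) ?_
  have h := (x1_O.mul (x2_O.pow 3))
  refine h.congr (fun x => ?_) (fun x => ?_)
  · simp [GG]; ring
  · ring

lemma s1_Ct : Ct 5 (GG fun p => p.1 ^ 2 + p.2) 0 := by
  refine Ct_of (GG_zero _) ?_
  have h := ((x1_O.pow 2).mul (x2_O.pow 3)).congr_right (g₂ := fun x => ‖x - 0‖ ^ 5) (fun x => by ring)
  refine (h.add (x2_O.pow 5)).congr_left (fun x => ?_)
  simp [GG]; ring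
end INVARS

section NONCT
open Asymptotics

lemma o_zero {n : ℕ} {F : ℝ → ℝ} (hF : ContinuousAt F 0) (h : (fun s : ℝ => s ^ n * F s) =o[nhds 0] (fun s : ℝ => s ^ n)) : F 0 = 0 := by
  by_contra hne
  have h1 := (isLittleO_iff.1 h) (c := |F 0| / 2) (by positivity)
  have h2 : ∀ᶠ s in nhds 0, |F 0| / 2 < |F s| := hF.abs.eventually (lt_mem_nhds (by
    have : 0 < |F 0| := by positivity
    linarith))
  obtain ⟨ε, hε, hb⟩ := Metric.eventually_nhds_iff_ball.1 (h1.and h2)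
  obtain ⟨a1, a2⟩ := hb (ε/2) (by simp [abs_of_pos hε]; linarith)
  have hp : 0 < ‖(ε/2)^n‖ := norm_pos_iff.2 (pow_ne_zero _ (by positivity))
  rw [norm_mul, mul_comm] at a1
  have := le_of_mul_le_mul_right a1 hp
  rw [Real.norm_eq_abs] at this
  linarith

lemma pairL {Ψ : R3 → ℝ} (hΨ : ContDiffAt ℝ (⊤ : ℕ∞) Ψ 0) {a b w : ℝ → R3} (ha : Tendsto a (nhds 0) (nhds 0))
    (hb : Tendsto b (nhds 0) (nhds 0)) (hw : Continuous w) (n : ℕ) (h : ∀ s, a s - b s = s ^ n • w s)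
    (ho : (fun s => Ψ (a s) - Ψ (b s)) =o[nhds 0] (fun s : ℝ => s ^ n)) : fderiv ℝ Ψ 0 (w 0) = 0 := by
  have hs := (hΨ.hasStrictFDerivAt (by simp)).isLittleO
  have h1 := hs.comp_tendsto (ha.prodMk_nhds hb)
  have h2 : ((fun p : R3 × R3 => p.1 - p.2) ∘ fun s => (a s, b s)) =O[nhds 0] (fun s : ℝ => s ^ n) := by
    have := (isBigO_refl (fun s : ℝ => s ^ n) (nhds 0)).smul ((hw.tendsto 0).isBigO_one ℝ)
    refine this.congr (fun s => ?_) (fun s => ?_)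
    · simp [h]
    · simp
  have h3 := h1.trans_isBigO h2
  have h4 := ho.sub h3
  refine o_zero (n := n) (F := fun s => fderiv ℝ Ψ 0 (w s)) ?_ ?_
  · exact ((fderiv ℝ Ψ 0).continuous.comp hw).continuousAt
  · refine h4.congr_left fun s => ?_
    simp only [Function.comp, h, map_smul, smul_eq_mul]
    ring

lemma curO {k m : ℕ} {f : ℝ × ℝ → R3} {Ψ : R3 → ℝ} (h : (fun x => Ψ (f x) - Ψ (f 0)) =O[nhds 0] (fun x => ‖x - 0‖ ^ k))
    {c : ℝ → ℝ × ℝ} (hc : Continuous c) (c0 : c 0 = 0) (hm : c =O[nhds 0] (fun s => s ^ m)) :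
    (fun s => Ψ (f (c s)) - Ψ (f 0)) =O[nhds 0] (fun s => s ^ (m * k)) := by
  have t : Tendsto c (nhds 0) (nhds 0) := by
    have := hc.tendsto 0
    rwa [c0] at this
  refine (h.comp_tendsto t).trans ?_
  have := hm.norm_left.pow k
  refine this.congr (fun s => by simp) (fun s => by rw [← pow_mul])

lemma cur1 {a b : ℝ} : (fun s : ℝ => (a * s, b * s)) =O[nhds 0] (fun s : ℝ => s ^ 1) := by
  simp only [pow_one]
  exact (isBigO_const_mul_self a _ _).prod_left (isBigO_const_mul_self b _ _)

/-- two linear curves -/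
lemma pairC {k : ℕ} {f : ℝ × ℝ → R3} {Ψ : R3 → ℝ} (hf : Sm f) (f0 : f 0 = 0) (hΨ : ContDiffAt ℝ (⊤ : ℕ∞) Ψ 0)
    (h : (fun x => Ψ (f x) - Ψ (f 0)) =O[nhds 0] (fun x => ‖x - 0‖ ^ k)) (a b a' b' : ℝ) {n : ℕ} (hn : n < k)
    (w : ℝ → R3) (hw : Continuous w) (e : ∀ s, f (a * s, b * s) - f (a' * s, b' * s) = s ^ n • w s) : fderiv ℝ Ψ 0 (w 0) = 0 := by
  have hc : ∀ a b : ℝ, Continuous (fun s : ℝ => (a * s, b * s)) := fun a b => by fun_prop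
  have h1 := curO h (hc a b) (by simp) cur1
  have h2 := curO h (hc a' b') (by simp) cur1
  have ht : ∀ a b : ℝ, Tendsto (fun s => f (a * s, b * s)) (nhds 0) (nhds 0) := fun a b => by
    have := (hf.continuous.comp (hc a b)).tendsto 0
    simp only [Function.comp, mul_zero] at this
    rwa [show f (0,0) = 0 from f0] at this
  refine pairL hΨ (ht a b) (ht a' b') hw n e ?_
  refine IsBigO.trans_isLittleO ((h1.sub h2).congr_left fun s => ?_) (isLittleO_pow_pow (by omega))
  ring

lemma fd_zero {L : R3 →L[ℝ] ℝ} (h0 : L ![1,0,0] = 0) (h1 : L ![0,1,0] = 0) (h2 : L ![0,0,1] = 0) : L = 0 := by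
  ext v
  have e : v = v 0 • ![1,0,0] + v 1 • ![0,1,0] + v 2 • ![0,0,1] := by
    funext i; fin_cases i <;> simp
  rw [e, map_add, map_add, map_smul, map_smul, map_smul, h0, h1, h2]
  simp

lemma c3 {f g k : ℝ → ℝ} (hf : Continuous f) (hg : Continuous g) (hk : Continuous k) : Continuous (fun s => (![f s, g s, k s] : R3)) := by
  refine continuous_pi fun i => ?_
  fin_cases i <;> simpa

lemma GG_notCt {q : ℝ × ℝ → ℝ} (hq : Sm q) (k n : ℕ) (hk : 4 ≤ k) (hn : n < k) (a : ℝ) (w : ℝ → ℝ) (hw : Continuous w) (w0 : w 0 ≠ 0)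
    (h : ∀ s : ℝ, s ^ 3 * q (a * s, s ^ 2) = s ^ n * w s) : ¬ Ct k (GG q) 0 := by
  rintro ⟨Ψ, h1, h2, h3⟩
  rw [GG_zero] at h1 h2
  have hG := GG_sm hq
  have a0 := pairC hG (GG_zero q) h1 h3 1 0 0 0 (n := 1) (by omega) (fun _ => ![1,0,0]) continuous_const (by
    intro s; funext i; fin_cases i <;> simp [GG])
  have a1 := pairC hG (GG_zero q) h1 h3 0 1 0 0 (n := 2) (by omega) (fun s => ![0,1,s * q (0,s^2)])
    (c3 continuous_const continuous_const (continuous_id.mul (hq.continuous.comp (by fun_prop)))) (by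
    intro s; funext i; fin_cases i <;> simp [GG]; ring)
  have a2 := pairC hG (GG_zero q) h1 h3 a 1 a (-1) (n := n) hn (fun s => ![0,0,2 * w s])
    (c3 continuous_const continuous_const (continuous_const.mul hw)) (by
    intro s; funext i; fin_cases i
    · simp [GG]
    · simp [GG]
    · simp [GG]
      linear_combination 2 * h s)
  apply h2
  refine fd_zero a0 (by simpa using a1) ?_
  have e : (![0,0,2 * w 0] : R3) = (2 * w 0) • ![0,0,1] := by funext i; fin_cases i <;> simp
  rw [e, map_smul, smul_eq_mul] at a2
  simpa [w0] using a2

lemma edge_notCt : ¬ Ct 4 (GG fun _ => 1) 0 :=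
  GG_notCt contDiff_const 4 3 le_rfl (by norm_num) 0 (fun _ => 1) continuous_const one_ne_zero (fun s => by ring)

lemma cross_notCt : ¬ Ct 5 (GG fun p => p.1) 0 :=
  GG_notCt contDiff_fst 5 4 (by norm_num) (by norm_num) 1 (fun _ => 1) continuous_const one_ne_zero (fun s => by ring)

lemma s1_notCt : ¬ Ct 6 (GG fun p => p.1 ^ 2 + p.2) 0 :=
  GG_notCt ((contDiff_fst.pow 2).add contDiff_snd) 6 5 (by norm_num) (by norm_num) 0 (fun _ => 1) continuous_const one_ne_zero (fun s => by ring)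

lemma C2est {Ψ : R3 → ℝ} (hΨ : ContDiffAt ℝ (⊤ : ℕ∞) Ψ 0) : ∃ K ε : ℝ, 0 < ε ∧ 0 ≤ K ∧ ∀ ρ < ε, ∀ a b : R3, ‖a‖ ≤ ρ → ‖b‖ ≤ ρ →
    ‖Ψ a - Ψ b - fderiv ℝ Ψ 0 (a - b)‖ ≤ K * ρ * ‖a - b‖ := by
  have h2 : ContDiffAt ℝ 2 Ψ 0 := hΨ.of_le (WithTop.coe_le_coe.2 (le_top : (2 : ℕ∞) ≤ ⊤))
  have h1 : ContDiffAt ℝ 1 (fderiv ℝ Ψ) 0 := h2.fderiv_right (by norm_num)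
  have hO := (h1.differentiableAt (by simp)).hasFDerivAt.isBigO_sub
  obtain ⟨K, hK, hO⟩ := hO.exists_nonneg
  have hO := hO.bound
  have hdiff : ∀ᶠ z in nhds 0, DifferentiableAt ℝ Ψ z := (h2.eventually (by simp)).mono fun z hz => hz.differentiableAt (by simp)
  obtain ⟨ε, hε, hb⟩ := Metric.eventually_nhds_iff_ball.1 (hO.and hdiff)
  refine ⟨K, ε, hε, hK, fun ρ hρ a b ha hb' => ?_⟩
  have hd : ∀ z ∈ Metric.closedBall (0 : R3) ρ, HasFDerivWithinAt (fun z => Ψ z - fderiv ℝ Ψ 0 z) (fderiv ℝ Ψ z - fderiv ℝ Ψ 0) (Metric.closedBall (0 : R3) ρ) z := by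
    intro z hz
    have hz' : z ∈ Metric.ball (0 : R3) ε := Metric.closedBall_subset_ball hρ hz
    exact ((hb z hz').2.hasFDerivAt.sub (fderiv ℝ Ψ 0).hasFDerivAt).hasFDerivWithinAt
  have := (convex_closedBall (0 : R3) ρ).norm_image_sub_le_of_norm_hasFDerivWithin_le (C := K * ρ) hd (by
    intro z hz
    have hz' : z ∈ Metric.ball (0 : R3) ε := Metric.closedBall_subset_ball hρ hz
    refine ((hb z hz').1).trans ?_
    rw [sub_zero]
    exact mul_le_mul_of_nonneg_left (by simpa using hz) hK) (x := b) (y := a) (by simpa using hb') (by simpa using ha)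
  refine le_trans (le_of_eq ?_) this
  congr 1
  rw [map_sub]; ring

lemma SW_notCt : ¬ Ct 4 SWm 0 := by
  rintro ⟨Ψ, h1, h2, h3⟩
  rw [SW_zero] at h1 h2
  have a0 := pairC SWm_sm SW_zero h1 h3 1 0 0 0 (n := 1) (by omega) (fun _ => ![1,0,0]) continuous_const (by
    intro s; funext i; fin_cases i <;> simp [SWm])
  have a1 := pairC SWm_sm SW_zero h1 h3 1 1 1 0 (n := 2) (by omega) (fun s => ![0,2 + 4 * s, s + 3 * s ^ 2])
    (c3 (by fun_prop) (by fun_prop) (by fun_prop)) (by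
    intro s; funext i; fin_cases i <;> simp [SWm] <;> ring)
  have a1 : fderiv ℝ Ψ 0 ![0,1,0] = 0 := by
    have e : (![0,2 + 4 * (0:ℝ),0 + 3 * 0 ^ 2] : R3) = (2:ℝ) • ![0,1,0] := by funext i; fin_cases i <;> simp
    rw [e, map_smul, smul_eq_mul] at a1
    simpa using a1
  apply h2
  refine fd_zero a0 a1 ?_
  obtain ⟨K, ε, hε, hK, hest⟩ := C2est h1
  have O1 := curO (m := 2) h3 (c := fun s => (s ^ 3, s ^ 2)) (by fun_prop) (by simp) (by
    refine IsBigO.prod_left (isBigO_iff.2 ⟨1, ?_⟩) (isBigO_refl _ _)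
    filter_upwards [Metric.ball_mem_nhds (0 : ℝ) one_pos] with x hx
    rw [mem_ball_zero_iff] at hx
    rw [norm_pow, norm_pow, one_mul]
    exact pow_le_pow_of_le_one (norm_nonneg _) hx.le (by norm_num))
  have O2 := curO (m := 3) h3 (c := fun s => (s ^ 3, 0)) (by fun_prop) (by simp) (by
    refine IsBigO.prod_left (isBigO_refl _ _) (isBigO_zero _ _))
  have O3 : (fun s => Ψ (SWm (s ^ 3, s ^ 2)) - Ψ (SWm (s ^ 3, 0))) =o[nhds 0] (fun s : ℝ => s ^ 7) := by
    refine IsLittleO.congr_left ((O1.trans_isLittleO (isLittleO_pow_pow (by norm_num))).sub (O2.trans_isLittleO (isLittleO_pow_pow (by norm_num)))) fun s => ?_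
    ring
  have O4 : (fun s => Ψ (SWm (s ^ 3, s ^ 2)) - Ψ (SWm (s ^ 3, 0)) - fderiv ℝ Ψ 0 (SWm (s ^ 3, s ^ 2) - SWm (s ^ 3, 0))) =O[nhds 0] (fun s : ℝ => s ^ 8) := by
    refine IsBigO.of_bound (K * 6 * 6) ?_
    have hsm : ∀ᶠ s : ℝ in nhds 0, 6 * |s| ^ 3 < ε := by
      have : Continuous (fun s : ℝ => 6 * |s| ^ 3) := by fun_prop
      have := this.tendsto 0
      simp only [abs_zero] at this
      exact this.eventually (gt_mem_nhds (by simpa using hε))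
    filter_upwards [Metric.ball_mem_nhds (0 : ℝ) one_pos, hsm] with x hx hx2
    rw [mem_ball_zero_iff, Real.norm_eq_abs] at hx
    have hp : ∀ i j : ℕ, i ≤ j → |x| ^ j ≤ |x| ^ i := fun i j h => pow_le_pow_of_le_one (abs_nonneg _) hx.le h
    have hp0 : ∀ i : ℕ, 0 ≤ |x| ^ i := fun i => by positivity
    have bd : ∀ (c d : ℝ) (i j n : ℕ), 0 ≤ c → 0 ≤ d → c + d ≤ 6 → n ≤ i → n ≤ j → |c * x ^ i + d * x ^ j| ≤ 6 * |x| ^ n := by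
      intro c d i j n hc hd hcd hi hj
      refine (abs_add_le _ _).trans ?_
      rw [abs_mul, abs_mul, abs_pow, abs_pow, abs_of_nonneg hc, abs_of_nonneg hd]
      nlinarith [mul_le_mul_of_nonneg_left (hp n i hi) hc, mul_le_mul_of_nonneg_left (hp n j hj) hd, mul_le_mul_of_nonneg_right hcd (hp0 n)]
    have hA : ‖SWm (x ^ 3, x ^ 2)‖ ≤ 6 * |x| ^ 3 := by
      refine (pi_norm_le_iff_of_nonneg (by positivity)).2 fun i => ?_
      fin_cases i
      · simpa [SWm] using bd 1 0 3 3 3 (by norm_num) le_rfl (by norm_num) le_rfl le_rfl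
      · have := bd 4 2 6 5 3 (by norm_num) (by norm_num) (by norm_num) (by norm_num) (by norm_num)
        simp only [SWm, Real.norm_eq_abs]
        convert this using 2
        simp; ring
      · have := bd 3 1 8 7 3 (by norm_num) (by norm_num) (by norm_num) (by norm_num) (by norm_num)
        simp only [SWm, Real.norm_eq_abs]
        convert this using 2
        simp; ring
    have hB : ‖SWm (x ^ 3, 0)‖ ≤ 6 * |x| ^ 3 := by
      refine (pi_norm_le_iff_of_nonneg (by positivity)).2 fun i => ?_
      fin_cases i
      · simpa [SWm] using bd 1 0 3 3 3 (by norm_num) le_rfl (by norm_num) le_rfl le_rfl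
      · simp [SWm]
      · simp [SWm]
    have hAB : ‖SWm (x ^ 3, x ^ 2) - SWm (x ^ 3, 0)‖ ≤ 6 * |x| ^ 5 := by
      refine (pi_norm_le_iff_of_nonneg (by positivity)).2 fun i => ?_
      fin_cases i
      · simp [SWm]
      · have := bd 4 2 6 5 5 (by norm_num) (by norm_num) (by norm_num) (by norm_num) (by norm_num)
        simp only [SWm, Real.norm_eq_abs]
        convert this using 2
        simp; ring
      · have := bd 3 1 8 7 5 (by norm_num) (by norm_num) (by norm_num) (by norm_num) (by norm_num)
        simp only [SWm, Real.norm_eq_abs]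
        convert this using 2
        simp; ring
    refine (hest _ hx2 _ _ hA hB).trans ?_
    refine (mul_le_mul_of_nonneg_left hAB (by positivity)).trans (le_of_eq ?_)
    rw [norm_pow, Real.norm_eq_abs]; ring
  have O5 := O3.sub (O4.trans_isLittleO (isLittleO_pow_pow (by norm_num : 7 < 8)))
  have key := o_zero (n := 7) (F := fun s => (1 + 3 * s) * fderiv ℝ Ψ 0 ![0,0,1]) (by fun_prop) (O5.congr_left fun s => by
    have e : SWm (s ^ 3, s ^ 2) - SWm (s ^ 3, 0) = (4 * s ^ 6 + 2 * s ^ 5) • ![0,1,0] + (3 * s ^ 8 + s ^ 7) • ![0,0,1] := by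
      funext i; fin_cases i <;> simp [SWm] <;> ring
    rw [e, map_add, map_smul, map_smul, a1]
    simp only [smul_eq_mul]
    ring)
  simpa using key
end NONCT

section MAIN
variable {κs κd A B C D r l b m U V : ℝ → ℝ}

lemma FDat.main (H : FDat κs κd A B C D r l b m U V) :
    (AEquivAt (FF A B C D) 0 (GG fun _ => 1) 0 ↔ κs 0 * κd 0 ≠ 0) ∧
    (AEquivAt (FF A B C D) 0 SWm 0 ↔ (κs 0 ≠ 0 ∧ κd 0 = 0 ∧ deriv κd 0 ≠ 0)) ∧
    (AEquivAt (FF A B C D) 0 (GG fun p => p.1) 0 ↔ (κs 0 = 0 ∧ deriv κs 0 * κd 0 ≠ 0)) ∧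
    (AEquivAt (FF A B C D) 0 (GG fun p => p.1 ^ 2 + p.2) 0 ↔ (κs 0 = 0 ∧ deriv κs 0 = 0 ∧ deriv (deriv κs) 0 * κd 0 ≠ 0)) := by
  have cF : ContinuousAt (FF A B C D) 0 := (FF_cont H.hA H.hB H.hC H.hD).continuous.continuousAt
  have cG : ∀ {q : ℝ × ℝ → ℝ}, Sm q → ContinuousAt (GG q) 0 := fun hq => (GG_sm hq).continuous.continuousAt
  have cS : ContinuousAt SWm 0 := SWm_sm.continuous.continuousAt
  have q1 : Sm (fun _ : ℝ × ℝ => (1 : ℝ)) := contDiff_const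
  have q3 : Sm (fun p : ℝ × ℝ => p.1) := contDiff_fst
  have q4 : Sm (fun p : ℝ × ℝ => p.1 ^ 2 + p.2) := (contDiff_fst.pow 2).add contDiff_snd
  -- sufficiency
  have s1 : κs 0 ≠ 0 → κd 0 ≠ 0 → AEquivAt (FF A B C D) 0 (GG fun _ => 1) 0 := by
    intro h1 h2
    obtain ⟨k, hk, k0, ek⟩ := tay0 H.hs
    obtain ⟨_, _, _, _, _, _, hc, he⟩ := H.ced 0 hk ek (by rw [k0]; exact h1) h2
    exact he.trans' hc.edge
  have s3 : κs 0 = 0 → deriv κs 0 ≠ 0 → κd 0 ≠ 0 → AEquivAt (FF A B C D) 0 (GG fun p => p.1) 0 := by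
    intro h0 h1 h2
    obtain ⟨k, hk, k0, ek⟩ := tay1 H.hs h0
    obtain ⟨_, _, _, _, _, _, hc, he⟩ := H.ced 1 hk ek (k0 h1) h2
    exact he.trans' hc.cross
  have s4 : κs 0 = 0 → deriv κs 0 = 0 → deriv (deriv κs) 0 ≠ 0 → κd 0 ≠ 0 → AEquivAt (FF A B C D) 0 (GG fun p => p.1 ^ 2 + p.2) 0 := by
    intro h0 h0' h1 h2
    obtain ⟨k, hk, k0, ek⟩ := tay2 H.hs h0 h0'
    obtain ⟨_, _, _, _, _, _, hc, he⟩ := H.ced 2 hk ek (k0 h1) h2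
    exact he.trans' hc.s1
  have s2 : κs 0 ≠ 0 → κd 0 = 0 → deriv κd 0 ≠ 0 → AEquivAt (FF A B C D) 0 SWm 0 := by
    intro h0 h1 h2
    obtain ⟨k, hk, k0, ek⟩ := tay1 H.hd h1
    exact H.sw h0 hk ek (k0 h2)
  -- necessity
  have n1 : ∀ {q : ℝ × ℝ → ℝ}, Sm q → AEquivAt (FF A B C D) 0 (GG q) 0 → κd 0 ≠ 0 := by
    intro q hq h h0
    obtain ⟨k, hk, k0, ek⟩ := tay1 H.hd h0
    exact FF_notLo H 1 hk ek (Lo.inv (h.symm' cF) cF (cG hq) GG_Lo)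
  have c4 : κs 0 = 0 → Ct 4 (FF A B C D) 0 := by
    intro h0
    obtain ⟨k, hk, k0, ek⟩ := tay1 H.hs h0
    exact FF_Ct H 1 hk ek
  have c5 : κs 0 = 0 → deriv κs 0 = 0 → Ct 5 (FF A B C D) 0 := by
    intro h0 h1
    obtain ⟨k, hk, k0, ek⟩ := tay2 H.hs h0 h1
    exact FF_Ct H 2 hk ek
  have c6 : κs 0 = 0 → deriv κs 0 = 0 → deriv (deriv κs) 0 = 0 → Ct 6 (FF A B C D) 0 := by
    intro h0 h1 h2
    obtain ⟨k, hk, ek⟩ := tay3 H.hs h0 h1 h2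
    exact FF_Ct H 3 hk ek
  have m4 : Ct 4 (FF A B C D) 0 → κd 0 ≠ 0 → κs 0 = 0 := by
    intro h hd
    by_contra h0
    exact edge_notCt (h.inv (s1 h0 hd) cF)
  have m5 : Ct 5 (FF A B C D) 0 → κd 0 ≠ 0 → κs 0 = 0 ∧ deriv κs 0 = 0 := by
    intro h hd
    have h0 := m4 (h.mono (by norm_num)) hd
    refine ⟨h0, ?_⟩
    by_contra h1
    exact cross_notCt (h.inv (s3 h0 h1 hd) cF)
  refine ⟨⟨fun h => ?_, fun h => s1 (left_ne_zero_of_mul h) (right_ne_zero_of_mul h)⟩,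
    ⟨fun h => ?_, fun h => s2 h.1 h.2.1 h.2.2⟩,
    ⟨fun h => ?_, fun h => s3 h.1 (left_ne_zero_of_mul h.2) (right_ne_zero_of_mul h.2)⟩,
    ⟨fun h => ?_, fun h => s4 h.1 h.2.1 (left_ne_zero_of_mul h.2.2) (right_ne_zero_of_mul h.2.2)⟩⟩
  · exact mul_ne_zero (fun h0 => edge_notCt ((c4 h0).inv h cF)) (n1 q1 h)
  · have hd : κd 0 = 0 := by
      by_contra hd
      exact SW_notLo ((FF_Lo H hd).inv h cS cF)
    refine ⟨fun h0 => SW_notCt ((c4 h0).inv h cF), hd, fun h1 => ?_⟩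
    obtain ⟨k, hk, -, ek⟩ := tay2 H.hd hd h1
    exact FF_notLo H 2 hk ek (Lo.inv (h.symm' cF) cF cS SW_Lo)
  · have hd := n1 q3 h
    have h0 := m4 (cross_Ct.inv (h.symm' cF) (cG q3)) hd
    exact ⟨h0, mul_ne_zero (fun h1 => cross_notCt ((c5 h0 h1).inv h cF)) hd⟩
  · have hd := n1 q4 h
    obtain ⟨h0, h1⟩ := m5 (s1_Ct.inv (h.symm' cF) (cG q4)) hd
    exact ⟨h0, h1, mul_ne_zero (fun h2 => s1_notCt ((c6 h0 h1 h2).inv h cF)) hd⟩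
end MAIN

/-- characterization of the singularities of a noncylindrical developable
normal ruled surface NR at a singular point q = (u₀,w₀) in terms of κ_s and κ_ν. -/
theorem stmt_7 (γ h ν : ℝ → R3) (κs κν κt : ℝ → ℝ) (H : FrenetSetup γ h ν κs κν κt)
    (hdev : ∀ u : ℝ, κt u = 0) (hnoncyl : ∀ u : ℝ, κν u ≠ 0)
    (u₀ w₀ : ℝ) (hsing : w₀ * κν u₀ = 1) :
    (AEquivAt (NR γ ν) (u₀, w₀) (fun x : ℝ × ℝ => ![x.1, x.2 ^ 2, x.2 ^ 3]) 0 ↔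
        κs u₀ * deriv κν u₀ ≠ 0) ∧
    (AEquivAt (NR γ ν) (u₀, w₀)
        (fun x : ℝ × ℝ => ![x.1, 4 * x.2 ^ 3 + 2 * x.1 * x.2,
          3 * x.2 ^ 4 + x.1 * x.2 ^ 2]) 0 ↔
        (κs u₀ ≠ 0 ∧ deriv κν u₀ = 0 ∧ deriv (deriv κν) u₀ ≠ 0)) ∧
    (AEquivAt (NR γ ν) (u₀, w₀) (fun x : ℝ × ℝ => ![x.1, x.2 ^ 2, x.1 * x.2 ^ 3]) 0 ↔
        (κs u₀ = 0 ∧ deriv κs u₀ * deriv κν u₀ ≠ 0)) ∧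
    (AEquivAt (NR γ ν) (u₀, w₀)
        (fun x : ℝ × ℝ => ![x.1, x.2 ^ 2, x.2 ^ 3 * (x.1 ^ 2 + x.2 ^ 2)]) 0 ↔
        (κs u₀ = 0 ∧ deriv κs u₀ = 0 ∧ deriv (deriv κs) u₀ * deriv κν u₀ ≠ 0)) := by
  have eM1 : (fun x : ℝ × ℝ => (![x.1, x.2 ^ 2, x.2 ^ 3] : R3)) = GG fun _ => 1 := by
    funext x; simp [GG]
  have eM3 : (fun x : ℝ × ℝ => (![x.1, x.2 ^ 2, x.1 * x.2 ^ 3] : R3)) = GG fun p => p.1 := by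
    funext x; simp [GG, mul_comm]
  have eM4 : (fun x : ℝ × ℝ => (![x.1, x.2 ^ 2, x.2 ^ 3 * (x.1 ^ 2 + x.2 ^ 2)] : R3)) = GG fun p => p.1 ^ 2 + p.2 := by
    funext x; simp [GG]
  have eM2 : (fun x : ℝ × ℝ => (![x.1, 4 * x.2 ^ 3 + 2 * x.1 * x.2, 3 * x.2 ^ 4 + x.1 * x.2 ^ 2] : R3)) = SWm := rfl
  rw [eM1, eM2, eM3, eM4]
  obtain ⟨A, B, C, D, r, l, b, m, U, V, hF, hN⟩ := NRform H hdev u₀ w₀ hsing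
  have hNc : ContinuousAt (NR γ ν) (u₀, w₀) := by
    have h1 := H.smooth_γ.continuous
    have h2 := H.smooth_ν.continuous
    have : Continuous (NR γ ν) := by unfold NR; fun_prop
    exact this.continuousAt
  have hN' := hN.symm' hNc
  have e1 : ∀ G, AEquivAt (NR γ ν) (u₀, w₀) G 0 ↔ AEquivAt (FF A B C D) 0 G 0 := fun G =>
    ⟨fun h => hN'.trans' h, fun h => hN.trans' h⟩
  simp only [e1]
  have main := FDat.main hF
  have d1 : ∀ f : ℝ → ℝ, deriv (fun t => f (u₀ + t)) = fun t => deriv f (u₀ + t) := fun f => by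
    funext t; exact deriv_comp_const_add f u₀ t
  simp only [d1, add_zero] at main
  exact main
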